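/- arXiv:2511.22212 — 2 statements merged into one kernel-verified Lean document; each statement's English description precedes it below -/
import Mathlib

section
/- There is an absolute constant c > 0 such that the following holds. Let Σ be a finite alphabet, let 1 ≤ N ≤ M with M ≥ 2, and let G be a 2D SLP deriving a 2D string T over Σ of size N×M. Then there exists a 2D SLP G' with exp(G') = T, size |G'| ≤ c·|G|·N, and depth at most c·log₂ M. -/
/-!
## Two-dimensional strings.
A 2D string over alphabet `A` of size `h × w` is represented canonically:
`f i j` is `some` of the character in (0-indexed) row `i`, column `j` when
`i < h` and `j < w`, and `none` outside of the rectangle.  All operations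
below produce such canonical representations, so equality of 2D strings
built from them coincides with equality of the dimensions and of all entries.
-/
structure Str2 (A : Type) where
  h : ℕ
  w : ℕ
  f : ℕ → ℕ → Option A

namespace Str2

variable {A : Type}

/-- Canonical constructor: pads with `none` outside of the `h × w` rectangle. -/
def mk' (h w : ℕ) (g : ℕ → ℕ → Option A) : Str2 A :=
  ⟨h, w, fun i j => if i < h ∧ j < w then g i j else none⟩

/-- The empty 2D string. -/
def empty : Str2 A := ⟨0, 0, fun _ _ => none⟩

/-- The `1 × 1` 2D string consisting of a single character. -/
def single (a : A) : Str2 A := mk' 1 1 fun _ _ => some a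

/-- Horizontal concatenation `S ⊞ T` (meaningful when the heights agree). -/
def hcat (S T : Str2 A) : Str2 A :=
  mk' S.h (S.w + T.w) fun i j => if j < S.w then S.f i j else T.f i (j - S.w)

/-- Vertical concatenation `S ⊟ T` (meaningful when the widths agree). -/
def vcat (S T : Str2 A) : Str2 A :=
  mk' (S.h + T.h) S.w fun i j => if i < S.h then S.f i j else T.f (i - S.h) j

/-- Horizontal concatenation `S₁ ⊞ S₂ ⊞ ⋯ ⊞ S_k` of a list of 2D strings. -/
def hcatList : List (Str2 A) → Str2 A
  | [] => empty
  | S :: rest => rest.foldl hcat S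

/-- Vertical concatenation `S₁ ⊟ S₂ ⊟ ⋯ ⊟ S_k` of a list of 2D strings. -/
def vcatList : List (Str2 A) → Str2 A
  | [] => empty
  | S :: rest => rest.foldl vcat S

/-- The transpose. -/
def transpose (S : Str2 A) : Str2 A := mk' S.w S.h fun i j => S.f j i

/-- The `i`-th row (0-indexed) of `S`, as a `1 × w` 2D string. -/
def rowStr (S : Str2 A) (i : ℕ) : Str2 A := mk' 1 S.w fun _ j => S.f i j

/-- The `j`-th column (0-indexed) of `S`, read top to bottom, as a `1 × h` 2D string. -/
def colStr (S : Str2 A) (j : ℕ) : Str2 A := mk' 1 S.h fun _ i => S.f i j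

/-- A height-one 2D string, viewed as an ordinary (1D) string, i.e. a list. -/
def toList (S : Str2 A) : List A := (List.range S.w).filterMap fun j => S.f 0 j

/-- An ordinary (1D) string viewed as a height-one 2D string. -/
def ofList (l : List A) : Str2 A := mk' 1 l.length fun _ j => l[j]?

/-- The concatenation of all rows of `S` from top to bottom,
as a height-one 2D string of width `h * w`. -/
def rowsConcat (S : Str2 A) : Str2 A :=
  mk' 1 (S.h * S.w) fun _ j => S.f (j / S.w) (j % S.w)

end Str2

/-- The right-hand side of a production of a 2D SLP: a single character,
a horizontal concatenation of two nonterminals, or a vertical concatenation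
of two nonterminals. -/
inductive Rhs2 (A V : Type) where
  | chr : A → Rhs2 A V
  | horiz : V → V → Rhs2 A V
  | vert : V → V → Rhs2 A V

/-- A two-dimensional straight-line program over the alphabet `A`:
a finite set `V` of nonterminals, a starting nonterminal, and a production
map `rhs`.  Acyclicity of the relation "appears in the right-hand side of"
is witnessed by the function `rank`, which strictly decreases from the
left-hand side of each production to the nonterminals on its right-hand side. -/
structure SLP2 (A : Type) where
  V : Type
  fintypeV : Fintype V
  start : V
  rhs : V → Rhs2 A V
  rank : V → ℕ
  rank_horiz : ∀ {X Y Z}, rhs X = Rhs2.horiz Y Z → rank Y < rank X ∧ rank Z < rank X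
  rank_vert : ∀ {X Y Z}, rhs X = Rhs2.vert Y Z → rank Y < rank X ∧ rank Z < rank X

namespace SLP2

variable {A : Type}

/-- Fuel-based evaluation of expansions (with enough fuel it computes the
unique expansion of a nonterminal). -/
def expAux (G : SLP2 A) : ℕ → G.V → Str2 A
  | 0, _ => Str2.empty
  | n + 1, X =>
    match G.rhs X with
    | .chr a => Str2.single a
    | .horiz Y Z => (G.expAux n Y).hcat (G.expAux n Z)
    | .vert Y Z => (G.expAux n Y).vcat (G.expAux n Z)

/-- The (unique) expansion of a nonterminal `X`: since `rank` strictly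
decreases along productions, fuel `rank X + 1` always suffices. -/
def expNT (G : SLP2 A) (X : G.V) : Str2 A := G.expAux (G.rank X + 1) X

/-- The 2D string derived by the SLP. -/
def exp (G : SLP2 A) : Str2 A := G.expNT G.start

/-- Fuel-based computation of the depth of the derivation tree below a
nonterminal (a node labeled by a production `chr σ` has a single leaf child). -/
def depthAux (G : SLP2 A) : ℕ → G.V → ℕ
  | 0, _ => 0
  | n + 1, X =>
    match G.rhs X with
    | .chr _ => 1
    | .horiz Y Z => 1 + max (G.depthAux n Y) (G.depthAux n Z)
    | .vert Y Z => 1 + max (G.depthAux n Y) (G.depthAux n Z)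

/-- The depth of the derivation tree below nonterminal `X`. -/
def depthNT (G : SLP2 A) (X : G.V) : ℕ := G.depthAux (G.rank X + 1) X

/-- The depth of the SLP: the depth of its derivation tree. -/
def depth (G : SLP2 A) : ℕ := G.depthNT G.start

/-- The size of the SLP: the total number of symbols on the right-hand
sides of all productions. -/
def size (G : SLP2 A) : ℕ :=
  letI := G.fintypeV
  ∑ X : G.V, (match G.rhs X with
    | .chr _ => 1
    | .horiz _ _ => 2
    | .vert _ _ => 2)

/-- The number of nonterminals of the SLP. -/
def numNT (G : SLP2 A) : ℕ :=
  letI := G.fintypeV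
  Fintype.card G.V

/-- Well-formedness: dimensions match in every production, i.e. in a
horizontal concatenation both arguments have equal heights, and in a
vertical concatenation both arguments have equal widths. -/
def WF (G : SLP2 A) : Prop :=
  ∀ X : G.V,
    match G.rhs X with
    | .chr _ => True
    | .horiz Y Z => (G.expNT Y).h = (G.expNT Z).h
    | .vert Y Z => (G.expNT Y).w = (G.expNT Z).w

/-- A 1D SLP: a 2D SLP that uses only horizontal concatenations and derives
a string of height `1`. -/
def OneDim (G : SLP2 A) : Prop :=
  (∀ X Y Z, G.rhs X ≠ Rhs2.vert Y Z) ∧ (G.exp).h = 1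

end SLP2


/-! ## 1D derivations inside a finite set of strings -/

inductive Der {A : Type} (P : Finset (List A)) : ℕ → List A → Prop
  | nil (d : ℕ) : Der P d []
  | single (a : A) (d : ℕ) : [a] ∈ P → Der P (d + 1) [a]
  | app (d : ℕ) (x y : List A) : Der P d x → Der P d y → x ++ y ∈ P → Der P (d + 1) (x ++ y)

theorem Der.mono {A : Type} {P : Finset (List A)} {d : ℕ} {s : List A} (h : Der P d s) :
    ∀ {d' : ℕ}, d ≤ d' → Der P d' s := by
  induction h with
  | nil d => intro d' _; exact Der.nil d'
  | single a d ha =>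
    intro d' hd
    obtain ⟨e, rfl⟩ : ∃ e, d' = e + 1 := ⟨d' - 1, by omega⟩
    exact Der.single a e ha
  | app d x y _ _ hm ihx ihy =>
    intro d' hd
    obtain ⟨e, rfl⟩ : ∃ e, d' = e + 1 := ⟨d' - 1, by omega⟩
    exact Der.app e x y (ihx (by omega)) (ihy (by omega)) hm

theorem Der.app' {A : Type} {P : Finset (List A)} {d d' D : ℕ} {x y : List A}
    (hx : Der P d x) (hy : Der P d' y) (hm : x ++ y ∈ P) (h1 : d + 1 ≤ D) (h2 : d' + 1 ≤ D) :
    Der P D (x ++ y) := by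
  obtain ⟨e, rfl⟩ : ∃ e, D = e + 1 := ⟨D - 1, by omega⟩
  exact Der.app e x y (hx.mono (by omega)) (hy.mono (by omega)) hm

/-- The conclusion of the chain lemma on the interval `[l, r]`. -/
def ChainConcl {A : Type} (v L R : ℕ → List A) (α : ℕ → ℕ) (x : ℕ → ℕ) (l r s : ℕ) : Prop :=
  ∃ (P : Finset (List A)) (CL CR : List A), v l = CL ++ v r ++ CR ∧ P.card ≤ 8 * (r - l) ∧
    ∀ P' : Finset (List A), P ⊆ P' → ∀ d : ℕ → ℕ,
      (∀ j, l ≤ j → j < r → Der P' (d j) (L j) ∧ Der P' (d j) (R j)) →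
      (∀ D, (∀ j, l ≤ j → j < r → d j + 4 * s + 4 ≤ D + 4 * α j) →
        Der P' D CL ∧ Der P' D CR) ∧
      (∀ Dr D, Der P' Dr (v r) → Dr + 4 ≤ D →
        (∀ j, l ≤ j → j < r → d j + 4 * s + 4 ≤ D + 4 * α j) → Der P' D (v l)) ∧
      (∀ Dr D i β, l < i → i < r → 2 ^ β ≤ x i - x (i - 1) → Der P' Dr (v r) →
        Dr + 4 * s + 4 ≤ D + 4 * β →
        (∀ j, l ≤ j → j < r → d j + 8 * s + 4 ≤ D + 4 * α j + 4 * β) → Der P' D (v i))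

theorem chain_rec {A : Type} (v L R : ℕ → List A) (α : ℕ → ℕ) (x : ℕ → ℕ) (s : ℕ) :
    ∀ l r : ℕ, l ≤ r →
      (∀ i, l ≤ i → i < r → v i = L i ++ v (i + 1) ++ R i) →
      (∀ i, l ≤ i → i < r → x i < x (i + 1)) →
      (∀ i, l ≤ i → i < r → 2 ^ (α i) ≤ x (i + 1) - x i) →
      x r < x l + 2 ^ s → ChainConcl v L R α x l r s := by
  classical
  have triv : ∀ l s, ChainConcl v L R α x l l s := by
    intro l s
    refine ⟨∅, [], [], by simp, by simp, ?_⟩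
    intro P' _ d _
    refine ⟨fun D _ => ⟨Der.nil _, Der.nil _⟩, fun Dr D h hD _ => h.mono (by omega), ?_⟩
    intro Dr D i β h1 h2
    omega
  have mono : ∀ l r, (∀ i, l ≤ i → i < r → x i < x (i + 1)) →
      ∀ j, l ≤ j → j ≤ r → x l ≤ x j := by
    intro l r h j hj
    induction j, hj using Nat.le_induction with
    | base => intro _; exact le_rfl
    | succ n hn ih =>
      intro h2
      have := ih (by omega)
      have := h n hn (by omega)
      omega
  induction s with
  | zero =>
    intro l r hlr hv hx hα hs
    rcases Nat.eq_or_lt_of_le hlr with rfl | hlt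
    · exact triv l 0
    · exfalso
      have h1 := hx l le_rfl hlt
      have h2 := mono (l + 1) r (fun i hi => hx i (by omega)) r (by omega) le_rfl
      simp at hs
      omega
  | succ s ih =>
    intro l r hlr hv hx hα hs
    rcases Nat.eq_or_lt_of_le hlr with rfl | hlt
    · exact triv l _
    by_cases hsm : x r < x l + 2 ^ s
    · obtain ⟨P, CL, CR, h1, h2, h3⟩ := ih l r hlr hv hx hα hsm
      refine ⟨P, CL, CR, h1, h2, ?_⟩
      intro P' hP d hd
      obtain ⟨g1, g2, g3⟩ := h3 P' hP d hd
      refine ⟨fun D hD => g1 D fun j a b => ?_, fun Dr D h hD hj => g2 Dr D h hD fun j a b => ?_,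
        fun Dr D i β a b hβ h hD hj => g3 Dr D i β a b hβ h (by omega) fun j a b => ?_⟩
      · have := hD j a b; omega
      · have := hj j a b; omega
      · have := hj j a b; omega
    -- the crossing edge
    obtain ⟨m, hlm, hmr, hxm, hxm'⟩ : ∃ m, l ≤ m ∧ m < r ∧ x m < x l + 2 ^ s ∧
        x l + 2 ^ s ≤ x (m + 1) := by
      by_contra hcon
      push Not at hcon
      have : ∀ j, l ≤ j → j ≤ r → x j < x l + 2 ^ s := by
        intro j hj
        induction j, hj using Nat.le_induction with
        | base => intro _; have := Nat.two_pow_pos s; omega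
        | succ n hn ih2 => intro h2; exact hcon n hn (by omega) (ih2 (by omega))
      exact hsm (this r hlr le_rfl)
    have hpow : (2 : ℕ) ^ (s + 1) = 2 * 2 ^ s := by ring
    obtain ⟨P1, CL1, CR1, e1, c1, k1⟩ := ih l m hlm (fun i a b => hv i a (by omega))
      (fun i a b => hx i a (by omega)) (fun i a b => hα i a (by omega)) hxm
    obtain ⟨P2, CL2, CR2, e2, c2, k2⟩ := ih (m + 1) r (by omega) (fun i a b => hv i (by omega) b)
      (fun i a b => hx i (by omega) b) (fun i a b => hα i (by omega) b) (by omega)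
    have hαm : α m ≤ s := by
      have h1 := hα m hlm hmr
      have h2 := mono l r hx m hlm (by omega)
      have h3 := mono (m + 1) r (fun i a b => hx i (by omega) b) r (by omega) le_rfl
      have h4 : 2 ^ α m < 2 ^ (s + 1) := by omega
      have := (Nat.pow_lt_pow_iff_right (by norm_num : 1 < 2)).1 h4
      omega
    have em : v m = (L m ++ CL2) ++ v r ++ (CR2 ++ R m) := by
      rw [hv m hlm hmr, e2]; simp
    have el : v l = (CL1 ++ (L m ++ CL2)) ++ v r ++ ((CR2 ++ R m) ++ CR1) := by
      rw [e1, em]; simp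
    let N : Finset (List A) := {L m ++ CL2, CR2 ++ R m, CL1 ++ (L m ++ CL2), (CR2 ++ R m) ++ CR1,
      (L m ++ CL2) ++ v r, v m, (CL1 ++ (L m ++ CL2)) ++ v r, v l}
    have hN : N.card ≤ 8 := (Finset.card_insert_le _ _).trans (Nat.succ_le_succ
      ((Finset.card_insert_le _ _).trans (Nat.succ_le_succ Finset.card_le_six)))
    refine ⟨N ∪ (P1 ∪ P2), CL1 ++ (L m ++ CL2), (CR2 ++ R m) ++ CR1, el, ?_, ?_⟩
    · have := Finset.card_union_le N (P1 ∪ P2)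
      have := Finset.card_union_le P1 P2
      omega
    intro P' hP d hd
    have hNP : N ⊆ P' := Finset.subset_union_left.trans hP
    have hP1 : P1 ⊆ P' := (Finset.subset_union_left.trans Finset.subset_union_right).trans hP
    have hP2 : P2 ⊆ P' := (Finset.subset_union_right.trans Finset.subset_union_right).trans hP
    have n1 : L m ++ CL2 ∈ P' := hNP (by simp [N])
    have n2 : CR2 ++ R m ∈ P' := hNP (by simp [N])
    have n3 : CL1 ++ (L m ++ CL2) ∈ P' := hNP (by simp [N])
    have n4 : (CR2 ++ R m) ++ CR1 ∈ P' := hNP (by simp [N])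
    have n5 : (L m ++ CL2) ++ v r ∈ P' := hNP (by simp [N])
    have n6 : v m ∈ P' := hNP (by simp [N])
    have n7 : (CL1 ++ (L m ++ CL2)) ++ v r ∈ P' := hNP (by simp [N])
    have n8 : v l ∈ P' := hNP (by simp [N])
    obtain ⟨a1, a2, a3⟩ := k1 P' hP1 d (fun j a b => hd j a (by omega))
    obtain ⟨b1, b2, b3⟩ := k2 P' hP2 d (fun j a b => hd j (by omega) b)
    obtain ⟨dL, dR⟩ := hd m hlm hmr
    -- the context from `m` to `r`
    have ctxm : ∀ D, d m + 1 ≤ D →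
        (∀ j, m + 1 ≤ j → j < r → d j + 4 * s + 4 + 1 ≤ D + 4 * α j) →
        Der P' D (L m ++ CL2) ∧ Der P' D (CR2 ++ R m) := by
      intro D h1 h2
      obtain ⟨p, q⟩ := b1 (D - 1) (fun j a b => by have := h2 j a b; omega)
      exact ⟨dL.app' p n1 h1 (by omega), q.app' dR n2 (by omega) h1⟩
    have ctxl : ∀ D, (∀ j, l ≤ j → j < r → d j + 4 * s + 4 + 2 ≤ D + 4 * α j) →
        Der P' D (CL1 ++ (L m ++ CL2)) ∧ Der P' D ((CR2 ++ R m) ++ CR1) := by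
      intro D h2
      have hm := h2 m hlm hmr
      obtain ⟨p, q⟩ := ctxm (D - 1) (by omega)
        (fun j a b => by have := h2 j (by omega) b; omega)
      obtain ⟨p', q'⟩ := a1 (D - 1) (fun j a b => by have := h2 j a (by omega); omega)
      exact ⟨p'.app' p n3 (by omega) (by omega), q.app' q' n4 (by omega) (by omega)⟩
    refine ⟨fun D hD => ctxl D fun j a b => by have := hD j a b; omega, ?_, ?_⟩
    · intro Dr D hr hDr hj
      obtain ⟨p, q⟩ := ctxl (D - 2) (fun j a b => by have := hj j a b; omega)
      rw [el]
      rw [el] at n8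
      exact (p.app' hr n7 (D := D - 1) (by omega) (by omega)).app' q n8 (by omega) (by omega)
    · intro Dr D i β hli hir hβ hr hDr hj
      have pivot : ∀ D, Dr + 2 ≤ D → d m + 3 ≤ D →
          (∀ j, m + 1 ≤ j → j < r → d j + 4 * s + 4 + 3 ≤ D + 4 * α j) → Der P' D (v m) := by
        intro D h0 h1 h2
        obtain ⟨p, q⟩ := ctxm (D - 2) (by omega) (fun j a b => by have := h2 j a b; omega)
        rw [em]
        rw [em] at n6
        exact (p.app' hr n5 (D := D - 1) (by omega) (by omega)).app' q n6 (by omega) (by omega)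
      have hβs : β ≤ s + 1 := by
        have h2 := mono l r hx (i - 1) (by omega) (by omega)
        have h3 := mono i r (fun i a b => hx i (by omega) b) r (by omega) le_rfl
        have h4 : 2 ^ β < 2 ^ (s + 1) := by omega
        have := (Nat.pow_lt_pow_iff_right (by norm_num : 1 < 2)).1 h4
        omega
      have hjm := hj m hlm hmr
      rcases lt_trichotomy i m with him | rfl | him
      · refine a3 (D + 4 * β - 4 * s - 4) D i β hli him hβ (pivot _ ?_ ?_ ?_) ?_ ?_
        · omega
        · omega
        · intro j a b
          have := hj j (by omega) b
          omega
        · omega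
        · intro j a b
          have := hj j a (by omega)
          omega
      · refine pivot D (by omega) (by omega) fun j a b => ?_
        have := hj j (by omega) b
        omega
      · rcases Nat.eq_or_lt_of_le (show m + 1 ≤ i from him) with rfl | him'
        · refine b2 Dr D hr (by omega) fun j a b => ?_
          have := hj j (by omega) b
          omega
        · refine b3 Dr D i β him' hir hβ hr (by omega) fun j a b => ?_
          have := hj j (by omega) b
          omega

/-! ## Heavy chains -/

/-- A 1D straight-line program presented as a finite set of strings with a splitting of every
string of length at least two, and a weight `π` playing the role of the number of paths from
the roots. -/
structure Dag {A : Type} (Q : Finset (List A)) (lc rc : List A → List A) (π : List A → ℕ)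
    (t : ℕ) : Prop where
  ne : ∀ q ∈ Q, q ≠ []
  split : ∀ q ∈ Q, 1 < q.length → lc q ∈ Q ∧ rc q ∈ Q ∧ q = lc q ++ rc q
  pos : ∀ q ∈ Q, 0 < π q
  le1 : ∀ u ∈ Q, 1 < u.length → ∀ v, (v = lc u ∨ v = rc u) → π u ≤ π v
  le2 : ∀ u ∈ Q, 1 < u.length → ∀ u' ∈ Q, 1 < u'.length → u ≠ u' →
    ∀ v, (v = lc u ∨ v = rc u) → (v = lc u' ∨ v = rc u') → π u + π u' ≤ π v
  bπ : ∀ q ∈ Q, π q < 2 ^ (t + 1)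
  bl : ∀ q ∈ Q, q.length < 2 ^ (t + 1)

def Child {A : Type} (Q : Finset (List A)) (lc rc : List A → List A) (u v : List A) : Prop :=
  u ∈ Q ∧ 1 < u.length ∧ (v = lc u ∨ v = rc u)

def Heavy {A : Type} (Q : Finset (List A)) (lc rc : List A → List A) (π : List A → ℕ)
    (u v : List A) : Prop :=
  Child Q lc rc u v ∧ Nat.log 2 (π u) = Nat.log 2 (π v) ∧
    Nat.log 2 u.length = Nat.log 2 v.length

def Entry {A : Type} (Q : Finset (List A)) (lc rc : List A → List A) (π : List A → ℕ)
    (v : List A) (τ : ℕ) : Prop :=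
  2 ^ τ ≤ π v ∧ ∀ u, Heavy Q lc rc π u v → π u + 2 ^ τ ≤ π v

def Claim {A : Type} (Q : Finset (List A)) (lc rc : List A → List A) (π : List A → ℕ) (t : ℕ)
    (P : Finset (List A)) (v : List A) : Prop :=
  ∀ τ D, Entry Q lc rc π v τ →
    16 * Nat.log 2 v.length + 16 * t + 10 ≤ D + 4 * τ + 12 * Nat.log 2 (π v) → Der P D v

def StepC {A : Type} (Q : Finset (List A)) (lc rc : List A → List A) (π : List A → ℕ) (t : ℕ)
    (P : Finset (List A)) (v : List A) : Prop :=
  (∀ w ∈ Q, w.length < v.length → Claim Q lc rc π t P w) → Claim Q lc rc π t P v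

section
variable {A : Type} {Q : Finset (List A)} {lc rc : List A → List A} {π : List A → ℕ} {t : ℕ}

theorem Dag.child_mem (G : Dag Q lc rc π t) {u v : List A} (h : Child Q lc rc u v) :
    v ∈ Q ∧ v.length < u.length ∧ π u ≤ π v := by
  obtain ⟨hu, hl, hv⟩ := h
  obtain ⟨h1, h2, h3⟩ := G.split u hu hl
  have h4 := List.length_pos_iff.2 (G.ne _ h1)
  have h5 := List.length_pos_iff.2 (G.ne _ h2)
  have h6 : u.length = (lc u).length + (rc u).length := by
    conv_lhs => rw [h3]
    simp
  have h7 := G.le1 u hu hl v hv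
  rcases hv with rfl | rfl
  · exact ⟨h1, by omega, h7⟩
  · exact ⟨h2, by omega, h7⟩

theorem Dag.heavy_parent_unique (G : Dag Q lc rc π t) {u u' v : List A}
    (h : Heavy Q lc rc π u v) (h' : Heavy Q lc rc π u' v) : u = u' := by
  by_contra hne
  have h1 := G.le2 u h.1.1 h.1.2.1 u' h'.1.1 h'.1.2.1 hne v h.1.2.2 h'.1.2.2
  have p1 := Nat.pow_log_le_self 2 (G.pos u h.1.1).ne'
  have p2 := Nat.pow_log_le_self 2 (G.pos u' h'.1.1).ne'
  have p3 := Nat.lt_pow_succ_log_self (b := 2) (by norm_num) (π v)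
  rw [h.2.1] at p1
  rw [h'.2.1] at p2
  rw [Nat.succ_eq_add_one, pow_succ] at p3
  omega

theorem Dag.light_entry (G : Dag Q lc rc π t) {v w : List A}
    (h : Child Q lc rc v w) (hl : ¬ Heavy Q lc rc π v w) :
    Entry Q lc rc π w (Nat.log 2 (π v)) := by
  have p1 := Nat.pow_log_le_self 2 (G.pos v h.1).ne'
  refine ⟨p1.trans (G.child_mem h).2.2, fun u hu => ?_⟩
  have hne : u ≠ v := by rintro rfl; exact hl hu
  have := G.le2 u hu.1.1 hu.1.2.1 v h.1 h.2.1 hne w hu.1.2.2 h.2.2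
  omega

theorem Dag.log_le (G : Dag Q lc rc π t) {v : List A} (h : v ∈ Q) :
    Nat.log 2 (π v) ≤ t ∧ Nat.log 2 v.length ≤ t := by
  constructor
  · have := Nat.log_lt_of_lt_pow (G.pos v h).ne' (G.bπ v h); omega
  · have := Nat.log_lt_of_lt_pow (List.length_pos_iff.2 (G.ne v h)).ne' (G.bl v h); omega

theorem Dag.light_log (G : Dag Q lc rc π t) {v w : List A}
    (h : Child Q lc rc v w) (hl : ¬ Heavy Q lc rc π v w) :
    Nat.log 2 w.length + Nat.log 2 (π v) + 1 ≤ Nat.log 2 v.length + Nat.log 2 (π w) := by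
  obtain ⟨_, h2, h3⟩ := G.child_mem h
  have a := Nat.log_mono_right (b := 2) h2.le
  have b := Nat.log_mono_right (b := 2) h3
  by_contra hc
  exact hl ⟨h, by omega, by omega⟩

/-- Depth bound for a light child. -/
theorem Dag.light_der (G : Dag Q lc rc π t) {P : Finset (List A)} {v w u : List A}
    (h : Child Q lc rc v w) (hl : ¬ Heavy Q lc rc π v w) (hwu : w.length < u.length)
    (ih : ∀ w ∈ Q, w.length < u.length → Claim Q lc rc π t P w) {D : ℕ}
    (hD : 16 * Nat.log 2 w.length + 16 * t + 10 ≤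
      D + 4 * Nat.log 2 (π v) + 12 * Nat.log 2 (π w)) : Der P D w := by
  obtain ⟨h1, _, _⟩ := G.child_mem h
  exact ih w h1 hwu _ D (G.light_entry h hl) hD

theorem Dag.heavy_split (G : Dag Q lc rc π t) {u v : List A} (h : Heavy Q lc rc π u v) :
    ∃ L R w : List A, u = L ++ v ++ R ∧ Child Q lc rc u w ∧ ¬ Heavy Q lc rc π u w ∧
      u.length = v.length + w.length ∧
      ∀ (P : Finset (List A)) (d : ℕ), Der P d w → Der P d L ∧ Der P d R := by
  obtain ⟨⟨hu, hl, hv⟩, _, hlen⟩ := h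
  obtain ⟨h1, h2, h3⟩ := G.split u hu hl
  have h6 : u.length = (lc u).length + (rc u).length := by
    conv_lhs => rw [h3]
    simp
  have h4 := List.length_pos_iff.2 (G.ne _ h1)
  have h5 := List.length_pos_iff.2 (G.ne _ h2)
  have notboth : ¬ (Nat.log 2 u.length = Nat.log 2 (lc u).length ∧
      Nat.log 2 u.length = Nat.log 2 (rc u).length) := by
    rintro ⟨e1, e2⟩
    have p1 := Nat.pow_log_le_self 2 h4.ne'
    have p2 := Nat.pow_log_le_self 2 h5.ne'
    have p3 := Nat.lt_pow_succ_log_self (b := 2) (by norm_num) u.length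
    rw [← e1] at p1
    rw [← e2] at p2
    rw [Nat.succ_eq_add_one, pow_succ] at p3
    omega
  rcases hv with rfl | rfl
  · refine ⟨[], rc u, rc u, by simpa using h3, ⟨hu, hl, Or.inr rfl⟩, ?_, h6,
      fun P d hd => ⟨Der.nil d, hd⟩⟩
    rintro ⟨_, _, h⟩
    exact notboth ⟨hlen, h⟩
  · refine ⟨lc u, [], lc u, by simpa using h3, ⟨hu, hl, Or.inl rfl⟩, ?_, by omega,
      fun P d hd => ⟨hd, Der.nil d⟩⟩
    rintro ⟨_, _, h⟩
    exact notboth ⟨h, hlen⟩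

theorem Dag.chain_step (G : Dag Q lc rc π t) (p : ℕ) (v : ℕ → List A) (hv0 : ∀ i ≤ p, v i ∈ Q)
    (hv : ∀ i < p, Heavy Q lc rc π (v i) (v (i + 1)))
    (hend : ∀ w, ¬ Heavy Q lc rc π (v p) w) :
    ∃ P : Finset (List A), P.card ≤ 10 * (p + 1) ∧
      ∀ P', P ⊆ P' → ∀ i ≤ p, StepC Q lc rc π t P' (v i) := by
  classical
  have hsplit : ∀ j, ∃ L R w : List A, j < p → (v j = L ++ v (j + 1) ++ R ∧
      Child Q lc rc (v j) w ∧ ¬ Heavy Q lc rc π (v j) w ∧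
      (v j).length = (v (j + 1)).length + w.length ∧
      ∀ (P : Finset (List A)) (d : ℕ), Der P d w → Der P d L ∧ Der P d R) := by
    intro j
    by_cases hj : j < p
    · obtain ⟨L, R, w, h⟩ := G.heavy_split (hv j hj)
      exact ⟨L, R, w, fun _ => h⟩
    · exact ⟨[], [], [], fun h => absurd h hj⟩
  choose L R w hw using hsplit
  set a := Nat.log 2 (π (v 0)) with ha
  set b := Nat.log 2 (v 0).length with hb
  have hab : ∀ i, i ≤ p → Nat.log 2 (π (v i)) = a ∧ Nat.log 2 (v i).length = b := by
    intro i
    induction i with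
    | zero => intro _; exact ⟨rfl, rfl⟩
    | succ n ih =>
      intro h
      obtain ⟨h1, h2⟩ := ih (by omega)
      obtain ⟨_, h3, h4⟩ := hv n (by omega)
      exact ⟨h3 ▸ h1, h4 ▸ h2⟩
  obtain ⟨hat, hbt⟩ := G.log_le (hv0 0 (by omega))
  rw [← ha] at hat
  rw [← hb] at hbt
  have hπlo : ∀ i ≤ p, 2 ^ a ≤ π (v i) ∧ π (v i) < 2 ^ a * 2 := by
    intro i hi
    have p1 := Nat.pow_log_le_self 2 (G.pos _ (hv0 i hi)).ne'
    have p3 := Nat.lt_pow_succ_log_self (b := 2) (by norm_num) (π (v i))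
    rw [(hab i hi).1] at p1 p3
    rw [Nat.succ_eq_add_one, pow_succ] at p3
    exact ⟨p1, p3⟩
  have hllo : ∀ i ≤ p, 2 ^ b ≤ (v i).length ∧ (v i).length < 2 ^ b * 2 := by
    intro i hi
    have p1 := Nat.pow_log_le_self 2 (List.length_pos_iff.2 (G.ne _ (hv0 i hi))).ne'
    have p3 := Nat.lt_pow_succ_log_self (b := 2) (by norm_num) (v i).length
    rw [(hab i hi).2] at p1 p3
    rw [Nat.succ_eq_add_one, pow_succ] at p3
    exact ⟨p1, p3⟩
  let x : ℕ → ℕ := fun i => π (v i) * 2 ^ (t - a) + (2 ^ b * 2 - (v i).length) * 2 ^ (t - b)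
  let α : ℕ → ℕ := fun j => Nat.log 2 (w j).length + (t - b)
  have hxstep : ∀ i < p, ∀ e, π (v i) + e ≤ π (v (i + 1)) →
      x i + e * 2 ^ (t - a) + (w i).length * 2 ^ (t - b) ≤ x (i + 1) := by
    intro i hi e he
    obtain ⟨_, _, _, h4, _⟩ := hw i hi
    have h5 := (hllo i hi.le).2
    have h6 : 2 ^ b * 2 - (v (i + 1)).length = (2 ^ b * 2 - (v i).length) + (w i).length := by
      omega
    have h7 := Nat.mul_le_mul_right (2 ^ (t - a)) he
    simp only [x, h6]
    nlinarith
  have hwne : ∀ i < p, 0 < (w i).length := fun i hi =>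
    List.length_pos_iff.2 (G.ne _ (G.child_mem (hw i hi).2.1).1)
  have hmonoπ : ∀ i < p, π (v i) ≤ π (v (i + 1)) := fun i hi => (G.child_mem (hv i hi).1).2.2
  have hexit : ∀ i < p, x i + 2 ^ (α i) ≤ x (i + 1) := by
    intro i hi
    have h1 := hxstep i hi 0 (by simpa using hmonoπ i hi)
    have h2 := Nat.pow_log_le_self 2 (hwne i hi).ne'
    have h3 := Nat.mul_le_mul_right (2 ^ (t - b)) h2
    simp only [α, pow_add]
    omega
  have hrange : x p < x 0 + 2 ^ (t + 1) := by
    have e1 : 2 ^ a * 2 ^ (t - a) = 2 ^ t := by rw [← pow_add]; congr 1; omega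
    have e2 : 2 ^ b * 2 ^ (t - b) = 2 ^ t := by rw [← pow_add]; congr 1; omega
    have h1 := Nat.mul_lt_mul_of_pos_right (hπlo p le_rfl).2 (Nat.two_pow_pos (t - a))
    have h2 := Nat.mul_le_mul_right (2 ^ (t - a)) (hπlo 0 (by omega)).1
    have h3 : (2 ^ b * 2 - (v p).length) ≤ 2 ^ b := by have := (hllo p le_rfl).1; omega
    have h4 := Nat.mul_le_mul_right (2 ^ (t - b)) h3
    have h5 : x p = π (v p) * 2 ^ (t - a) + (2 ^ b * 2 - (v p).length) * 2 ^ (t - b) := rfl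
    have h6 : π (v 0) * 2 ^ (t - a) ≤ x 0 := Nat.le_add_right _ _
    rw [pow_succ]
    have h7 : 2 ^ a * 2 * 2 ^ (t - a) = 2 * 2 ^ t := by rw [← e1]; ring
    omega
  obtain ⟨P, CL, CR, e, hc, hP⟩ := chain_rec v L R α x (t + 1) 0 p (Nat.zero_le _)
    (fun i _ hi => (hw i hi).1)
    (fun i _ hi => by have := hexit i hi; have := Nat.two_pow_pos (α i); omega)
    (fun i _ hi => by have := hexit i hi; omega) hrange
  refine ⟨insert (v p) P, ?_, ?_⟩
  · have := Finset.card_insert_le (v p) P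
    omega
  intro P' hPP i hi ih τ D hE hD
  have hvp : v p ∈ P' := hPP (Finset.mem_insert_self _ _)
  have hPP' : P ⊆ P' := (Finset.subset_insert _ _).trans hPP
  rw [(hab i hi).1, (hab i hi).2] at hD
  have hτa : τ ≤ a := by
    have h1 : 2 ^ τ < 2 ^ (a + 1) := by
      have := (hπlo i hi).2
      have := hE.1
      rw [pow_succ]; omega
    have := (Nat.pow_lt_pow_iff_right (by norm_num : 1 < 2)).1 h1
    omega
  have hanti : ∀ k, i + k ≤ p → (v (i + k)).length ≤ (v i).length := by
    intro k
    induction k with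
    | zero => intro _; exact le_rfl
    | succ n ihn =>
      intro h
      have h1 := ihn (by omega)
      have h2 := (G.child_mem (hv (i + n) (by omega)).1).2.1
      exact h2.le.trans h1
  have hvpi : (v p).length ≤ (v i).length := by
    have := hanti (p - i) (by omega)
    rwa [show i + (p - i) = p by omega] at this
  let d : ℕ → ℕ := fun j =>
    16 * Nat.log 2 (w j).length + 16 * t + 10 - 4 * a - 12 * Nat.log 2 (π (w j))
  have hwlog : ∀ j < p, Nat.log 2 (w j).length + a + 1 ≤ b + Nat.log 2 (π (w j)) ∧
      Nat.log 2 (π (w j)) ≤ t ∧ Nat.log 2 (w j).length ≤ b := by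
    intro j hj
    obtain ⟨_, h2, h3, _⟩ := hw j hj
    have h5 := G.light_log h2 h3
    rw [(hab j hj.le).1, (hab j hj.le).2] at h5
    refine ⟨h5, (G.log_le (G.child_mem h2).1).1, ?_⟩
    rw [← (hab j hj.le).2]
    exact Nat.log_mono_right (G.child_mem h2).2.1.le
  have hd : ∀ j, 0 ≤ j → j < p → Der P' (d j) (L j) ∧ Der P' (d j) (R j) := by
    intro j _ hj
    obtain ⟨_, h2, h3, h4, h5⟩ := hw j hj
    refine h5 P' _ (G.light_der h2 h3 (u := v i) ?_ ih ?_)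
    · have := (hllo j hj.le).2
      have := (hllo (j + 1) hj).1
      have := (hllo i hi).1
      omega
    · rw [(hab j hj.le).1]
      simp only [d]
      omega
  obtain ⟨g1, g2, g3⟩ := hP P' hPP' d hd
  have hbase : Der P' (D + 4 * τ - 4 * a - 8) (v p) := by
    by_cases h1 : 1 < (v p).length
    · have hL : Child Q lc rc (v p) (lc (v p)) := ⟨hv0 p le_rfl, h1, Or.inl rfl⟩
      have hR : Child Q lc rc (v p) (rc (v p)) := ⟨hv0 p le_rfl, h1, Or.inr rfl⟩
      have key : ∀ z, Child Q lc rc (v p) z → Der P' (D + 4 * τ - 4 * a - 9) z := by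
        intro z hz
        have l1 := G.light_log hz (hend z)
        have l2 := (G.child_mem hz).2.1
        have l3 := Nat.log_mono_right (b := 2) l2.le
        refine G.light_der hz (hend z) (u := v i) (by omega) ih ?_
        rw [(hab p le_rfl).1] at l1 ⊢
        rw [(hab p le_rfl).2] at l1 l3
        omega
      have hs := (G.split _ (hv0 p le_rfl) h1).2.2
      rw [hs] at hvp ⊢
      rw [← hs] at hvp ⊢
      have := (key _ hL).app' (key _ hR) (D := D + 4 * τ - 4 * a - 8) (hs ▸ hvp)
        (by omega) (by omega)
      rwa [← hs] at this
    · have h2 := List.length_pos_iff.2 (G.ne _ (hv0 p le_rfl))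
      obtain ⟨c, hc⟩ := List.length_eq_one_iff.1 (show (v p).length = 1 by omega)
      rw [hc] at hvp ⊢
      exact (Der.single c 0 hvp).mono (by omega)
  rcases Nat.eq_zero_or_pos i with rfl | hi0
  · refine g2 _ D hbase (by omega) fun j _ hj => ?_
    obtain ⟨q1, q2, q3⟩ := hwlog j hj
    simp only [d, α]
    omega
  rcases Nat.eq_or_lt_of_le hi with rfl | hip
  · exact hbase.mono (by omega)
  refine g3 _ D i (τ + (t - a)) hi0 hip ?_ hbase (by omega) fun j _ hj => ?_
  · obtain ⟨k, rfl⟩ : ∃ k, i = k + 1 := ⟨i - 1, by omega⟩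
    have h1 := hE.2 _ (hv k (by omega))
    have h2 := hxstep k (by omega) _ h1
    rw [pow_add]
    simp only [Nat.add_sub_cancel]
    omega
  · obtain ⟨q1, q2, q3⟩ := hwlog j hj
    simp only [d, α]
    omega

theorem Dag.chain_exists (G : Dag Q lc rc π t) (n : ℕ) : ∀ u ∈ Q, u.length = n →
    ∃ (p : ℕ) (v : ℕ → List A), v 0 = u ∧ (∀ i ≤ p, v i ∈ Q) ∧
      (∀ i < p, Heavy Q lc rc π (v i) (v (i + 1))) ∧ ∀ w, ¬ Heavy Q lc rc π (v p) w := by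
  induction n using Nat.strong_induction_on with
  | _ n ih =>
    intro u hu hn
    by_cases h : ∃ w, Heavy Q lc rc π u w
    · obtain ⟨w, hw⟩ := h
      obtain ⟨h1, h2, _⟩ := G.child_mem hw.1
      obtain ⟨p, v, e0, e1, e2, e3⟩ := ih w.length (by omega) w h1 rfl
      refine ⟨p + 1, fun i => Nat.casesOn i u v, rfl, ?_, ?_, e3⟩
      · intro i hi
        cases i with
        | zero => exact hu
        | succ k => exact e1 k (by omega)
      · intro i hi
        cases i with
        | zero => simpa [e0] using hw
        | succ k => exact e2 k (by omega)
    · push Not at h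
      exact ⟨0, fun _ => u, rfl, fun _ _ => hu, fun i hi => absurd hi (Nat.not_lt_zero i), h⟩

theorem Dag.all_chains (G : Dag Q lc rc π t) (n : ℕ) : ∀ K : Finset (List A), K.card = n → K ⊆ Q →
    (∀ u ∈ K, ∀ v, Heavy Q lc rc π u v → v ∈ K) →
    ∃ P : Finset (List A), P.card ≤ 10 * K.card ∧
      ∀ P', P ⊆ P' → ∀ v ∈ K, StepC Q lc rc π t P' v := by
  classical
  induction n using Nat.strong_induction_on with
  | _ n ih =>
    intro K hn hKQ hK
    rcases K.eq_empty_or_nonempty with rfl | hne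
    · exact ⟨∅, by simp, by simp⟩
    obtain ⟨u, hu, hmax⟩ := K.exists_max_image List.length hne
    obtain ⟨p, v, e0, e1, e2, e3⟩ := G.chain_exists _ u (hKQ hu) rfl
    have hvK : ∀ i ≤ p, v i ∈ K := by
      intro i
      induction i with
      | zero => intro _; rw [e0]; exact hu
      | succ k ihk => intro h; exact hK _ (ihk (by omega)) _ (e2 k (by omega))
    have hlen : ∀ i j, i < j → j ≤ p → (v j).length < (v i).length := by
      intro i j hij
      induction j, hij using Nat.le_induction with
      | base => intro h; exact (G.child_mem (e2 i (by omega)).1).2.1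
      | succ k hk ihk =>
        intro h
        have := ihk (by omega)
        have := (G.child_mem (e2 k (by omega)).1).2.1
        omega
    let I : Finset (List A) := (Finset.range (p + 1)).image v
    have hI : I.card = p + 1 := by
      rw [Finset.card_image_of_injOn, Finset.card_range]
      intro i hi j hj hij
      simp only [Finset.coe_range, Set.mem_Iio] at hi hj
      rcases lt_trichotomy i j with h | h | h
      · have := hlen i j h (by omega)
        simp only [hij] at this
        omega
      · exact h
      · have := hlen j i h (by omega)
        simp only [hij] at this
        omega
    have hIK : I ⊆ K := by
      intro y hy
      obtain ⟨i, hi, rfl⟩ := Finset.mem_image.1 hy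
      exact hvK i (by have := Finset.mem_range.1 hi; omega)
    have hcard := Finset.card_sdiff_add_card_eq_card hIK
    obtain ⟨P2, c2, k2⟩ := ih (K \ I).card (by omega) (K \ I) rfl
      (Finset.sdiff_subset.trans hKQ) (by
        intro y hy z hyz
        rw [Finset.mem_sdiff] at hy ⊢
        refine ⟨hK y hy.1 z hyz, fun hz => ?_⟩
        obtain ⟨i, hi, rfl⟩ := Finset.mem_image.1 hz
        have hi' := Finset.mem_range.1 hi
        cases i with
        | zero =>
          rw [e0] at hyz
          have := (G.child_mem hyz.1).2.1
          have := hmax y hy.1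
          omega
        | succ k =>
          have := G.heavy_parent_unique hyz (e2 k (by omega))
          exact hy.2 (Finset.mem_image.2 ⟨k, Finset.mem_range.2 (by omega), this.symm⟩))
    obtain ⟨P1, c1, k1⟩ := G.chain_step p v e1 e2 e3
    refine ⟨P1 ∪ P2, ?_, ?_⟩
    · have := Finset.card_union_le P1 P2
      omega
    · intro P' hP y hy
      by_cases hyI : y ∈ I
      · obtain ⟨i, hi, rfl⟩ := Finset.mem_image.1 hyI
        exact k1 P' (Finset.subset_union_left.trans hP) i
          (by have := Finset.mem_range.1 hi; omega)
      · exact k2 P' (Finset.subset_union_right.trans hP) y (Finset.mem_sdiff.2 ⟨hy, hyI⟩)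

theorem Dag.main (G : Dag Q lc rc π t) :
    ∃ P : Finset (List A), P.card ≤ 10 * Q.card ∧ ∀ v ∈ Q, Claim Q lc rc π t P v := by
  obtain ⟨P, hc, hP⟩ := G.all_chains _ Q rfl subset_rfl (fun u _ v h => (G.child_mem h.1).1)
  refine ⟨P, hc, ?_⟩
  have : ∀ n, ∀ v ∈ Q, v.length = n → Claim Q lc rc π t P v := by
    intro n
    induction n using Nat.strong_induction_on with
    | _ n ih =>
      intro v hv hn
      exact hP P subset_rfl v hv fun w hw hlt => ih w.length (by omega) w hw rfl
  exact fun v hv => this _ v hv rfl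

end

/-! ## Path counts and the balancing theorem for 1D programs -/

theorem path_counts {A : Type} (Q : Finset (List A)) (lc rc : List A → List A)
    (m : List A → List A → ℕ)
    (hm : ∀ x v, m x v = if 1 < x.length then
      (open Classical in ((if lc x = v then 1 else 0) + (if rc x = v then 1 else 0))) else 0)
    (hsplit : ∀ q ∈ Q, 1 < q.length → lc q ∈ Q ∧ rc q ∈ Q ∧ lc q ≠ [] ∧ rc q ≠ [] ∧
      q = lc q ++ rc q) (n : ℕ) :
    ∀ u ∈ Q, u.length = n → ∃ c : List A → ℕ,
      (∀ v, c v = (open Classical in (if u = v then 1 else 0)) + ∑ x ∈ Q, c x * m x v) ∧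
      ∀ v, c v * v.length ≤ u.length := by
  classical
  induction n using Nat.strong_induction_on with
  | _ n ih =>
    intro u hu hn
    by_cases h : 1 < u.length
    · obtain ⟨h1, h2, h3, h4, h5⟩ := hsplit u hu h
      have h6 : u.length = (lc u).length + (rc u).length := by
        conv_lhs => rw [h5]
        simp
      have h3' := List.length_pos_iff.2 h3
      have h4' := List.length_pos_iff.2 h4
      obtain ⟨c1, p1, q1⟩ := ih (lc u).length (by omega) _ h1 rfl
      obtain ⟨c2, p2, q2⟩ := ih (rc u).length (by omega) _ h2 rfl
      refine ⟨fun v => (if u = v then 1 else 0) + c1 v + c2 v, ?_, ?_⟩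
      · intro v
        have e : ∑ x ∈ Q, ((if u = x then 1 else 0) + c1 x + c2 x) * m x v =
            m u v + ∑ x ∈ Q, c1 x * m x v + ∑ x ∈ Q, c2 x * m x v := by
          simp only [add_mul, Finset.sum_add_distrib]
          simp [hu]
        have a1 := p1 v
        have a2 := p2 v
        change (if u = v then 1 else 0) + c1 v + c2 v = _
        rw [e, hm u v, if_pos h]
        linarith
      · intro v
        have a1 := q1 v
        have a2 := q2 v
        by_cases huv : u = v
        · subst huv
          have b1 : c1 u = 0 := by
            by_contra hc
            have := Nat.le_mul_of_pos_left u.length (Nat.pos_of_ne_zero hc)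
            omega
          have b2 : c2 u = 0 := by
            by_contra hc
            have := Nat.le_mul_of_pos_left u.length (Nat.pos_of_ne_zero hc)
            omega
          simp [b1, b2]
        · simp only [if_neg huv, zero_add, add_mul]
          omega
    · refine ⟨fun v => if u = v then 1 else 0, ?_, ?_⟩
      · intro v
        simp [hu, hm u v, h]
      · intro v
        by_cases huv : u = v
        · simp [huv]
        · simp [huv]

theorem balance_1d {A : Type} (Q R : Finset (List A)) (M : ℕ) (hM : 2 ≤ M)
    (hne : ∀ q ∈ Q, q ≠ []) (hlen : ∀ q ∈ R, q.length = M)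
    (hsplit : ∀ q ∈ Q, 1 < q.length → ∃ y ∈ Q, ∃ z ∈ Q, q = y ++ z)
    (hR : R ⊆ Q) (hRc : R.card ≤ M) :
    ∃ P : Finset (List A), P.card ≤ 10 * Q.card ∧
      ∀ r ∈ R, Der P (74 * Nat.log 2 M) r := by
  classical
  have hs : ∀ q, ∃ y z, q ∈ Q → 1 < q.length → (y ∈ Q ∧ z ∈ Q ∧ y ≠ [] ∧ z ≠ [] ∧ q = y ++ z) := by
    intro q
    by_cases h : q ∈ Q ∧ 1 < q.length
    · obtain ⟨y, hy, z, hz, e⟩ := hsplit q h.1 h.2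
      exact ⟨y, z, fun _ _ => ⟨hy, hz, hne y hy, hne z hz, e⟩⟩
    · exact ⟨[], [], fun h1 h2 => absurd ⟨h1, h2⟩ h⟩
  choose lc rc hlr using hs
  let m : List A → List A → ℕ := fun x v => if 1 < x.length then
      ((if lc x = v then 1 else 0) + (if rc x = v then 1 else 0)) else 0
  have hcs : ∀ u, ∃ c : List A → ℕ, u ∈ Q →
      (∀ v, c v = (if u = v then 1 else 0) + ∑ x ∈ Q, c x * m x v) ∧
      ∀ v, c v * v.length ≤ u.length := by
    intro u
    by_cases hu : u ∈ Q
    · obtain ⟨c, h1, h2⟩ := path_counts Q lc rc m (fun x v => by simp only [m]) hlr _ u hu rfl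
      exact ⟨c, fun _ => ⟨h1, h2⟩⟩
    · exact ⟨fun _ => 0, fun h => absurd h hu⟩
  choose c hc using hcs
  let π : List A → ℕ := fun v => ∑ r ∈ R, c r v
  have hπ : ∀ v, π v = (if v ∈ R then 1 else 0) + ∑ x ∈ Q, π x * m x v := by
    intro v
    have e1 : ∀ r ∈ R, c r v = (if r = v then 1 else 0) + ∑ x ∈ Q, c r x * m x v :=
      fun r hr => (hc r (hR hr)).1 v
    simp only [π]
    rw [Finset.sum_congr rfl e1, Finset.sum_add_distrib, Finset.sum_comm]
    simp only [Finset.sum_mul]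
    simp
  have hπb : ∀ v, π v * v.length ≤ M * M := by
    intro v
    simp only [π, Finset.sum_mul]
    calc ∑ r ∈ R, c r v * v.length ≤ ∑ r ∈ R, M :=
          Finset.sum_le_sum fun r hr => ((hc r (hR hr)).2 v).trans (hlen r hr).le
      _ = R.card * M := by simp
      _ ≤ M * M := Nat.mul_le_mul_right _ hRc
  have hm1 : ∀ u v, 1 < u.length → (v = lc u ∨ v = rc u) → 1 ≤ m u v := by
    intro u v h1 h2
    simp only [m, if_pos h1]
    rcases h2 with rfl | rfl
    · simp
    · simp
  have hle1 : ∀ u ∈ Q, 1 < u.length → ∀ v, (v = lc u ∨ v = rc u) →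
      π u + (if v ∈ R then 1 else 0) ≤ π v := by
    intro u hu h1 v h2
    have a1 := Finset.single_le_sum (f := fun x => π x * m x v) (fun _ _ => Nat.zero_le _) hu
    have a2 := Nat.mul_le_mul_left (π u) (hm1 u v h1 h2)
    have a3 := hπ v
    omega
  have hle2 : ∀ u ∈ Q, 1 < u.length → ∀ u' ∈ Q, 1 < u'.length → u ≠ u' →
    ∀ v, (v = lc u ∨ v = rc u) → (v = lc u' ∨ v = rc u') → π u + π u' ≤ π v := by
    intro u hu h1 u' hu' h1' hne v h2 h2'
    have a1 := Finset.add_le_sum (f := fun x => π x * m x v) (s := Q)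
      (fun _ _ => Nat.zero_le _) hu hu' hne
    have a2 := Nat.mul_le_mul_left (π u) (hm1 u v h1 h2)
    have a2' := Nat.mul_le_mul_left (π u') (hm1 u' v h1' h2')
    have a3 := hπ v
    omega
  let Q' := Q.filter fun v => 0 < π v
  set g := Nat.log 2 M with hg
  have hMg : M < 2 ^ (g + 1) := Nat.lt_pow_succ_log_self (by norm_num) M
  have hMM : M * M < 2 ^ (2 * g + 1 + 1) := by
    calc M * M < 2 ^ (g + 1) * 2 ^ (g + 1) := Nat.mul_lt_mul'' hMg hMg
      _ = 2 ^ (2 * g + 1 + 1) := by rw [← pow_add]; congr 1; omega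
  have G : Dag Q' lc rc π (2 * g + 1) := by
    constructor
    · intro q hq
      exact hne q (Finset.mem_filter.1 hq).1
    · intro q hq h1
      obtain ⟨hq1, hq2⟩ := Finset.mem_filter.1 hq
      obtain ⟨k1, k2, k3, k4, k5⟩ := hlr q hq1 h1
      have j1 := hle1 q hq1 h1 _ (Or.inl rfl)
      have j2 := hle1 q hq1 h1 _ (Or.inr rfl)
      exact ⟨Finset.mem_filter.2 ⟨k1, by omega⟩, Finset.mem_filter.2 ⟨k2, by omega⟩, k5⟩
    · intro q hq
      exact (Finset.mem_filter.1 hq).2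
    · intro u hu h1 v h2
      have := hle1 u (Finset.mem_filter.1 hu).1 h1 v h2
      omega
    · intro u hu h1 u' hu' h1' hne v h2 h2'
      exact hle2 u (Finset.mem_filter.1 hu).1 h1 u' (Finset.mem_filter.1 hu').1 h1' hne v h2 h2'
    · intro q hq
      have h1 := List.length_pos_iff.2 (hne q (Finset.mem_filter.1 hq).1)
      have := Nat.le_mul_of_pos_right (π q) h1
      have := hπb q
      omega
    · intro q hq
      have := Nat.le_mul_of_pos_left q.length (Finset.mem_filter.1 hq).2
      have := hπb q
      omega
  obtain ⟨P, hPc, hP⟩ := G.main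
  refine ⟨P, hPc.trans (Nat.mul_le_mul_left _ (Finset.card_filter_le _ _)), ?_⟩
  intro r hr
  have hrπ : 1 ≤ π r := by rw [hπ r, if_pos hr]; omega
  have hg1 : 1 ≤ g := Nat.log_pos (by norm_num) hM
  refine hP r (Finset.mem_filter.2 ⟨hR hr, hrπ⟩) 0 _ ⟨by simpa using hrπ, ?_⟩ ?_
  · intro u hu
    have := hle1 u (Finset.mem_filter.1 hu.1.1).1 hu.1.2.1 r hu.1.2.2
    simpa [hr] using this
  · rw [hlen r hr]
    omega

/-! ## Two-dimensional part -/

section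
variable {A : Type}

/-- The 2D string with the given rows. -/
def toStr (R : List (List A)) (w : ℕ) : Str2 A :=
  ⟨R.length, w, fun i j => (R[i]?).bind fun r => r[j]?⟩

theorem toStr_single (a : A) : Str2.single a = toStr [[a]] 1 := by
  simp only [Str2.single, Str2.mk', toStr, Str2.mk.injEq, List.length_singleton, true_and]
  funext i j
  rcases i with _ | i
  · rcases j with _ | j <;> simp
  · simp

theorem toStr_vcat (R R' : List (List A)) (w : ℕ) (h : ∀ r ∈ R, r.length = w)
    (h' : ∀ r ∈ R', r.length = w) : (toStr R w).vcat (toStr R' w) = toStr (R ++ R') w := by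
  simp only [Str2.vcat, Str2.mk', toStr, Str2.mk.injEq, List.length_append, true_and]
  funext i j
  by_cases hi : i < R.length
  · rw [List.getElem?_append_left hi]
    have := h R[i] (List.getElem_mem hi)
    by_cases hj : j < w
    · simp [hi, hj, Nat.lt_add_right _ hi]
    · simp [hi, hj]
      omega
  · rw [List.getElem?_append_right (by omega)]
    by_cases hi' : i - R.length < R'.length
    · have := h' R'[i - R.length] (List.getElem_mem hi')
      by_cases hj : j < w
      · simp [hi, hj, hi', show i < R.length + R'.length by omega]
      · simp [hj, hi']
        omega
    · simp [hi', show ¬ i < R.length + R'.length by omega]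

theorem toStr_hcat (R R' : List (List A)) (w w' : ℕ) (hl : R.length = R'.length)
    (h : ∀ r ∈ R, r.length = w) (h' : ∀ r ∈ R', r.length = w') :
    (toStr R w).hcat (toStr R' w') = toStr (List.zipWith (· ++ ·) R R') (w + w') := by
  simp only [Str2.hcat, Str2.mk', toStr, Str2.mk.injEq, List.length_zipWith, true_and]
  refine ⟨by omega, ?_⟩
  funext i j
  by_cases hi : i < R.length
  · have hi' : i < R'.length := by omega
    have e1 := h R[i] (List.getElem_mem hi)
    have e2 := h' R'[i] (List.getElem_mem hi')
    have e3 : (List.zipWith (· ++ ·) R R')[i]? = some (R[i] ++ R'[i]) := by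
      rw [List.getElem?_eq_getElem (by simp; omega)]
      simp
    rw [e3]
    by_cases hj : j < w
    · simp [hi, hj, Nat.lt_add_right _ hj, List.getElem?_append_left, e1]
    · rw [Option.bind_some, List.getElem?_append_right (by omega), e1]
      by_cases hj' : j < w + w'
      · simp [hi, hi', hj, hj']
      · simp [hj']
        omega
  · simp [hi]

theorem toStr_inj (R R' : List (List A)) (w w' : ℕ) (h : ∀ r ∈ R, r.length = w)
    (h' : ∀ r ∈ R', r.length = w') (e : toStr R w = toStr R' w') : R = R' ∧ w = w' := by
  simp only [toStr, Str2.mk.injEq] at e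
  obtain ⟨e1, e2, e3⟩ := e
  refine ⟨List.ext_getElem e1 fun i hi hi' => List.ext_getElem? fun j => ?_, e2⟩
  have := congrFun (congrFun e3 i) j
  simpa [hi, hi'] using this

/-! ### Derivations of 2D strings -/

inductive Der2 (P : Finset (Str2 A)) : ℕ → Str2 A → Prop
  | single (a : A) (d : ℕ) : Str2.single a ∈ P → Der2 P (d + 1) (Str2.single a)
  | horiz (d : ℕ) (S T : Str2 A) : Der2 P d S → Der2 P d T → S.h = T.h → S.hcat T ∈ P →
      Der2 P (d + 1) (S.hcat T)
  | vert (d : ℕ) (S T : Str2 A) : Der2 P d S → Der2 P d T → S.w = T.w → S.vcat T ∈ P →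
      Der2 P (d + 1) (S.vcat T)

theorem Der2.mono {P : Finset (Str2 A)} {d : ℕ} {s : Str2 A} (h : Der2 P d s) :
    ∀ {d' : ℕ}, d ≤ d' → Der2 P d' s := by
  induction h with
  | single a d ha =>
    intro d' hd
    obtain ⟨e, rfl⟩ : ∃ e, d' = e + 1 := ⟨d' - 1, by omega⟩
    exact Der2.single a e ha
  | horiz d x y _ _ h1 hm ihx ihy =>
    intro d' hd
    obtain ⟨e, rfl⟩ : ∃ e, d' = e + 1 := ⟨d' - 1, by omega⟩
    exact Der2.horiz e x y (ihx (by omega)) (ihy (by omega)) h1 hm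
  | vert d x y _ _ h1 hm ihx ihy =>
    intro d' hd
    obtain ⟨e, rfl⟩ : ∃ e, d' = e + 1 := ⟨d' - 1, by omega⟩
    exact Der2.vert e x y (ihx (by omega)) (ihy (by omega)) h1 hm

theorem Der2.mem {P : Finset (Str2 A)} {d : ℕ} {s : Str2 A} (h : Der2 P d s) : s ∈ P := by
  cases h <;> assumption

theorem Der.toDer2 {P : Finset (List A)} {P' : Finset (Str2 A)}
    (hP : ∀ l ∈ P, toStr [l] l.length ∈ P') {d : ℕ} {l : List A} (h : Der P d l) :
    l ≠ [] → Der2 P' d (toStr [l] l.length) := by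
  induction h with
  | nil d => intro h; exact absurd rfl h
  | single a d ha =>
    intro _
    have := hP _ ha
    simp only [List.length_singleton] at this ⊢
    rw [← toStr_single] at this ⊢
    exact Der2.single a d this
  | app d x y hx hy hm ihx ihy =>
    intro hne
    by_cases h1 : x = []
    · subst h1
      exact (ihy (by simpa using hne)).mono (by omega)
    by_cases h2 : y = []
    · subst h2
      simp only [List.append_nil]
      exact (ihx h1).mono (by omega)
    have e := toStr_hcat [x] [y] x.length y.length rfl (by simp) (by simp)
    simp only [List.zipWith_cons_cons, List.zipWith_nil_left] at e
    have hm' := hP _ hm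
    rw [List.length_append] at hm' ⊢
    rw [← e] at hm' ⊢
    exact Der2.horiz d _ _ (ihx h1) (ihy h2) rfl hm'

theorem vert_build (w d : ℕ) (s : ℕ) : ∀ R : List (List A), R ≠ [] → R.length ≤ 2 ^ s →
    (∀ r ∈ R, r.length = w) →
    ∃ P : Finset (Str2 A), P.card + 1 ≤ R.length ∧ ∀ P', P ⊆ P' →
      (∀ r ∈ R, Der2 P' d (toStr [r] w)) → Der2 P' (d + s) (toStr R w) := by
  classical
  induction s with
  | zero =>
    intro R hne hl hw
    have h0 := List.length_pos_iff.2 hne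
    obtain ⟨r, rfl⟩ := List.length_eq_one_iff.1 (show R.length = 1 by simp at hl; omega)
    exact ⟨∅, by simp, fun P' _ h => h r (by simp)⟩
  | succ s ih =>
    intro R hne hl hw
    by_cases hsm : R.length ≤ 2 ^ s
    · obtain ⟨P, h1, h2⟩ := ih R hne hsm hw
      exact ⟨P, h1, fun P' hP h => (h2 P' hP h).mono (by omega)⟩
    have hpos := Nat.two_pow_pos s
    have hl1 : (R.take (2 ^ s)).length = 2 ^ s := by simp; omega
    have hl2 : (R.drop (2 ^ s)).length = R.length - 2 ^ s := by simp
    rw [pow_succ] at hl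
    have w1 : ∀ r ∈ R.take (2 ^ s), r.length = w := fun r hr => hw r (List.mem_of_mem_take hr)
    have w2 : ∀ r ∈ R.drop (2 ^ s), r.length = w := fun r hr => hw r (List.mem_of_mem_drop hr)
    obtain ⟨P1, c1, k1⟩ := ih (R.take (2 ^ s)) (List.length_pos_iff.1 (by omega)) (by omega) w1
    obtain ⟨P2, c2, k2⟩ := ih (R.drop (2 ^ s)) (List.length_pos_iff.1 (by omega)) (by omega) w2
    refine ⟨insert (toStr R w) (P1 ∪ P2), ?_, ?_⟩
    · have := Finset.card_insert_le (toStr R w) (P1 ∪ P2)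
      have := Finset.card_union_le P1 P2
      omega
    intro P' hP h
    have hm : toStr R w ∈ P' := hP (Finset.mem_insert_self _ _)
    have hP12 := (Finset.subset_insert _ _).trans hP
    have d1 := k1 P' (Finset.subset_union_left.trans hP12)
      (fun r hr => h r (List.mem_of_mem_take hr))
    have d2 := k2 P' (Finset.subset_union_right.trans hP12)
      (fun r hr => h r (List.mem_of_mem_drop hr))
    have e := toStr_vcat _ _ w w1 w2
    rw [List.take_append_drop] at e
    rw [← e] at hm ⊢
    exact Der2.vert (d + s) _ _ d1 d2 rfl hm

/-! ### Evaluation of programs -/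

theorem expAux_fuel (G : SLP2 A) (n : ℕ) : ∀ X m, G.rank X < n → G.rank X < m →
    G.expAux n X = G.expAux m X := by
  induction n with
  | zero => intro X m h; omega
  | succ n ih =>
    intro X m h1 h2
    obtain ⟨k, rfl⟩ : ∃ k, m = k + 1 := ⟨m - 1, by omega⟩
    simp only [SLP2.expAux]
    cases hr : G.rhs X with
    | chr a => rfl
    | horiz Y Z =>
      have := G.rank_horiz hr
      simp only
      rw [ih Y k (by omega) (by omega), ih Z k (by omega) (by omega)]
    | vert Y Z =>
      have := G.rank_vert hr
      simp only
      rw [ih Y k (by omega) (by omega), ih Z k (by omega) (by omega)]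

theorem expNT_chr (G : SLP2 A) {X : G.V} {a : A} (h : G.rhs X = .chr a) :
    G.expNT X = Str2.single a := by
  simp only [SLP2.expNT, SLP2.expAux, h]

theorem expNT_horiz (G : SLP2 A) {X Y Z : G.V} (h : G.rhs X = .horiz Y Z) :
    G.expNT X = (G.expNT Y).hcat (G.expNT Z) := by
  have := G.rank_horiz h
  simp only [SLP2.expNT]
  rw [SLP2.expAux, h]
  simp only
  rw [expAux_fuel G _ Y (G.rank Y + 1) (by omega) (by omega),
    expAux_fuel G _ Z (G.rank Z + 1) (by omega) (by omega)]

theorem expNT_vert (G : SLP2 A) {X Y Z : G.V} (h : G.rhs X = .vert Y Z) :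
    G.expNT X = (G.expNT Y).vcat (G.expNT Z) := by
  have := G.rank_vert h
  simp only [SLP2.expNT]
  rw [SLP2.expAux, h]
  simp only
  rw [expAux_fuel G _ Y (G.rank Y + 1) (by omega) (by omega),
    expAux_fuel G _ Z (G.rank Z + 1) (by omega) (by omega)]

theorem depthAux_le (G : SLP2 A) (n : ℕ) : ∀ X, G.depthAux n X ≤ G.rank X + 1 := by
  induction n with
  | zero => intro X; simp [SLP2.depthAux]
  | succ n ih =>
    intro X
    simp only [SLP2.depthAux]
    cases hr : G.rhs X with
    | chr a => simp
    | horiz Y Z =>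
      have := G.rank_horiz hr
      have := ih Y
      have := ih Z
      simp only
      omega
    | vert Y Z =>
      have := G.rank_vert hr
      have := ih Y
      have := ih Z
      simp only
      omega

/-- From a derivation inside a finite set of 2D strings to a 2D SLP. -/
theorem slp_of_der (P : Finset (Str2 A)) (D : ℕ) (T : Str2 A) (hT : Der2 P D T) :
    ∃ G : SLP2 A, G.WF ∧ G.exp = T ∧ G.size ≤ 2 * P.card ∧ G.depth ≤ D + 1 := by
  classical
  let V := {S : Str2 A // S ∈ P ∧ ∃ d, Der2 P d S}
  let rk : V → ℕ := fun S => Nat.find S.2.2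
  have hrk : ∀ S : V, Der2 P (rk S) S.1 := fun S => Nat.find_spec S.2.2
  have hmin : ∀ (S : V) d, Der2 P d S.1 → rk S ≤ d := fun S d h => Nat.find_min' S.2.2 h
  have step : ∀ S : V, ∃ r : Rhs2 A V,
      (∀ a, r = .chr a → S.1 = Str2.single a) ∧
      (∀ Y Z, r = .horiz Y Z → S.1 = Y.1.hcat Z.1 ∧ Y.1.h = Z.1.h ∧ rk Y < rk S ∧ rk Z < rk S) ∧
      (∀ Y Z, r = .vert Y Z → S.1 = Y.1.vcat Z.1 ∧ Y.1.w = Z.1.w ∧ rk Y < rk S ∧ rk Z < rk S) := by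
    intro S
    have h := hrk S
    generalize hd : rk S = d at h
    generalize hs : S.1 = s at h
    cases h with
    | single a d ha =>
      refine ⟨.chr a, ?_, ?_, ?_⟩
      · intro b hb; cases hb; rfl
      · intro Y Z h; cases h
      · intro Y Z h; cases h
    | horiz d x y h1 h2 h3 h4 =>
      refine ⟨.horiz ⟨x, h1.mem, d, h1⟩ ⟨y, h2.mem, d, h2⟩, ?_, ?_, ?_⟩
      · intro b hb; cases hb
      · intro Y Z h
        cases h
        exact ⟨rfl, h3, Nat.lt_succ_of_le (hmin ⟨x, h1.mem, d, h1⟩ d h1),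
          Nat.lt_succ_of_le (hmin ⟨y, h2.mem, d, h2⟩ d h2)⟩
      · intro Y Z h; cases h
    | vert d x y h1 h2 h3 h4 =>
      refine ⟨.vert ⟨x, h1.mem, d, h1⟩ ⟨y, h2.mem, d, h2⟩, ?_, ?_, ?_⟩
      · intro b hb; cases hb
      · intro Y Z h; cases h
      · intro Y Z h
        cases h
        exact ⟨rfl, h3, Nat.lt_succ_of_le (hmin ⟨x, h1.mem, d, h1⟩ d h1),
          Nat.lt_succ_of_le (hmin ⟨y, h2.mem, d, h2⟩ d h2)⟩
  choose r hr1 hr2 hr3 using step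
  let f : V → P := fun S => ⟨S.1, S.2.1⟩
  have hf : Function.Injective f := by
    intro a b h
    have h' : a.1 = b.1 := congrArg (fun z : P => (z : Str2 A)) h
    exact Subtype.ext h'
  let fV : Fintype V := Fintype.ofInjective f hf
  let G : SLP2 A := ⟨V, fV, ⟨T, hT.mem, D, hT⟩, r, rk,
    fun {X Y Z} h => (hr2 X Y Z h).2.2, fun {X Y Z} h => (hr3 X Y Z h).2.2⟩
  have hexp : ∀ n, ∀ X : V, rk X = n → G.expNT X = X.1 := by
    intro n
    induction n using Nat.strong_induction_on with
    | _ n ih =>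
      intro X hX
      cases h : r X with
      | chr a => rw [expNT_chr G (X := X) h, hr1 X a h]
      | horiz Y Z =>
        obtain ⟨e1, e2, e3, e4⟩ := hr2 X Y Z h
        rw [expNT_horiz G (X := X) h, ih _ (hX ▸ e3) Y rfl, ih _ (hX ▸ e4) Z rfl, e1]
      | vert Y Z =>
        obtain ⟨e1, e2, e3, e4⟩ := hr3 X Y Z h
        rw [expNT_vert G (X := X) h, ih _ (hX ▸ e3) Y rfl, ih _ (hX ▸ e4) Z rfl, e1]
  refine ⟨G, ?_, hexp _ _ rfl, ?_, ?_⟩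
  · intro X
    cases h : G.rhs X with
    | chr a => trivial
    | horiz Y Z =>
      simp only
      rw [hexp _ Y rfl, hexp _ Z rfl]
      exact (hr2 X Y Z h).2.1
    | vert Y Z =>
      simp only
      rw [hexp _ Y rfl, hexp _ Z rfl]
      exact (hr3 X Y Z h).2.1
  · have hcard : @Fintype.card V fV ≤ P.card := by
      have := @Fintype.card_le_of_injective V P fV _ f hf
      simpa using this
    have h2 : G.size ≤ ∑ _X : V, 2 := by
      unfold SLP2.size
      refine Finset.sum_le_sum fun X _ => ?_
      cases G.rhs X <;> simp
    have h3 : ∑ _X : V, 2 = @Fintype.card V fV * 2 := by simp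
    omega
  · have h1 := depthAux_le G (G.rank G.start + 1) G.start
    have h2 : G.rank G.start ≤ D := hmin ⟨T, hT.mem, D, hT⟩ D hT
    have h3 : G.depth = G.depthAux (G.rank G.start + 1) G.start := rfl
    omega

theorem exp_rows (G : SLP2 A) (hG : G.WF) (n : ℕ) : ∀ X : G.V, G.rank X = n →
    ∃ (R : List (List A)) (w : ℕ), G.expNT X = toStr R w ∧ (∀ r ∈ R, r.length = w) ∧ 0 < w ∧
      R ≠ [] := by
  induction n using Nat.strong_induction_on with
  | _ n ih =>
    intro X hX
    have hwf := hG X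
    cases h : G.rhs X with
    | chr a =>
      exact ⟨[[a]], 1, by rw [expNT_chr G h, toStr_single], by simp, by simp, by simp⟩
    | horiz Y Z =>
      have hrk := G.rank_horiz h
      obtain ⟨R1, w1, a1, a2, a3, a4⟩ := ih _ (hX ▸ hrk.1) Y rfl
      obtain ⟨R2, w2, b1, b2, b3, b4⟩ := ih _ (hX ▸ hrk.2) Z rfl
      rw [h] at hwf
      simp only [a1, b1] at hwf
      have hl : R1.length = R2.length := hwf
      refine ⟨List.zipWith (· ++ ·) R1 R2, w1 + w2, ?_, ?_, by omega, ?_⟩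
      · rw [expNT_horiz G h, a1, b1, toStr_hcat _ _ _ _ hl a2 b2]
      · intro r hr
        obtain ⟨i, hi, rfl⟩ := List.mem_iff_getElem.1 hr
        simp only [List.length_zipWith] at hi
        rw [List.getElem_zipWith, List.length_append, a2 _ (List.getElem_mem _),
          b2 _ (List.getElem_mem _)]
      · rw [← List.length_pos_iff] at a4 b4 ⊢
        simp only [List.length_zipWith]
        omega
    | vert Y Z =>
      have hrk := G.rank_vert h
      obtain ⟨R1, w1, a1, a2, a3, a4⟩ := ih _ (hX ▸ hrk.1) Y rfl
      obtain ⟨R2, w2, b1, b2, b3, b4⟩ := ih _ (hX ▸ hrk.2) Z rfl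
      rw [h] at hwf
      simp only [a1, b1] at hwf
      have hl : w1 = w2 := hwf
      subst hl
      refine ⟨R1 ++ R2, w1, ?_, ?_, a3, by simp [a4]⟩
      · rw [expNT_vert G h, a1, b1, toStr_vcat _ _ _ a2 b2]
      · intro r hr
        rcases List.mem_append.1 hr with hr | hr
        · exact a2 r hr
        · exact b2 r hr

theorem balance_2d (N M : ℕ) (G : SLP2 A) (hN : 1 ≤ N) (hNM : N ≤ M) (hM : 2 ≤ M) (hG : G.WF)
    (hh : (G.exp).h = N) (hw : (G.exp).w = M) :
    ∃ G' : SLP2 A, G'.WF ∧ G'.exp = G.exp ∧ G'.size ≤ 100 * G.size * N ∧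
      G'.depth ≤ 100 * Nat.log 2 M := by
  classical
  letI := G.fintypeV
  have hrows := fun X => exp_rows G hG _ X rfl
  choose R w hR1 hR2 hR3 hR4 using hrows
  have uniq : ∀ X R' w', G.expNT X = toStr R' w' → (∀ r ∈ R', r.length = w') →
      R X = R' ∧ w X = w' := fun X R' w' h1 h2 =>
    toStr_inj _ _ _ _ (hR2 X) h2 ((hR1 X).symm.trans h1)
  let Q : Finset (List A) :=
    ((Finset.univ : Finset G.V).filter fun X => (R X).length ≤ N).biUnion fun X => (R X).toFinset
  have hQ : ∀ q, q ∈ Q ↔ ∃ X, (R X).length ≤ N ∧ q ∈ R X := by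
    intro q
    simp [Q]
  have hQc : Q.card ≤ Fintype.card G.V * N := by
    refine (Finset.card_biUnion_le_card_mul _ _ N ?_).trans
      (Nat.mul_le_mul_right _ ((Finset.card_filter_le _ _).trans (by simp)))
    intro X hX
    exact (List.toFinset_card_le _).trans (Finset.mem_filter.1 hX).2
  have hsplit : ∀ n, ∀ X, G.rank X = n → (R X).length ≤ N → ∀ q ∈ R X, 1 < q.length →
      ∃ y ∈ Q, ∃ z ∈ Q, q = y ++ z := by
    intro n
    induction n using Nat.strong_induction_on with
    | _ n ih =>
      intro X hX hXN q hq hq1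
      have hwf := hG X
      cases h : G.rhs X with
      | chr a =>
        have := (uniq X [[a]] 1 (by rw [expNT_chr G h, toStr_single]) (by simp)).1
        rw [this] at hq
        simp at hq
        simp [hq] at hq1
      | horiz Y Z =>
        rw [h] at hwf
        simp only [hR1] at hwf
        have hl : (R Y).length = (R Z).length := hwf
        have e : G.expNT X = toStr (List.zipWith (· ++ ·) (R Y) (R Z)) (w Y + w Z) := by
          rw [expNT_horiz G h, hR1, hR1, toStr_hcat _ _ _ _ hl (hR2 Y) (hR2 Z)]
        have e2 := (uniq X _ _ e (by
          intro r hr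
          obtain ⟨i, hi, rfl⟩ := List.mem_iff_getElem.1 hr
          simp only [List.length_zipWith] at hi
          rw [List.getElem_zipWith, List.length_append, hR2 Y _ (List.getElem_mem _),
            hR2 Z _ (List.getElem_mem _)])).1
        rw [e2] at hXN hq
        simp only [List.length_zipWith] at hXN
        obtain ⟨i, hi, rfl⟩ := List.mem_iff_getElem.1 hq
        simp only [List.length_zipWith] at hi
        refine ⟨(R Y)[i], (hQ _).2 ⟨Y, by omega, List.getElem_mem _⟩,
          (R Z)[i], (hQ _).2 ⟨Z, by omega, List.getElem_mem _⟩, ?_⟩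
        rw [List.getElem_zipWith]
      | vert Y Z =>
        have hrk := G.rank_vert h
        rw [h] at hwf
        simp only [hR1] at hwf
        have hl : w Y = w Z := hwf
        have hZ := hR2 Z
        rw [← hl] at hZ
        have e : G.expNT X = toStr (R Y ++ R Z) (w Y) := by
          rw [expNT_vert G h, hR1, hR1, ← hl, toStr_vcat _ _ _ (hR2 Y) hZ]
        have e2 := (uniq X _ _ e (by
          intro r hr
          rcases List.mem_append.1 hr with hr | hr
          · exact hR2 Y r hr
          · exact hZ r hr)).1
        rw [e2] at hXN hq
        simp only [List.length_append] at hXN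
        rcases List.mem_append.1 hq with hq | hq
        · exact ih _ (hX ▸ hrk.1) Y rfl (by omega) q hq hq1
        · exact ih _ (hX ▸ hrk.2) Z rfl (by omega) q hq hq1
  have hexp : G.exp = toStr (R G.start) (w G.start) := hR1 G.start
  have hlenN : (R G.start).length = N := by rw [hexp] at hh; exact hh
  have hwM : w G.start = M := by rw [hexp] at hw; exact hw
  have hlenM : ∀ r ∈ R G.start, r.length = M := hwM ▸ hR2 G.start
  obtain ⟨P1, c1, k1⟩ := balance_1d Q (R G.start).toFinset M hM
    (by
      intro q hq
      obtain ⟨X, _, hqX⟩ := (hQ q).1 hq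
      rw [← List.length_pos_iff, hR2 X q hqX]
      exact hR3 X)
    (by intro q hq; exact hlenM q (by simpa using hq))
    (by
      intro q hq hq1
      obtain ⟨X, hXN, hqX⟩ := (hQ q).1 hq
      exact hsplit _ X rfl hXN q hqX hq1)
    (by intro q hq; exact (hQ q).2 ⟨G.start, hlenN.le, by simpa using hq⟩)
    ((List.toFinset_card_le _).trans (by omega))
  have hN2 : (R G.start).length ≤ 2 ^ (Nat.log 2 N + 1) := by
    rw [hlenN]; exact (Nat.lt_pow_succ_log_self (by norm_num) N).le
  obtain ⟨P2, c2, k2⟩ := vert_build M (74 * Nat.log 2 M) (Nat.log 2 N + 1) (R G.start)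
    (hR4 _) hN2 hlenM
  let P := P1.image (fun l => toStr [l] l.length) ∪ P2
  have hder := k2 P Finset.subset_union_right (by
    intro r hr
    have h1 := k1 r (by simpa using hr)
    have h2 := h1.toDer2 (P' := P)
      (fun l hl => Finset.mem_union_left _ (Finset.mem_image_of_mem _ hl))
      (by rw [← List.length_pos_iff, hlenM r hr]; omega)
    rwa [hlenM r hr] at h2)
  obtain ⟨G', g1, g2, g3, g4⟩ := slp_of_der P _ _ hder
  refine ⟨G', g1, ?_, ?_, ?_⟩
  · rw [g2, hexp, hwM]
  · have hPc : P.card ≤ P1.card + P2.card :=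
      (Finset.card_union_le _ _).trans (Nat.add_le_add_right Finset.card_image_le _)
    have hV1 : 1 ≤ Fintype.card G.V := Fintype.card_pos_iff.2 ⟨G.start⟩
    have hVs : Fintype.card G.V ≤ G.size := by
      unfold SLP2.size
      rw [Fintype.card_eq_sum_ones]
      refine Finset.sum_le_sum fun X _ => ?_
      cases G.rhs X <;> simp
    have h5 : N ≤ Fintype.card G.V * N := Nat.le_mul_of_pos_left N hV1
    have h6 : Fintype.card G.V * N ≤ G.size * N := Nat.mul_le_mul_right _ hVs
    rw [mul_assoc]
    omega
  · have h1 : Nat.log 2 N ≤ Nat.log 2 M := Nat.log_mono_right hNM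
    have h2 : 1 ≤ Nat.log 2 M := Nat.log_pos (by norm_num) hM
    omega

end

/-- There is an absolute constant `c > 0` such that: for every
finite alphabet, `1 ≤ N ≤ M` with `M ≥ 2`, and 2D SLP `G` deriving a 2D string
`T` of size `N × M`, there is a 2D SLP `G'` with `exp G' = T`, size at most
`c * |G| * N`, and depth at most `c * log₂ M`. -/
theorem balancing_standard_2d_slps :
    ∃ c : ℕ, 0 < c ∧
      ∀ (A : Type) (_ : Fintype A) (N M : ℕ) (G : SLP2 A),
        1 ≤ N → N ≤ M → 2 ≤ M → G.WF →
        (G.exp).h = N → (G.exp).w = M →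
        ∃ G' : SLP2 A, G'.WF ∧ G'.exp = G.exp ∧
          G'.size ≤ c * G.size * N ∧
          (G'.depth : ℝ) ≤ (c : ℝ) * Real.logb 2 (M : ℝ) := by
  refine ⟨100, by norm_num, ?_⟩
  intro A _ N M G hN hNM hM hG hh hw
  obtain ⟨G', h1, h2, h3, h4⟩ := balance_2d N M G hN hNM hM hG hh hw
  refine ⟨G', h1, h2, h3, ?_⟩
  have h5 : (G'.depth : ℝ) ≤ 100 * (Nat.log 2 M : ℝ) := by exact_mod_cast h4
  have h6 : (Nat.log 2 M : ℝ) ≤ Real.logb 2 (M : ℝ) := by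
    have := Real.natLog_le_logb M 2
    exact_mod_cast this
  push_cast
  linarith
end

section
/- There is an absolute constant c > 0 such that the following holds. Let G be a 2D SLP with holes deriving a 2D string T over a finite alphabet Σ of size N×M with N·M ≥ 2. Then there exists a 2D SLP with holes G' deriving the same string T, with size |G'| ≤ c·|G| and depth at most c·log₂(N·M). -/
/-!
## 2D strings with a rectangular hole (contexts).
A context over `A` is a 2D string of outer size `oh × ow` from which a
rectangular hole of size `ph × pw` with top-left corner `(px, py)`
(0-indexed) has been removed.  `f i j` is `some` of the character at
row `i`, column `j` when `(i, j)` lies in the outer rectangle but not in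
the hole, and `none` otherwise; all operations below produce such
canonical representations. -/
structure Ctx2 (A : Type) where
  oh : ℕ
  ow : ℕ
  px : ℕ
  py : ℕ
  ph : ℕ
  pw : ℕ
  f : ℕ → ℕ → Option A

namespace Ctx2

variable {A : Type}

/-- `(i, j)` lies in the hole of the context `C`. -/
def inHole (C : Ctx2 A) (i j : ℕ) : Prop :=
  C.px ≤ i ∧ i < C.px + C.ph ∧ C.py ≤ j ∧ j < C.py + C.pw

instance (C : Ctx2 A) (i j : ℕ) : Decidable (C.inHole i j) := by
  unfold inHole; infer_instance

/-- Canonical constructor: pads with `none` outside the outer rectangle and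
inside the hole. -/
def mk' (oh ow px py ph pw : ℕ) (g : ℕ → ℕ → Option A) : Ctx2 A :=
  ⟨oh, ow, px, py, ph, pw, fun i j =>
    if i < oh ∧ j < ow ∧ ¬(px ≤ i ∧ i < px + ph ∧ py ≤ j ∧ j < py + pw)
    then g i j else none⟩

/-- The empty context. -/
def empty : Ctx2 A := ⟨0, 0, 0, 0, 0, 0, fun _ _ => none⟩

/-- Filling the hole of the context `C` with a 2D string `S` (meaningful when
the dimensions of `S` equal the dimensions of the hole of `C`). -/
def fill (C : Ctx2 A) (S : Str2 A) : Str2 A :=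
  Str2.mk' C.oh C.ow fun i j =>
    if C.inHole i j then S.f (i - C.px) (j - C.py) else C.f i j

/-- Substituting the context `D` into the hole of the context `C` (meaningful
when the outer dimensions of `D` equal the dimensions of the hole of `C`). -/
def comp (C D : Ctx2 A) : Ctx2 A :=
  mk' C.oh C.ow (C.px + D.px) (C.py + D.py) D.ph D.pw fun i j =>
    if C.inHole i j then D.f (i - C.px) (j - C.py) else C.f i j

/-- Horizontal concatenation (ground string on the left, context on the right). -/
def hcatSC (S : Str2 A) (C : Ctx2 A) : Ctx2 A :=
  mk' S.h (S.w + C.ow) C.px (S.w + C.py) C.ph C.pw fun i j =>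
    if j < S.w then S.f i j else C.f i (j - S.w)

/-- Horizontal concatenation (context on the left, ground string on the right). -/
def hcatCS (C : Ctx2 A) (S : Str2 A) : Ctx2 A :=
  mk' C.oh (C.ow + S.w) C.px C.py C.ph C.pw fun i j =>
    if j < C.ow then C.f i j else S.f i (j - C.ow)

/-- Vertical concatenation (ground string on top, context below). -/
def vcatSC (S : Str2 A) (C : Ctx2 A) : Ctx2 A :=
  mk' (S.h + C.oh) S.w (S.h + C.px) C.py C.ph C.pw fun i j =>
    if i < S.h then S.f i j else C.f (i - S.h) j

/-- Vertical concatenation (context on top, ground string below). -/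
def vcatCS (C : Ctx2 A) (S : Str2 A) : Ctx2 A :=
  mk' (C.oh + S.h) C.ow C.px C.py C.ph C.pw fun i j =>
    if i < C.oh then C.f i j else S.f (i - C.oh) j

/-- `S ⊞ *` : ground string with a bare hole of size `p × q` to its right
(meaningful when `p = S.h`). -/
def hcatSH (S : Str2 A) (p q : ℕ) : Ctx2 A :=
  mk' S.h (S.w + q) 0 S.w p q fun i j => if j < S.w then S.f i j else none

/-- `* ⊞ S` : bare hole of size `p × q` with a ground string to its right
(meaningful when `p = S.h`). -/
def hcatHS (p q : ℕ) (S : Str2 A) : Ctx2 A :=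
  mk' S.h (q + S.w) 0 0 p q fun i j => if q ≤ j then S.f i (j - q) else none

/-- `S ⊟ *` : ground string with a bare hole of size `p × q` below it
(meaningful when `q = S.w`). -/
def vcatSH (S : Str2 A) (p q : ℕ) : Ctx2 A :=
  mk' (S.h + p) S.w S.h 0 p q fun i j => if i < S.h then S.f i j else none

/-- `* ⊟ S` : bare hole of size `p × q` with a ground string below it
(meaningful when `q = S.w`). -/
def vcatHS (p q : ℕ) (S : Str2 A) : Ctx2 A :=
  mk' (p + S.h) S.w 0 0 p q fun i j => if p ≤ i then S.f (i - p) j else none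

end Ctx2

/-- The right-hand side of a production of a 2D SLP with holes (2D TSLP):
productions of ground nonterminals are a character, a concatenation of two
ground nonterminals, or a context applied to a ground nonterminal (`subGC`);
productions of context nonterminals are a concatenation of a ground
nonterminal and a context nonterminal (in either order and direction), a
concatenation of a ground nonterminal and a bare hole `*` of the indicated
dimensions (in either order and direction), or a composition of two context
nonterminals (`subCC`). -/
inductive RhsT (A V : Type) where
  | chr : A → RhsT A V
  | hcatGG : V → V → RhsT A V
  | vcatGG : V → V → RhsT A V
  | subGC : V → V → RhsT A V
  | hcatGC : V → V → RhsT A V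
  | hcatCG : V → V → RhsT A V
  | vcatGC : V → V → RhsT A V
  | vcatCG : V → V → RhsT A V
  | hcatGH : V → ℕ → ℕ → RhsT A V
  | hcatHG : ℕ → ℕ → V → RhsT A V
  | vcatGH : V → ℕ → ℕ → RhsT A V
  | vcatHG : ℕ → ℕ → V → RhsT A V
  | subCC : V → V → RhsT A V

namespace RhsT

/-- The nonterminals occurring on a right-hand side. -/
def occurs {A V : Type} : RhsT A V → List V
  | .chr _ => []
  | .hcatGG Y Z => [Y, Z]
  | .vcatGG Y Z => [Y, Z]
  | .subGC Y Z => [Y, Z]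
  | .hcatGC Y Z => [Y, Z]
  | .hcatCG Y Z => [Y, Z]
  | .vcatGC Y Z => [Y, Z]
  | .vcatCG Y Z => [Y, Z]
  | .hcatGH Y _ _ => [Y]
  | .hcatHG _ _ Y => [Y]
  | .vcatGH Y _ _ => [Y]
  | .vcatHG _ _ Y => [Y]
  | .subCC Y Z => [Y, Z]

end RhsT

/-- A 2D SLP with holes (2D TSLP) over the alphabet `A`: a finite set `V` of
nonterminals partitioned by `isCtx` into ground nonterminals (deriving 2D
strings) and context nonterminals (deriving 2D strings with a rectangular
hole), a ground starting nonterminal, and a production map `rhs`.  Acyclicity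
is witnessed by the function `rank`. -/
structure TSLP2 (A : Type) where
  V : Type
  fintypeV : Fintype V
  isCtx : V → Bool
  start : V
  rhs : V → RhsT A V
  rank : V → ℕ
  rank_lt : ∀ X : V, ∀ Y ∈ (rhs X).occurs, rank Y < rank X

namespace TSLP2

variable {A : Type}

/-- Extract a ground 2D string from an evaluation result. -/
def getG : Str2 A ⊕ Ctx2 A → Str2 A
  | .inl S => S
  | .inr _ => Str2.empty

/-- Extract a context from an evaluation result. -/
def getC : Str2 A ⊕ Ctx2 A → Ctx2 A
  | .inl _ => Ctx2.empty
  | .inr C => C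

/-- Fuel-based evaluation of expansions. -/
def expAux (G : TSLP2 A) : ℕ → G.V → Str2 A ⊕ Ctx2 A
  | 0, _ => Sum.inl Str2.empty
  | n + 1, X =>
    match G.rhs X with
    | .chr a => Sum.inl (Str2.single a)
    | .hcatGG Y Z => Sum.inl ((getG (G.expAux n Y)).hcat (getG (G.expAux n Z)))
    | .vcatGG Y Z => Sum.inl ((getG (G.expAux n Y)).vcat (getG (G.expAux n Z)))
    | .subGC Y Z => Sum.inl ((getC (G.expAux n Y)).fill (getG (G.expAux n Z)))
    | .hcatGC Y Z => Sum.inr (Ctx2.hcatSC (getG (G.expAux n Y)) (getC (G.expAux n Z)))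
    | .hcatCG Y Z => Sum.inr (Ctx2.hcatCS (getC (G.expAux n Y)) (getG (G.expAux n Z)))
    | .vcatGC Y Z => Sum.inr (Ctx2.vcatSC (getG (G.expAux n Y)) (getC (G.expAux n Z)))
    | .vcatCG Y Z => Sum.inr (Ctx2.vcatCS (getC (G.expAux n Y)) (getG (G.expAux n Z)))
    | .hcatGH Y p q => Sum.inr (Ctx2.hcatSH (getG (G.expAux n Y)) p q)
    | .hcatHG p q Y => Sum.inr (Ctx2.hcatHS p q (getG (G.expAux n Y)))
    | .vcatGH Y p q => Sum.inr (Ctx2.vcatSH (getG (G.expAux n Y)) p q)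
    | .vcatHG p q Y => Sum.inr (Ctx2.vcatHS p q (getG (G.expAux n Y)))
    | .subCC Y Z => Sum.inr ((getC (G.expAux n Y)).comp (getC (G.expAux n Z)))

/-- The expansion of a ground nonterminal. -/
def expG (G : TSLP2 A) (X : G.V) : Str2 A := getG (G.expAux (G.rank X + 1) X)

/-- The expansion of a context nonterminal. -/
def expC (G : TSLP2 A) (X : G.V) : Ctx2 A := getC (G.expAux (G.rank X + 1) X)

/-- The 2D string derived by the TSLP. -/
def exp (G : TSLP2 A) : Str2 A := G.expG G.start

/-- Fuel-based computation of the depth of the derivation tree below a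
nonterminal. -/
def depthAux (G : TSLP2 A) : ℕ → G.V → ℕ
  | 0, _ => 0
  | n + 1, X =>
    match G.rhs X with
    | .chr _ => 1
    | r => 1 + ((r.occurs.map fun Y => G.depthAux n Y).foldr max 0)

/-- The depth of the TSLP: the depth of its derivation tree. -/
def depth (G : TSLP2 A) : ℕ := G.depthAux (G.rank G.start + 1) G.start

/-- The size of the TSLP: the total number of symbols on the right-hand sides
of all productions. -/
def size (G : TSLP2 A) : ℕ :=
  letI := G.fintypeV
  ∑ X : G.V, (match G.rhs X with
    | .chr _ => 1
    | _ => 2)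

/-- The number of nonterminals. -/
def numNT (G : TSLP2 A) : ℕ :=
  letI := G.fintypeV
  Fintype.card G.V

/-- Well-formedness of a TSLP: the starting nonterminal is ground, each
production has the right shape for the sort (ground/context) of its left-hand
side and arguments, and all dimensions match. -/
def WF (G : TSLP2 A) : Prop :=
  G.isCtx G.start = false ∧
  ∀ X : G.V,
    match G.rhs X with
    | .chr _ => G.isCtx X = false
    | .hcatGG Y Z => G.isCtx X = false ∧ G.isCtx Y = false ∧ G.isCtx Z = false ∧
        (G.expG Y).h = (G.expG Z).h
    | .vcatGG Y Z => G.isCtx X = false ∧ G.isCtx Y = false ∧ G.isCtx Z = false ∧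
        (G.expG Y).w = (G.expG Z).w
    | .subGC Y Z => G.isCtx X = false ∧ G.isCtx Y = true ∧ G.isCtx Z = false ∧
        (G.expC Y).ph = (G.expG Z).h ∧ (G.expC Y).pw = (G.expG Z).w
    | .hcatGC Y Z => G.isCtx X = true ∧ G.isCtx Y = false ∧ G.isCtx Z = true ∧
        (G.expG Y).h = (G.expC Z).oh
    | .hcatCG Y Z => G.isCtx X = true ∧ G.isCtx Y = true ∧ G.isCtx Z = false ∧
        (G.expC Y).oh = (G.expG Z).h
    | .vcatGC Y Z => G.isCtx X = true ∧ G.isCtx Y = false ∧ G.isCtx Z = true ∧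
        (G.expG Y).w = (G.expC Z).ow
    | .vcatCG Y Z => G.isCtx X = true ∧ G.isCtx Y = true ∧ G.isCtx Z = false ∧
        (G.expC Y).ow = (G.expG Z).w
    | .hcatGH Y p _ => G.isCtx X = true ∧ G.isCtx Y = false ∧ p = (G.expG Y).h
    | .hcatHG p _ Y => G.isCtx X = true ∧ G.isCtx Y = false ∧ p = (G.expG Y).h
    | .vcatGH Y _ q => G.isCtx X = true ∧ G.isCtx Y = false ∧ q = (G.expG Y).w
    | .vcatHG _ q Y => G.isCtx X = true ∧ G.isCtx Y = false ∧ q = (G.expG Y).w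
    | .subCC Y Z => G.isCtx X = true ∧ G.isCtx Y = true ∧ G.isCtx Z = true ∧
        (G.expC Y).ph = (G.expC Z).oh ∧ (G.expC Y).pw = (G.expC Z).ow

end TSLP2

/-! ## Proof: abstract values and programs -/
namespace Bal

open Classical

variable {A : Type}

/-- Contexts viewed as partial functions on 2D strings. -/
abbrev Fn (A : Type) := Str2 A → Option (Str2 A)

def fmul (C D : Fn A) : Fn A := fun z => (D z).bind C
def fone : Fn A := fun z => some z

theorem fmul_assoc (C D E : Fn A) : fmul (fmul C D) E = fmul C (fmul D E) := by
  funext z; simp only [fmul]; cases E z <;> simp [fmul]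

theorem fone_mul (C : Fn A) : fmul fone C = C := by
  funext z; simp only [fmul]; cases C z <;> simp [fone]

theorem fmul_one (C : Fn A) : fmul C fone = C := by
  funext z; simp [fmul, fone]

def NZ (C : Fn A) : Prop := ∃ z y, C z = some y

theorem NZ.left {C D : Fn A} (h : NZ (fmul C D)) : NZ C := by
  obtain ⟨z, y, h⟩ := h
  simp only [fmul, Option.bind_eq_some_iff] at h
  obtain ⟨a, _, h⟩ := h
  exact ⟨a, y, h⟩

theorem NZ.right {C D : Fn A} (h : NZ (fmul C D)) : NZ D := by
  obtain ⟨z, y, h⟩ := h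
  simp only [fmul, Option.bind_eq_some_iff] at h
  obtain ⟨a, h, _⟩ := h
  exact ⟨z, a, h⟩

theorem fmul_some {C D : Fn A} {z y x : Str2 A} (h1 : D z = some y) (h2 : C y = some x) :
    fmul C D z = some x := by simp [fmul, h1, h2]

theorem fmul_some_iff {C D : Fn A} {z x : Str2 A} :
    fmul C D z = some x ↔ ∃ y, D z = some y ∧ C y = some x := by
  simp [fmul, Option.bind_eq_some_iff]

inductive Kd where
  | hl | hr | vl | vr

namespace Kd
def flip : Kd → Kd
  | hl => hr | hr => hl | vl => vr | vr => vl
def op : Kd → Str2 A → Str2 A → Str2 A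
  | hl, y, z => y.hcat z
  | hr, y, z => z.hcat y
  | vl, y, z => y.vcat z
  | vr, y, z => z.vcat y
def compat : Kd → Str2 A → Str2 A → Prop
  | hl, y, z => y.h = z.h
  | hr, y, z => y.h = z.h
  | vl, y, z => y.w = z.w
  | vr, y, z => y.w = z.w
end Kd

noncomputable def wr (k : Kd) (y : Str2 A) (p q : ℕ) : Fn A := fun z =>
  if k.compat y z ∧ z.h = p ∧ z.w = q then some (k.op y z) else none

theorem wr_some_iff {k : Kd} {y z s : Str2 A} {p q : ℕ} :
    wr k y p q z = some s ↔ k.compat y z ∧ z.h = p ∧ z.w = q ∧ k.op y z = s := by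
  unfold wr; split_ifs with h
  · simp; tauto
  · simp; tauto

theorem wr_flip {k : Kd} {y z s : Str2 A} {p q : ℕ} (h : wr k y p q z = some s) :
    wr k.flip z y.h y.w y = some s := by
  rw [wr_some_iff] at *
  cases k <;> simp_all [Kd.flip, Kd.op, Kd.compat]

abbrev Val (A : Type) := Str2 A ⊕ Fn A

inductive Der (Q : Val A → Prop) : Val A → Prop
  | copy {x} : Q x → Der Q x
  | chr (a : A) : Der Q (Sum.inl (Str2.single a))
  | fill {C : Fn A} {z y : Str2 A} : Q (Sum.inr C) → Q (Sum.inl z) → C z = some y →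
      Der Q (Sum.inl y)
  | comp {C D : Fn A} : Q (Sum.inr C) → Q (Sum.inr D) → NZ (fmul C D) → Der Q (Sum.inr (fmul C D))
  | wrap {k : Kd} {y : Str2 A} {p q : ℕ} : Q (Sum.inl y) → NZ (wr k y p q) →
      Der Q (Sum.inr (wr k y p q))

theorem Der.mono {Q Q' : Val A → Prop} (h : ∀ x, Q x → Q' x) {x : Val A} (d : Der Q x) :
    Der Q' x := by
  cases d with
  | copy h1 => exact .copy (h _ h1)
  | chr a => exact .chr a
  | fill h1 h2 h3 => exact .fill (h _ h1) (h _ h2) h3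
  | comp h1 h2 h3 => exact .comp (h _ h1) (h _ h2) h3
  | wrap h1 h2 => exact .wrap (h _ h1) h2

/-- A program: finite set of values with ranks. -/
abbrev Pg (A : Type) := Finset (Val A × ℕ)

def Av (S : Pg A) (x : Val A) (r : ℕ) : Prop := ∃ r', r' ≤ r ∧ (x, r') ∈ S
def Dv (S : Pg A) (x : Val A) (r : ℕ) : Prop := Der (fun y => ∃ r', r' < r ∧ (y, r') ∈ S) x

def Ext (S S' : Pg A) (n : ℕ) : Prop :=
  S ⊆ S' ∧ S'.card ≤ S.card + n ∧ ∀ e ∈ S', e ∉ S → Dv S' e.1 e.2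

theorem Av.mono {S S' : Pg A} {x : Val A} {r r' : ℕ} (h : Av S x r) (hS : S ⊆ S') (hr : r ≤ r') :
    Av S' x r' := by
  obtain ⟨a, h1, h2⟩ := h; exact ⟨a, h1.trans hr, hS h2⟩

theorem Dv.mono {S S' : Pg A} {x : Val A} {r r' : ℕ} (h : Dv S x r) (hS : S ⊆ S') (hr : r ≤ r') :
    Dv S' x r' := by
  refine Der.mono ?_ h
  rintro y ⟨a, h1, h2⟩; exact ⟨a, h1.trans_le hr, hS h2⟩

theorem Ext.refl (S : Pg A) : Ext S S 0 := ⟨subset_rfl, le_rfl, fun _ h h' => absurd h h'⟩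

theorem Ext.trans {S S' S'' : Pg A} {n m : ℕ} (h : Ext S S' n) (h' : Ext S' S'' m) :
    Ext S S'' (n + m) := by
  refine ⟨h.1.trans h'.1, by have := h.2.1; have := h'.2.1; omega, fun e he hn => ?_⟩
  by_cases h1 : e ∈ S'
  · exact (h.2.2 e h1 hn).mono h'.1 le_rfl
  · exact h'.2.2 e he h1

theorem Ext.weaken {S S' : Pg A} {n m : ℕ} (h : Ext S S' n) (hn : n ≤ m) : Ext S S' m :=
  ⟨h.1, by have := h.2.1; omega, h.2.2⟩

theorem Dv.ext {S : Pg A} {x : Val A} {r : ℕ} (h : Dv S x r) :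
    ∃ S', Ext S S' 1 ∧ Av S' x r := by
  refine ⟨insert (x, r) S, ⟨Finset.subset_insert _ _, Finset.card_insert_le _ _, ?_⟩, r, le_rfl,
    Finset.mem_insert_self _ _⟩
  intro e he hn
  rcases Finset.mem_insert.1 he with rfl | h1
  · exact h.mono (Finset.subset_insert _ _) le_rfl
  · exact absurd h1 hn

theorem Av.lt {S : Pg A} {x : Val A} {r : ℕ} (h : Av S x r) : ∃ r', r' < r + 1 ∧ (x, r') ∈ S := by
  obtain ⟨a, h1, h2⟩ := h; exact ⟨a, by omega, h2⟩

theorem Av.dv {S : Pg A} {x : Val A} {r : ℕ} (h : Av S x r) : Dv S x (r + 1) := .copy h.lt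

def QO (S : Pg A) (r : ℕ) (C : Fn A) : Prop := C = fone ∨ Av S (Sum.inr C) r

theorem QO.mono {S S' : Pg A} {C : Fn A} {r r' : ℕ} (h : QO S r C) (hS : S ⊆ S') (hr : r ≤ r') :
    QO S' r' C := h.imp id fun h => h.mono hS hr

theorem QO.one {S : Pg A} {r : ℕ} : QO S r fone := .inl rfl

theorem QO.mul {S : Pg A} {C D : Fn A} {r : ℕ} (hC : QO S r C) (hD : QO S r D)
    (hn : NZ (fmul C D)) : ∃ S', Ext S S' 1 ∧ QO S' (r + 1) (fmul C D) := by
  rcases hC with rfl | hC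
  · exact ⟨S, (Ext.refl S).weaken (by omega), by
      rw [fone_mul]; exact hD.mono subset_rfl (by omega)⟩
  rcases hD with rfl | hD
  · exact ⟨S, (Ext.refl S).weaken (by omega), by
      rw [fmul_one]; exact .inr (hC.mono subset_rfl (by omega))⟩
  have : Dv S (Sum.inr (fmul C D)) (r + 1) := .comp hC.lt hD.lt hn
  obtain ⟨S', h1, h2⟩ := this.ext
  exact ⟨S', h1, .inr h2⟩

theorem QO.dvapp {S : Pg A} {C : Fn A} {z y : Str2 A} {r : ℕ} (hC : QO S r C)
    (hz : Av S (Sum.inl z) r) (h : C z = some y) : Dv S (Sum.inl y) (r + 1) := by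
  rcases hC with rfl | hC
  · simp only [fone, Option.some.injEq] at h; subst h; exact hz.dv
  · exact .fill hC.lt hz.lt h

theorem QO.app {S : Pg A} {C : Fn A} {z y : Str2 A} {r : ℕ} (hC : QO S r C)
    (hz : Av S (Sum.inl z) r) (h : C z = some y) : ∃ S', Ext S S' 1 ∧ Av S' (Sum.inl y) (r + 1) :=
  (hC.dvapp hz h).ext

theorem QO.wrap {S : Pg A} {k : Kd} {y : Str2 A} {p q r : ℕ} 
    (hy : Av S (Sum.inl y) r) (h : NZ (wr k y p q)) :
    ∃ S', Ext S S' 1 ∧ QO S' (r + 1) (wr k y p q) := by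
  have : Dv S (Sum.inr (wr k y p q)) (r + 1) := .wrap hy.lt h
  obtain ⟨S', h1, h2⟩ := this.ext
  exact ⟨S', h1, .inr h2⟩

/-- `Rep S r a b`: a linear function, with parameters available in `S` at rank `r`, maps `a` to `b`. -/
inductive Rep (S : Pg A) (r : ℕ) : Val A → Val A → Prop
  | gg {C : Fn A} {z y : Str2 A} : QO S r C → C z = some y → Rep S r (Sum.inl z) (Sum.inl y)
  | cg {C f : Fn A} {t s y : Str2 A} : QO S r C → Av S (Sum.inl t) r → f t = some s → C s = some y →
      Rep S r (Sum.inr f) (Sum.inl y)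
  | cc {C f D : Fn A} : QO S r C → QO S r D → NZ (fmul C (fmul f D)) →
      Rep S r (Sum.inr f) (Sum.inr (fmul C (fmul f D)))
  | gc {C D E : Fn A} {k : Kd} {p q : ℕ} {z y : Str2 A} : QO S r C → QO S r D → QO S r E →
      D z = some y → NZ (fmul C (fmul (wr k y p q) E)) →
      Rep S r (Sum.inl z) (Sum.inr (fmul C (fmul (wr k y p q) E)))
  | ccw {C D E f : Fn A} {k : Kd} {p q : ℕ} {t s y : Str2 A} : QO S r C → QO S r D → QO S r E →
      Av S (Sum.inl t) r → f t = some s →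
      D s = some y → NZ (fmul C (fmul (wr k y p q) E)) →
      Rep S r (Sum.inr f) (Sum.inr (fmul C (fmul (wr k y p q) E)))

theorem Rep.mono {S S' : Pg A} {a b : Val A} {r r' : ℕ} (h : Rep S r a b) (hS : S ⊆ S')
    (hr : r ≤ r') : Rep S' r' a b := by
  cases h with
  | gg h1 h2 => exact .gg (h1.mono hS hr) h2
  | cg h1 h2 h3 h4 => exact .cg (h1.mono hS hr) (h2.mono hS hr) h3 h4
  | cc h1 h2 h3 => exact .cc (h1.mono hS hr) (h2.mono hS hr) h3
  | gc h1 h2 h3 h4 h5 => exact .gc (h1.mono hS hr) (h2.mono hS hr) (h3.mono hS hr) h4 h5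
  | ccw h1 h2 h3 h4 h5 h6 h7 =>
    exact .ccw (h1.mono hS hr) (h2.mono hS hr) (h3.mono hS hr) (h4.mono hS hr) h5 h6 h7

/-- Triple product. -/
theorem QO.mul3 {S : Pg A} {C D E : Fn A} {r : ℕ} (hC : QO S r C) (hD : QO S r D) (hE : QO S r E)
    (hn : NZ (fmul C (fmul D E))) :
    ∃ S', Ext S S' 2 ∧ QO S' (r + 2) (fmul C (fmul D E)) := by
  obtain ⟨S1, e1, q1⟩ := hD.mul hE hn.right
  obtain ⟨S2, e2, q2⟩ := (hC.mono e1.1 (Nat.le_succ r)).mul q1 hn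
  exact ⟨S2, e1.trans e2, q2⟩

/-- Applying a wrap-shaped function with a known argument `t` for its hole yields a context. -/
theorem flip_ctx {S : Pg A} {B C D E : Fn A} {k : Kd} {p q r : ℕ} {z y t s x : Str2 A}
    (hB : QO S r B) (hC : QO S r C) (hD : QO S r D) (hE : QO S r E) (ht : Av S (Sum.inl t) r)
    (hy : D z = some y) (hs : fmul C (fmul (wr k y p q) E) t = some s) (hx : B s = some x) :
    ∃ S' M, Ext S S' 5 ∧ QO S' (r + 4) M ∧ M z = some x := by
  obtain ⟨u, hu, hs⟩ := fmul_some_iff.1 hs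
  obtain ⟨v, hv, hu⟩ := fmul_some_iff.1 hu
  have hw := wr_flip hu
  obtain ⟨S1, e1, a1⟩ := hE.app ht hv
  obtain ⟨S2, e2, a2⟩ := QO.wrap a1 ⟨_, _, hw⟩
  have hBC : fmul B C u = some x := fmul_some hs hx
  obtain ⟨S3, e3, a3⟩ := (hB.mono (e1.1.trans e2.1) (r' := r) le_rfl).mul
    (hC.mono (e1.1.trans e2.1) le_rfl) ⟨_, _, hBC⟩
  have hh := (e1.1.trans e2.1).trans e3.1
  have hM : fmul (fmul B C) (fmul (wr k.flip v y.h y.w) D) z = some x :=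
    fmul_some (fmul_some hy hw) hBC
  obtain ⟨S4, e4, a4⟩ := (a3.mono subset_rfl (show r + 1 ≤ r + 2 by omega)).mul3
    (a2.mono e3.1 le_rfl) (hD.mono hh (show r ≤ r + 2 by omega)) ⟨_, _, hM⟩
  exact ⟨S4, _, ((e1.trans e2).trans e3).trans e4, a4, hM⟩

theorem Rep.comp {S : Pg A} {a b c : Val A} {r : ℕ} (h1 : Rep S r b c) (h2 : Rep S r a b) :
    ∃ S', Ext S S' 5 ∧ Rep S' (r + 5) a c := by
  cases h1 with
  | gg qC hC =>
    cases h2 with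
    | gg qC' hC' =>
      obtain ⟨S1, e1, q1⟩ := qC.mul qC' ⟨_, _, fmul_some hC' hC⟩
      exact ⟨S1, e1.weaken (by omega), .gg (q1.mono subset_rfl (by omega)) (fmul_some hC' hC)⟩
    | cg qC' ht hs hC' =>
      obtain ⟨S1, e1, q1⟩ := qC.mul qC' ⟨_, _, fmul_some hC' hC⟩
      exact ⟨S1, e1.weaken (by omega), .cg (q1.mono subset_rfl (by omega))
        (ht.mono e1.1 (by omega)) hs (fmul_some hC' hC)⟩
  | cg qC ht hs hC =>
    cases h2 with
    | cc qC' qD' hn =>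
      obtain ⟨u, hu, hs⟩ := fmul_some_iff.1 hs
      obtain ⟨v, hv, hu⟩ := fmul_some_iff.1 hu
      obtain ⟨S1, e1, q1⟩ := qC.mul qC' ⟨_, _, fmul_some hs hC⟩
      obtain ⟨S2, e2, q2⟩ := (qD'.mono e1.1 le_rfl).app (ht.mono e1.1 le_rfl) hv
      exact ⟨S2, (e1.trans e2).weaken (by omega), .cg (q1.mono e2.1 (by omega))
        (q2.mono subset_rfl (by omega)) hu (fmul_some hs hC)⟩
    | gc qC' qD' qE' hD' hn =>
      obtain ⟨S1, M, e1, q1, hM⟩ := flip_ctx qC qC' qD' qE' ht hD' hs hC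
      exact ⟨S1, e1, .gg (q1.mono subset_rfl (by omega)) hM⟩
    | ccw qC' qD' qE' ht' hs' hD' hn =>
      obtain ⟨S1, M, e1, q1, hM⟩ := flip_ctx qC qC' qD' qE' ht hD' hs hC
      exact ⟨S1, e1, .cg (q1.mono subset_rfl (by omega)) (ht'.mono e1.1 (by omega)) hs' hM⟩
  | @cc C _ D qC qD hn =>
    cases h2 with
    | @cc C' f D' qC' qD' hn' =>
      have e : fmul C (fmul (fmul C' (fmul f D')) D) = fmul (fmul C C') (fmul f (fmul D' D)) := by
        simp only [fmul_assoc]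
      rw [e] at hn ⊢
      obtain ⟨S1, e1, q1⟩ := qC.mul qC' hn.left
      obtain ⟨S2, e2, q2⟩ := (qD'.mono e1.1 le_rfl).mul (qD.mono e1.1 le_rfl) hn.right.right
      exact ⟨S2, (e1.trans e2).weaken (by omega), .cc (q1.mono e2.1 (by omega))
        (q2.mono subset_rfl (by omega)) hn⟩
    | @gc C' D' E' k p q z y qC' qD' qE' hD' hn' =>
      have e : fmul C (fmul (fmul C' (fmul (wr k y p q) E')) D)
        = fmul (fmul C C') (fmul (wr k y p q) (fmul E' D)) := by
        simp only [fmul_assoc]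
      rw [e] at hn ⊢
      obtain ⟨S1, e1, q1⟩ := qC.mul qC' hn.left
      obtain ⟨S2, e2, q2⟩ := (qE'.mono e1.1 le_rfl).mul (qD.mono e1.1 le_rfl) hn.right.right
      exact ⟨S2, (e1.trans e2).weaken (by omega), .gc (q1.mono e2.1 (by omega))
        (qD'.mono (e1.1.trans e2.1) (by omega)) (q2.mono subset_rfl (by omega)) hD' hn⟩
    | @ccw C' D' E' f k p q t s y qC' qD' qE' ht' hs' hD' hn' =>
      have e : fmul C (fmul (fmul C' (fmul (wr k y p q) E')) D)
        = fmul (fmul C C') (fmul (wr k y p q) (fmul E' D)) := by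
        simp only [fmul_assoc]
      rw [e] at hn ⊢
      obtain ⟨S1, e1, q1⟩ := qC.mul qC' hn.left
      obtain ⟨S2, e2, q2⟩ := (qE'.mono e1.1 le_rfl).mul (qD.mono e1.1 le_rfl) hn.right.right
      exact ⟨S2, (e1.trans e2).weaken (by omega), .ccw (q1.mono e2.1 (by omega))
        (qD'.mono (e1.1.trans e2.1) (by omega)) (q2.mono subset_rfl (by omega))
        (ht'.mono (e1.1.trans e2.1) (by omega)) hs' hD' hn⟩
  | gc qC qD qE hD hn =>
    cases h2 with
    | gg qC' hC' =>
      obtain ⟨S1, e1, q1⟩ := qD.mul qC' ⟨_, _, fmul_some hC' hD⟩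
      exact ⟨S1, e1.weaken (by omega), .gc (qC.mono e1.1 (by omega))
        (q1.mono subset_rfl (by omega)) (qE.mono e1.1 (by omega)) (fmul_some hC' hD) hn⟩
    | cg qC' ht hs hC' =>
      obtain ⟨S1, e1, q1⟩ := qD.mul qC' ⟨_, _, fmul_some hC' hD⟩
      exact ⟨S1, e1.weaken (by omega), .ccw (qC.mono e1.1 (by omega))
        (q1.mono subset_rfl (by omega)) (qE.mono e1.1 (by omega)) (ht.mono e1.1 (by omega)) hs
        (fmul_some hC' hD) hn⟩
  | ccw qC qD qE ht hs hD hn =>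
    cases h2 with
    | cc qC' qD' hn' =>
      obtain ⟨u, hu, hs⟩ := fmul_some_iff.1 hs
      obtain ⟨v, hv, hu⟩ := fmul_some_iff.1 hu
      obtain ⟨S1, e1, q1⟩ := qD.mul qC' ⟨_, _, fmul_some hs hD⟩
      obtain ⟨S2, e2, q2⟩ := (qD'.mono e1.1 le_rfl).app (ht.mono e1.1 le_rfl) hv
      have ee := e1.1.trans e2.1
      exact ⟨S2, (e1.trans e2).weaken (by omega), .ccw (qC.mono ee (by omega))
        (q1.mono e2.1 (by omega)) (qE.mono ee (by omega))
        (q2.mono subset_rfl (by omega)) hu (fmul_some hs hD) hn⟩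
    | gc qC' qD' qE' hD' hn' =>
      obtain ⟨S1, M, e1, q1, hM⟩ := flip_ctx qD qC' qD' qE' ht hD' hs hD
      exact ⟨S1, e1, .gc (qC.mono e1.1 (by omega)) (q1.mono subset_rfl (by omega))
        (qE.mono e1.1 (by omega)) hM hn⟩
    | ccw qC' qD' qE' ht' hs' hD' hn' =>
      obtain ⟨S1, M, e1, q1, hM⟩ := flip_ctx qD qC' qD' qE' ht hD' hs hD
      exact ⟨S1, e1, .ccw (qC.mono e1.1 (by omega)) (q1.mono subset_rfl (by omega))
        (qE.mono e1.1 (by omega)) (ht'.mono e1.1 (by omega)) hs' hM hn⟩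

theorem Av.mulr {S : Pg A} {C D : Fn A} {r : ℕ} (hC : Av S (Sum.inr C) r) (hD : QO S r D)
    (hn : NZ (fmul C D)) : ∃ S', Ext S S' 1 ∧ Av S' (Sum.inr (fmul C D)) (r + 1) := by
  rcases hD with rfl | hD
  · rw [fmul_one]; exact hC.dv.ext
  · exact Dv.ext (Der.comp hC.lt hD.lt hn : Dv S (Sum.inr (fmul C D)) (r + 1))

theorem Av.mull {S : Pg A} {C D : Fn A} {r : ℕ} (hC : QO S r C) (hD : Av S (Sum.inr D) r)
    (hn : NZ (fmul C D)) : ∃ S', Ext S S' 1 ∧ Av S' (Sum.inr (fmul C D)) (r + 1) := by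
  rcases hC with rfl | hC
  · rw [fone_mul]; exact hD.dv.ext
  · exact Dv.ext (Der.comp hC.lt hD.lt hn : Dv S (Sum.inr (fmul C D)) (r + 1))

theorem Av.mulmid {S : Pg A} {C D E : Fn A} {r : ℕ} (hC : QO S r C) (hD : Av S (Sum.inr D) r)
    (hE : QO S r E) (hn : NZ (fmul C (fmul D E))) :
    ∃ S', Ext S S' 2 ∧ Av S' (Sum.inr (fmul C (fmul D E))) (r + 2) := by
  obtain ⟨S1, e1, q1⟩ := hD.mulr hE hn.right
  obtain ⟨S2, e2, q2⟩ := Av.mull (hC.mono e1.1 (Nat.le_succ r)) q1 hn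
  exact ⟨S2, e1.trans e2, q2⟩

theorem Av.wrap {S : Pg A} {k : Kd} {y : Str2 A} {p q r : ℕ}
    (hy : Av S (Sum.inl y) r) (h : NZ (wr k y p q)) :
    ∃ S', Ext S S' 1 ∧ Av S' (Sum.inr (wr k y p q)) (r + 1) :=
  Dv.ext (Der.wrap hy.lt h : Dv S (Sum.inr (wr k y p q)) (r + 1))

/-- Applying a represented function to an available value. -/
theorem Rep.apply {S : Pg A} {a b : Val A} {r : ℕ} (h : Rep S r a b) (ha : Av S a r) :
    ∃ S', Ext S S' 5 ∧ Dv S' b (r + 6) := by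
  have fin : ∀ (S' : Pg A) (x : Val A) (n : ℕ), Ext S S' n → n ≤ 5 → Av S' x (r + 5) →
      ∃ S', Ext S S' 5 ∧ Dv S' x (r + 6) := fun S' x n e hn h => ⟨S', e.weaken hn, h.dv⟩
  have wrapc : ∀ (S0 : Pg A) (n : ℕ) (C E : Fn A) (k : Kd) (p q : ℕ) (y : Str2 A), Ext S S0 n →
      n ≤ 2 → QO S r C → QO S r E → Av S0 (Sum.inl y) (r + 2) →
      NZ (fmul C (fmul (wr k y p q) E)) →
      ∃ S', Ext S S' 5 ∧ Dv S' (Sum.inr (fmul C (fmul (wr k y p q) E))) (r + 6) := by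
    intro S0 n C E k p q y e hn qC qE hy hnz
    obtain ⟨S2, e2, q2⟩ := hy.wrap hnz.right.left
    have ee := e.1.trans e2.1
    obtain ⟨S3, e3, q3⟩ := Av.mulmid (qC.mono ee (show r ≤ r + 3 by omega)) q2
      (qE.mono ee (show r ≤ r + 3 by omega)) hnz
    exact fin S3 _ _ ((e.trans e2).trans e3) (by omega) (q3.mono subset_rfl (by omega))
  cases h with
  | gg qC hC =>
    obtain ⟨S1, e1, q1⟩ := qC.app ha hC
    exact fin S1 _ _ e1 (by omega) (q1.mono subset_rfl (by omega))
  | cg qC ht hs hC =>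
    obtain ⟨S1, e1, q1⟩ := QO.app (.inr ha) ht hs
    obtain ⟨S2, e2, q2⟩ := (qC.mono e1.1 (Nat.le_succ r)).app q1 hC
    exact fin S2 _ _ (e1.trans e2) (by omega) (q2.mono subset_rfl (by omega))
  | cc qC qD hn =>
    obtain ⟨S2, e2, q2⟩ := Av.mulmid qC ha qD hn
    exact fin S2 _ _ e2 (by omega) (q2.mono subset_rfl (by omega))
  | gc qC qD qE hD hn =>
    obtain ⟨S1, e1, q1⟩ := qD.app ha hD
    exact wrapc S1 _ _ _ _ _ _ _ e1 (by omega) qC qE (q1.mono subset_rfl (by omega)) hn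
  | ccw qC qD qE ht hs hD hn =>
    obtain ⟨S1, e1, q1⟩ := QO.app (.inr ha) ht hs
    obtain ⟨S2, e2, q2⟩ := (qD.mono e1.1 (Nat.le_succ r)).app q1 hD
    exact wrapc S2 _ _ _ _ _ _ _ (e1.trans e2) (by omega) qC qE q2 hn

end Bal

namespace Bal

/-! ## Weighted binary trees -/

inductive BT (ι : Type) where
  | leaf : ι → BT ι
  | node : BT ι → BT ι → BT ι

namespace BT
variable {ι : Type}

def toList : BT ι → List ι
  | leaf i => [i]
  | node l r => l.toList ++ r.toList

def nodes : BT ι → ℕ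
  | leaf _ => 1
  | node l r => l.nodes + r.nodes + 1

theorem nodes_eq (T : BT ι) : T.nodes + 1 = 2 * T.toList.length := by
  induction T with
  | leaf i => simp [nodes, toList]
  | node l r hl hr => simp [nodes, toList]; omega

def AllD : (ℕ → ι → Prop) → BT ι → Prop
  | P, leaf i => P 0 i
  | P, node l r => AllD (fun d => P (d + 1)) l ∧ AllD (fun d => P (d + 1)) r

theorem AllD.mono {T : BT ι} : ∀ {P Q : ℕ → ι → Prop}, (∀ d, ∀ i ∈ T.toList, P d i → Q d i) →
    AllD P T → AllD Q T := by
  induction T with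
  | leaf i => intro P Q h hp; exact h 0 i (by simp [toList]) hp
  | node l r hl hr =>
    intro P Q h hp
    exact ⟨hl (fun d i hi => h (d + 1) i (by simp [toList, hi])) hp.1,
      hr (fun d i hi => h (d + 1) i (by simp [toList, hi])) hp.2⟩

theorem AllD.ex {T : BT ι} : ∀ {P : ℕ → ι → Prop}, AllD P T → ∃ d i, P d i := by
  induction T with
  | leaf i => intro P h; exact ⟨0, i, h⟩
  | node l r hl hr => intro P h; obtain ⟨d, i, h⟩ := hl h.1; exact ⟨d + 1, i, h⟩

theorem AllD.forall {T : BT ι} : ∀ {P : ℕ → ι → Prop}, AllD P T → ∀ i ∈ T.toList, ∃ d, P d i := by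
  induction T with
  | leaf i => intro P h j hj; simp [toList] at hj; subst hj; exact ⟨0, h⟩
  | node l r hl hr =>
    intro P h j hj
    simp only [toList, List.mem_append] at hj
    rcases hj with hj | hj
    · obtain ⟨d, h⟩ := hl h.1 j hj; exact ⟨d + 1, h⟩
    · obtain ⟨d, h⟩ := hr h.2 j hj; exact ⟨d + 1, h⟩

theorem AllD.and {T : BT ι} : ∀ {P Q : ℕ → ι → Prop}, AllD P T → AllD Q T →
    AllD (fun d i => P d i ∧ Q d i) T := by
  induction T with
  | leaf i => intro P Q h h'; exact ⟨h, h'⟩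
  | node l r hl hr => intro P Q h h'; exact ⟨hl h.1 h'.1, hr h.2 h'.2⟩

theorem split_aux (a : ι → ℕ) : ∀ (l : List ι) (o S : ℕ), l ≠ [] → 2 * o ≤ S →
    S ≤ 2 * (o + (l.map a).sum) →
    ∃ u x v, l = u ++ x :: v ∧ 2 * (o + (u.map a).sum) ≤ S ∧ S ≤ 2 * (o + (u.map a).sum + a x) := by
  intro l
  induction l with
  | nil => intro o S h; exact absurd rfl h
  | cons y l ih =>
    intro o S _ h1 h2
    by_cases h : S ≤ 2 * (o + a y)
    · exact ⟨[], y, l, rfl, by simpa using h1, by simpa using h⟩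
    · simp only [List.map_cons, List.sum_cons] at h2
      have hl : l ≠ [] := by rintro rfl; simp at h2; omega
      obtain ⟨u, x, v, e, h3, h4⟩ := ih (o + a y) S hl (by omega) (by omega)
      refine ⟨y :: u, x, v, by simp [e], ?_, ?_⟩ <;> simp <;> omega

theorem exists_tree (a : ι → ℕ) : ∀ (n : ℕ) (l : List ι), l.length ≤ n → l ≠ [] →
    ∃ T : BT ι, T.toList = l ∧ AllD (fun d p => 2 ^ d * a p ^ 2 ≤ 4 * (l.map a).sum ^ 2) T := by
  intro n
  induction n with
  | zero => intro l h1 h2; simp at h1; exact absurd h1 h2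
  | succ n ih =>
    intro l hl hne
    obtain ⟨u, x, v, rfl, h1, h2⟩ := split_aux a l 0 (l.map a).sum hne (by omega) (by omega)
    simp only [List.map_append, List.map_cons, List.sum_append, List.sum_cons, zero_add] at h1 h2 ⊢
    simp only [List.length_append, List.length_cons] at hl
    set U := (u.map a).sum
    set W := (v.map a).sum
    set S := U + (a x + W) with hS
    have hW : 2 * W ≤ S := by omega
    -- right part
    have hR : ∃ T : BT ι, T.toList = x :: v ∧
        AllD (fun d p => 2 ^ (d + 1) * a p ^ 2 ≤ 4 * S ^ 2) T := by
      rcases eq_or_ne v [] with rfl | hv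
      · refine ⟨leaf x, rfl, ?_⟩
        show 2 ^ (0 + 1) * a x ^ 2 ≤ 4 * S ^ 2
        have h5 : a x ^ 2 ≤ S ^ 2 := Nat.pow_le_pow_left (by omega) 2
        norm_num
        omega
      · obtain ⟨T, hT, hA⟩ := ih v (by omega) hv
        refine ⟨node (leaf x) T, by simp [toList, hT], ?_, ?_⟩
        · show 2 ^ (0 + 1 + 1) * a x ^ 2 ≤ 4 * S ^ 2
          have h5 : a x ^ 2 ≤ S ^ 2 := Nat.pow_le_pow_left (by omega) 2
          norm_num
          omega
        · refine hA.mono fun d p _ h => ?_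
          have : (2 * W) ^ 2 ≤ S ^ 2 := Nat.pow_le_pow_left hW 2
          calc 2 ^ (d + 1 + 1) * a p ^ 2 = 4 * (2 ^ d * a p ^ 2) := by ring
            _ ≤ 4 * (4 * W ^ 2) := by gcongr
            _ = 4 * (2 * W) ^ 2 := by ring
            _ ≤ _ := by gcongr
    obtain ⟨R, hR1, hR2⟩ := hR
    rcases eq_or_ne u [] with rfl | hu
    · refine ⟨R, by simp [hR1], hR2.mono fun d p _ h => le_trans ?_ h⟩
      gcongr <;> omega
    · obtain ⟨T, hT, hA⟩ := ih u (by omega) hu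
      refine ⟨node T R, by simp [toList, hT, hR1], ?_, hR2⟩
      refine hA.mono fun d p _ h => ?_
      have : (2 * U) ^ 2 ≤ S ^ 2 := Nat.pow_le_pow_left h1 2
      calc 2 ^ (d + 1) * a p ^ 2 = 2 * (2 ^ d * a p ^ 2) := by ring
        _ ≤ 2 * (4 * U ^ 2) := by gcongr
        _ = 2 * (2 * U) ^ 2 := by ring
        _ ≤ 4 * S ^ 2 := by nlinarith

end BT

/-! ## Gadgets for paths -/

variable {A V : Type}

def Lnk : List (V × V) → V → V → Prop
  | [], v, u => v = u
  | p :: l, v, u => p.1 = v ∧ Lnk l p.2 u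

theorem Lnk.append {l1 l2 : List (V × V)} : ∀ {v u : V}, Lnk (l1 ++ l2) v u →
    ∃ m, Lnk l1 v m ∧ Lnk l2 m u := by
  induction l1 with
  | nil => intro v u h; exact ⟨v, rfl, h⟩
  | cons p l ih =>
    intro v u h
    obtain ⟨m, h1, h2⟩ := ih h.2
    exact ⟨m, ⟨h.1, h1⟩, h2⟩

def RepT (val : V → Val A) (S : Pg A) (M : ℕ) (T : BT (V × V)) : Prop :=
  ∀ v u, Lnk T.toList v u → Rep S M (val u) (val v)

def Good (val : V → Val A) (S : Pg A) (M : ℕ) : BT (V × V) → Prop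
  | .leaf p => RepT val S M (.leaf p)
  | .node l r => Good val S M l ∧ Good val S M r ∧ RepT val S M (.node l r)

theorem Good.rep {val : V → Val A} {S : Pg A} {M : ℕ} {T : BT (V × V)} (h : Good val S M T) :
    RepT val S M T := by
  cases T with
  | leaf p => exact h
  | node l r => exact h.2.2

theorem Good.mono {val : V → Val A} {S S' : Pg A} {M M' : ℕ} {T : BT (V × V)}
    (h : Good val S M T) (hS : S ⊆ S') (hM : M ≤ M') : Good val S' M' T := by
  induction T with
  | leaf p => intro v u hl; exact (h v u hl).mono hS hM
  | node l r hl hr =>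
    exact ⟨hl h.1, hr h.2.1, fun v u hl => (h.2.2 v u hl).mono hS hM⟩

theorem seg (val : V → Val A) (σ : V × V → ℕ) (S0 : Pg A) (T : BT (V × V)) :
    ∀ (M : ℕ) (S : Pg A), S0 ⊆ S →
    (∀ p ∈ T.toList, ∀ S, S0 ⊆ S → ∃ S', Ext S S' 1 ∧ Rep S' (σ p) (val p.2) (val p.1)) →
    BT.AllD (fun d p => σ p + 6 * d ≤ M) T →
    ∃ S', Ext S S' (6 * T.nodes) ∧ Good val S' M T := by
  induction T with
  | leaf p =>
    intro M S hS hst hA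
    obtain ⟨S', e, hr⟩ := hst p (by simp [BT.toList]) S hS
    refine ⟨S', e.weaken (by simp [BT.nodes]), ?_⟩
    rintro v u ⟨rfl, h⟩
    have h : p.2 = u := h
    subst h
    exact hr.mono subset_rfl (by simpa [BT.AllD] using hA)
  | node l r hl hr =>
    intro M S hS hst hA
    obtain ⟨d, i, hdi⟩ := hA.1.ex
    obtain ⟨S1, e1, g1⟩ := hl (M - 6) S hS (fun p hp => hst p (by simp [BT.toList, hp]))
      (hA.1.mono fun d p _ h => by omega)
    obtain ⟨S2, e2, g2⟩ := hr (M - 6) S1 (hS.trans e1.1) (fun p hp => hst p (by simp [BT.toList, hp]))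
      (hA.2.mono fun d p _ h => by omega)
    by_cases hlk : ∃ v u, Lnk (BT.node l r).toList v u
    · obtain ⟨v, u, hlk⟩ := hlk
      obtain ⟨m, hm1, hm2⟩ := Lnk.append hlk
      obtain ⟨S3, e3, g3⟩ := ((g1.rep v m hm1).mono e2.1 le_rfl).comp (g2.rep m u hm2)
      refine ⟨S3, ((e1.trans e2).trans e3).weaken (by simp only [BT.nodes]; omega),
        g1.mono (e2.1.trans e3.1) (by omega), g2.mono e3.1 (by omega), ?_⟩
      intro v' u' hlk'
      have huniq : ∀ (l : List (V × V)), l ≠ [] → ∀ v u v' u', Lnk l v u → Lnk l v' u' →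
          v = v' ∧ u = u' := by
        intro l
        induction l with
        | nil => intro h; exact absurd rfl h
        | cons p l ih =>
          rintro - v u v' u' ⟨rfl, h1⟩ ⟨rfl, h2⟩
          refine ⟨rfl, ?_⟩
          cases l with
          | nil => exact (show p.2 = u from h1) ▸ (show p.2 = u' from h2)
          | cons q l => exact (ih (by simp) _ _ _ _ h1 h2).2
      have hne : (BT.node l r).toList ≠ [] := by
        intro h
        have := (BT.node l r).nodes_eq
        rw [h] at this; simp at this
      obtain ⟨rfl, rfl⟩ := huniq _ hne _ _ _ _ hlk hlk'
      exact g3.mono subset_rfl (by omega)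
    · refine ⟨S2, (e1.trans e2).weaken (by simp only [BT.nodes]; omega),
        g1.mono e2.1 (by omega), g2.mono subset_rfl (by omega), ?_⟩
      intro v u h; exact absurd ⟨v, u, h⟩ hlk

theorem build (val : V → Val A) (M : ℕ) (T : BT (V × V)) :
    ∀ (τ : ℕ) (S : Pg A) (v u : V), Good val S M T → Lnk T.toList v u → Av S (val u) τ → M ≤ τ →
    ∃ S', Ext S S' (6 * T.nodes) ∧ BT.AllD (fun d p => Dv S' (val p.1) (τ + 6 + 6 * d)) T := by
  induction T with
  | leaf p =>
    rintro τ S v u g ⟨rfl, h⟩ hav hM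
    have h : p.2 = u := h
    subst h
    obtain ⟨S1, e1, d1⟩ := ((g p.1 p.2 ⟨rfl, rfl⟩).mono subset_rfl hM).apply hav
    exact ⟨S1, e1.weaken (by simp [BT.nodes]), d1⟩
  | node l r hl hr =>
    intro τ S v u g hlk hav hM
    obtain ⟨m, hm1, hm2⟩ := Lnk.append hlk
    obtain ⟨S1, e1, d1⟩ := ((g.2.1.rep m u hm2).mono subset_rfl hM).apply hav
    obtain ⟨S2, e2, a2⟩ := d1.ext
    obtain ⟨S3, e3, d3⟩ := hr τ S2 m u (g.2.1.mono (e1.1.trans e2.1) le_rfl) hm2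
      (hav.mono (e1.1.trans e2.1) le_rfl) hM
    obtain ⟨S4, e4, d4⟩ := hl (τ + 6) S3 v m (g.1.mono ((e1.1.trans e2.1).trans e3.1) le_rfl) hm1
      (a2.mono e3.1 le_rfl) (by omega)
    refine ⟨S4, (((e1.trans e2).trans e3).trans e4).weaken (by simp only [BT.nodes]; omega), ?_, ?_⟩
    · exact d4.mono fun d p _ h => h.mono subset_rfl (by omega)
    · exact d3.mono fun d p _ h => h.mono e4.1 (by omega)

end Bal

namespace Bal

open Classical

/-! ## Counting paths -/

theorem paths {V : Type} [Fintype V] (cnt : V → V → ℕ) (rank : V → ℕ)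
    (hr : ∀ u v, cnt u v ≠ 0 → rank v < rank u) (w : V → ℕ)
    (hw : ∀ u, ∑ c, cnt u c * w c ≤ w u) (r : V) :
    ∃ e : V → ℕ, (∀ v, e v = (if v = r then 1 else 0) + ∑ u, e u * cnt u v) ∧
      ∀ v, e v * w v ≤ w r := by
  let En : ℕ → V → V → ℕ := fun n => Nat.rec (fun _ _ => 0)
    (fun _ f u v => (if u = v then 1 else 0) + ∑ c, cnt u c * f c v) n
  have En_succ : ∀ n u v, En (n + 1) u v = (if u = v then 1 else 0) + ∑ c, cnt u c * En n c v :=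
    fun _ _ _ => rfl
  have stab : ∀ n m u v, rank u < n → rank u < m → En n u v = En m u v := by
    intro n
    induction n with
    | zero => intro m u v h; omega
    | succ n ih =>
      intro m u v h1 h2
      obtain ⟨m, rfl⟩ : ∃ k, m = k + 1 := ⟨m - 1, by omega⟩
      rw [En_succ, En_succ]
      congr 1
      refine Finset.sum_congr rfl fun c _ => ?_
      by_cases hc : cnt u c = 0
      · simp [hc]
      · have := hr u c hc
        rw [ih m c v (by omega) (by omega)]
  let E : V → V → ℕ := fun u v => En (rank u + 1) u v
  have hE : ∀ u v, E u v = (if u = v then 1 else 0) + ∑ c, cnt u c * E c v := by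
    intro u v
    show En (rank u + 1) u v = _
    rw [En_succ]
    congr 1
    refine Finset.sum_congr rfl fun c _ => ?_
    by_cases hc : cnt u c = 0
    · simp [hc]
    · have := hr u c hc
      rw [stab (rank u) (rank c + 1) c v (by omega) (by omega)]
  have hE0 : ∀ n u v, rank u < n → rank u < rank v → E u v = 0 := by
    intro n
    induction n with
    | zero => intro u v h; omega
    | succ n ih =>
      intro u v h h1
      rw [hE]
      have : u ≠ v := by rintro rfl; omega
      simp only [this, if_false, zero_add]
      refine Finset.sum_eq_zero fun c _ => ?_
      by_cases hc : cnt u c = 0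
      · simp [hc]
      · have := hr u c hc
        rw [ih c v (by omega) (by omega), mul_zero]
  have hB : ∀ n u v, rank u < n → E u v * w v ≤ w u := by
    intro n
    induction n with
    | zero => intro u v h; omega
    | succ n ih =>
      intro u v h
      by_cases huv : u = v
      · subst huv
        rw [hE]
        have : ∑ c, cnt u c * E c u = 0 := by
          refine Finset.sum_eq_zero fun c _ => ?_
          by_cases hc : cnt u c = 0
          · simp [hc]
          · have := hr u c hc
            rw [hE0 (rank c + 1) c u (by omega) (by omega), mul_zero]
        simp [this]
      · rw [hE]
        simp only [huv, if_false, zero_add]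
        rw [Finset.sum_mul]
        refine le_trans (Finset.sum_le_sum fun c _ => ?_) (hw u)
        by_cases hc : cnt u c = 0
        · simp [hc]
        · have := hr u c hc
          rw [mul_assoc]
          exact Nat.mul_le_mul_left _ (ih c v (by omega))
  have hT : ∀ n u v, rank u < n → E u v = (if u = v then 1 else 0) + ∑ x, E u x * cnt x v := by
    intro n
    induction n with
    | zero => intro u v h; omega
    | succ n ih =>
      intro u v h
      have h1 : ∑ c, cnt u c * E c v
          = ∑ c, cnt u c * ((if c = v then 1 else 0) + ∑ x, E c x * cnt x v) := by
        refine Finset.sum_congr rfl fun c _ => ?_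
        by_cases hc : cnt u c = 0
        · simp [hc]
        · have := hr u c hc
          rw [← ih c v (by omega)]
      have h2 : ∑ x, E u x * cnt x v
          = ∑ x, ((if u = x then 1 else 0) + ∑ c, cnt u c * E c x) * cnt x v := by
        refine Finset.sum_congr rfl fun x _ => ?_
        rw [← hE]
      rw [hE, h1, h2]
      congr 1
      simp only [mul_add, add_mul, Finset.sum_add_distrib, Finset.mul_sum, Finset.sum_mul]
      congr 1
      · simp
      · rw [Finset.sum_comm]
        simp only [mul_assoc]
  refine ⟨E r, fun v => ?_, fun v => hB _ r v (Nat.lt_succ_self _)⟩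
  rw [hT _ r v (Nat.lt_succ_self _)]
  simp only [eq_comm]

/-! ## Chain partition -/

theorem chains {V : Type} (rank : V → ℕ) (sc : V → V → Prop)
    (hr : ∀ u v, sc u v → rank v < rank u)
    (hin : ∀ u u' v, sc u v → sc u' v → u = u') (s : Finset V) :
    ∃ L : List (List V), L.flatten.Nodup ∧ (∀ v, v ∈ L.flatten ↔ v ∈ s) ∧
      ∀ l ∈ L, List.IsChain sc l ∧ ∀ x ∈ l.getLast?, ∀ u ∈ s, ¬ sc x u := by
  induction s using Finset.induction_on_max_value rank with
  | empty => exact ⟨[], by simp⟩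
  | insert x s hx hmax ih =>
    obtain ⟨L, h1, h2, h3⟩ := ih
    have hnew : ∀ l ∈ L, ∀ y ∈ l.getLast?, ∀ u ∈ insert x s, ¬ sc y u := by
      intro l hl y hy u hu hs
      rcases Finset.mem_insert.1 hu with rfl | hu
      · have hys : y ∈ s := (h2 y).1 (List.mem_flatten.2 ⟨l, hl, List.mem_of_getLast? hy⟩)
        have := hmax y hys
        have := hr _ _ hs
        omega
      · exact (h3 l hl).2 y hy u hu hs
    have hxx : ¬ sc x x := fun h => lt_irrefl _ (hr _ _ h)
    by_cases hc : ∃ y ∈ s, sc x y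
    · obtain ⟨y, hys, hxy⟩ := hc
      obtain ⟨l, hl, hyl⟩ := List.mem_flatten.1 ((h2 y).2 hys)
      obtain ⟨L1, L2, rfl⟩ := List.append_of_mem hl
      have hperm : (L1 ++ (x :: l) :: L2).flatten.Perm (x :: (L1 ++ l :: L2).flatten) := by
        simp only [List.flatten_append, List.flatten_cons, List.cons_append]
        exact List.perm_middle
      have hhead : ∃ l', l = y :: l' := by
        obtain ⟨a, b, rfl⟩ := List.append_of_mem hyl
        rcases List.eq_nil_or_concat a with rfl | ⟨a', z, rfl⟩
        · exact ⟨b, rfl⟩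
        · exfalso
          have hch := (h3 _ hl).1
          simp only [List.concat_eq_append, List.append_assoc, List.singleton_append] at hch
          have hzy : sc z y := (List.isChain_append.1 hch).2.1.rel
          have : x = z := hin _ _ _ hxy hzy
          subst this
          apply hx
          rw [← h2]
          refine List.mem_flatten.2 ⟨_, hl, by simp⟩
      obtain ⟨l', rfl⟩ := hhead
      refine ⟨L1 ++ (x :: y :: l') :: L2, ?_, ?_, ?_⟩
      · rw [hperm.nodup_iff, List.nodup_cons]
        exact ⟨fun h => hx ((h2 x).1 h), h1⟩
      · intro v
        rw [hperm.mem_iff, List.mem_cons, h2, Finset.mem_insert]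
      · intro l hl'
        have hl'' : l = x :: y :: l' ∨ l ∈ L1 ++ (y :: l') :: L2 := by
          simp only [List.mem_append, List.mem_cons] at hl' ⊢; tauto
        rcases hl'' with rfl | hl''
        · refine ⟨List.IsChain.cons_cons hxy (h3 _ hl).1, ?_⟩
          intro z hz
          exact hnew _ hl z (by simpa using hz)
        · exact ⟨(h3 l hl'').1, hnew l hl''⟩
    · refine ⟨[x] :: L, ?_, ?_, ?_⟩
      · simp only [List.flatten_cons, List.singleton_append, List.nodup_cons]
        exact ⟨fun h => hx ((h2 x).1 h), h1⟩
      · intro v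
        simp only [List.flatten_cons, List.singleton_append, List.mem_cons, h2, Finset.mem_insert]
      · intro l hl
        rcases List.mem_cons.1 hl with rfl | hl
        · refine ⟨List.isChain_singleton x, ?_⟩
          intro z hz u hu hs
          simp only [List.getLast?_singleton, Option.mem_some_iff] at hz
          subst hz
          rcases Finset.mem_insert.1 hu with rfl | hu
          · exact hxx hs
          · exact hc ⟨u, hu, hs⟩
        · exact ⟨(h3 l hl).1, hnew l hl⟩

end Bal

namespace Bal

open Classical

/-! ## The weighted network and its chain decomposition -/

structure Net (A V : Type) [Fintype V] where
  ch : V → List V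
  val : V → Val A
  w : V → ℕ
  e : V → ℕ
  rank : V → ℕ
  r : V
  hwpos : ∀ v, 1 ≤ w v
  hw : ∀ v, ((ch v).map w).sum ≤ w v
  hlt : ∀ v, ∀ x ∈ ch v, w x < w v
  hrank : ∀ v, ∀ x ∈ ch v, rank x < rank v
  he : ∀ v, e v = (if v = r then 1 else 0) + ∑ u, e u * (ch u).count v
  hew : ∀ v, e v * w v ≤ w r
  H1 : ∀ (S : Pg A) (n : ℕ) (v : V), (∀ c ∈ ch v, Av S (val c) n) →
    ∃ S', Ext S S' 1 ∧ Dv S' (val v) (n + 2)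
  H2 : ∀ (S : Pg A) (n : ℕ) (v c : V) (l1 l2 : List V), ch v = l1 ++ c :: l2 →
    (∀ c' ∈ l1 ++ l2, Av S (val c') n) → ∃ S', Ext S S' 1 ∧ Rep S' (n + 1) (val c) (val v)

theorem lt_pow_log (n : ℕ) : n < 2 ^ (Nat.log 2 n + 1) := Nat.lt_pow_succ_log_self (by norm_num) n

theorem pow_log_le {n : ℕ} (h : 0 < n) : 2 ^ Nat.log 2 n ≤ n := Nat.pow_log_le_self 2 (by omega)

namespace Net

variable {A V : Type} [Fintype V] (N : Net A V)

def sc (u v : V) : Prop :=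
  v ∈ N.ch u ∧ Nat.log 2 (N.w u) = Nat.log 2 (N.w v) ∧ Nat.log 2 (N.e u) = Nat.log 2 (N.e v) ∧
    0 < N.e u

noncomputable def ein (v : V) : ℕ :=
  (if v = N.r then 1 else 0) + ∑ u, if N.sc u v then 0 else N.e u * (N.ch u).count v

theorem le_e {u v : V} (h : v ∈ N.ch u) : N.e u ≤ N.e v := by
  rw [N.he v]
  have h1 : N.e u * (N.ch u).count v ≤ ∑ u, N.e u * (N.ch u).count v :=
    Finset.single_le_sum (f := fun u => N.e u * (N.ch u).count v) (fun _ _ => Nat.zero_le _)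
      (Finset.mem_univ u)
  have h2 : 0 < (N.ch u).count v := List.count_pos_iff.2 h
  have h3 : N.e u ≤ N.e u * (N.ch u).count v := Nat.le_mul_of_pos_right _ h2
  omega

theorem e_split (v : V) : N.e v = N.ein v + ∑ u, if N.sc u v then N.e u * (N.ch u).count v else 0 := by
  rw [N.he v, ein, add_assoc, ← Finset.sum_add_distrib]
  congr 1
  refine Finset.sum_congr rfl fun u _ => ?_
  split_ifs <;> simp

theorem ein_le (v : V) : N.ein v ≤ N.e v := by rw [N.e_split v]; omega

theorem ein_sc {u v : V} (h : N.sc u v) : N.ein v + N.e u ≤ N.e v := by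
  rw [N.e_split v]
  have h1 := Finset.single_le_sum (f := fun u => if N.sc u v then N.e u * (N.ch u).count v else 0)
    (fun _ _ => Nat.zero_le _) (Finset.mem_univ u)
  simp only [h, if_true] at h1
  have h2 : 0 < (N.ch u).count v := List.count_pos_iff.2 h.1
  have h3 : N.e u ≤ N.e u * (N.ch u).count v := Nat.le_mul_of_pos_right _ h2
  omega

theorem ein_side {u v : V} (hm : v ∈ N.ch u) (h : ¬ N.sc u v) : N.e u ≤ N.ein v := by
  rw [ein]
  have h1 := Finset.single_le_sum (f := fun u => if N.sc u v then 0 else N.e u * (N.ch u).count v)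
    (fun _ _ => Nat.zero_le _) (Finset.mem_univ u)
  simp only [h, if_false] at h1
  have h2 : 0 < (N.ch u).count v := List.count_pos_iff.2 hm
  have h3 : N.e u ≤ N.e u * (N.ch u).count v := Nat.le_mul_of_pos_right _ h2
  omega

theorem in_unique (u u' v : V) (h : N.sc u v) (h' : N.sc u' v) : u = u' := by
  by_contra hne
  have h1 : N.e u * (N.ch u).count v + N.e u' * (N.ch u').count v ≤ N.e v := by
    rw [N.he v, ← Finset.sum_pair hne (f := fun u => N.e u * (N.ch u).count v)]
    have := Finset.sum_le_sum_of_subset (f := fun u => N.e u * (N.ch u).count v)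
      (Finset.subset_univ {u, u'})
    omega
  have h2 : 0 < (N.ch u).count v := List.count_pos_iff.2 h.1
  have h3 : N.e u ≤ N.e u * (N.ch u).count v := Nat.le_mul_of_pos_right _ h2
  have h2' : 0 < (N.ch u').count v := List.count_pos_iff.2 h'.1
  have h3' : N.e u' ≤ N.e u' * (N.ch u').count v := Nat.le_mul_of_pos_right _ h2'
  have h4 := pow_log_le h.2.2.2
  have h4' := pow_log_le h'.2.2.2
  have h5 := lt_pow_log (N.e v)
  rw [h.2.2.1] at h4
  rw [h'.2.2.1] at h4'
  rw [pow_succ] at h5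
  omega

theorem out_unique {u v : V} (h : N.sc u v) : ∃ l1 l2, N.ch u = l1 ++ v :: l2 ∧
    ∀ x ∈ l1 ++ l2, ¬ N.sc u x ∧ N.w x + N.w v ≤ N.w u := by
  obtain ⟨l1, l2, hl⟩ := List.append_of_mem h.1
  refine ⟨l1, l2, hl, fun x hx => ?_⟩
  have hle : N.w x + N.w v ≤ N.w u := by
    have h1 := N.hw u
    rw [hl] at h1
    simp only [List.map_append, List.map_cons, List.sum_append, List.sum_cons] at h1
    have h2 : N.w x ≤ ((l1 ++ l2).map N.w).sum :=
      List.single_le_sum (by simp) _ (List.mem_map_of_mem hx)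
    simp only [List.map_append, List.sum_append] at h2
    omega
  refine ⟨fun hs => ?_, hle⟩
  have h3 := pow_log_le (N.hwpos x)
  have h4 := pow_log_le (N.hwpos v)
  have h5 := lt_pow_log (N.w u)
  rw [← hs.2.1] at h3
  rw [← h.2.1] at h4
  rw [pow_succ] at h5
  omega

noncomputable def β (v : V) : ℕ :=
  12 * Nat.log 2 (N.w v) + 12 * (Nat.log 2 (N.w N.r) - Nat.log 2 (N.ein v)) +
    81 * (Nat.log 2 (N.w v) + Nat.log 2 (N.w N.r) - Nat.log 2 (N.e v) + 1)

theorem le_L (v : V) : Nat.log 2 (N.e v) ≤ Nat.log 2 (N.w N.r) := by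
  apply Nat.log_mono_right
  have := N.hew v
  have h2 := N.hwpos v
  nlinarith [Nat.zero_le (N.e v)]

theorem β_side {u v : V} (hu : 0 < N.e u) (hm : v ∈ N.ch u) (h : ¬ N.sc u v) :
    N.β v ≤ 12 * Nat.log 2 (N.w v) + 12 * (Nat.log 2 (N.w N.r) - Nat.log 2 (N.e u)) +
      81 * (Nat.log 2 (N.w u) + Nat.log 2 (N.w N.r) - Nat.log 2 (N.e u)) ∧ 0 < N.ein v := by
  have h1 := N.ein_side hm h
  refine ⟨?_, by omega⟩
  have h2 : Nat.log 2 (N.e u) ≤ Nat.log 2 (N.ein v) := Nat.log_mono_right h1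
  have h3 : Nat.log 2 (N.e u) ≤ Nat.log 2 (N.e v) := Nat.log_mono_right (N.le_e hm)
  have h4 : Nat.log 2 (N.w v) ≤ Nat.log 2 (N.w u) := Nat.log_mono_right (N.hlt u v hm).le
  have h5 : Nat.log 2 (N.w u) ≠ Nat.log 2 (N.w v) ∨ Nat.log 2 (N.e u) ≠ Nat.log 2 (N.e v) := by
    by_contra hc
    push Not at hc
    exact h ⟨hm, hc.1, hc.2, hu⟩
  have h6 := N.le_L v
  have h7 := N.le_L u
  unfold β
  omega

/-- Consecutive pairs of a list. -/
def steps : List V → List (V × V)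
  | [] => []
  | [_] => []
  | v :: u :: l => (v, u) :: steps (u :: l)

theorem steps_length (v : V) (l : List V) : (steps (v :: l)).length = l.length := by
  induction l generalizing v with
  | nil => rfl
  | cons u l ih => simp [steps, ih]

theorem steps_chain {v : V} {l : List V} (h : List.IsChain N.sc (v :: l)) :
    ∀ p ∈ steps (v :: l), N.sc p.1 p.2 := by
  induction l generalizing v with
  | nil => simp [steps]
  | cons u l ih =>
    intro p hp
    simp only [steps, List.mem_cons] at hp
    rcases hp with rfl | hp
    · exact h.rel
    · exact ih (List.isChain_cons_cons.1 h).2 p hp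

theorem steps_lnk (v : V) (l : List V) : ∃ z, (v :: l).getLast? = some z ∧
    Lnk (steps (v :: l)) v z ∧ ∀ x ∈ v :: l, x = z ∨ ∃ p ∈ steps (v :: l), p.1 = x := by
  induction l generalizing v with
  | nil => exact ⟨v, rfl, rfl, by simp⟩
  | cons u l ih =>
    obtain ⟨z, h1, h2, h3⟩ := ih u
    refine ⟨z, by simpa using h1, ⟨rfl, h2⟩, ?_⟩
    intro x hx
    rcases List.mem_cons.1 hx with rfl | hx
    · exact .inr ⟨(x, u), by simp [steps], rfl⟩
    · rcases h3 x hx with h | ⟨p, hp, rfl⟩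
      · exact .inl h
      · exact .inr ⟨p, by simp [steps, hp], rfl⟩

theorem steps_const {v : V} {l : List V} (h : List.IsChain N.sc (v :: l)) :
    ∀ x ∈ v :: l, Nat.log 2 (N.w x) = Nat.log 2 (N.w v) ∧ Nat.log 2 (N.e x) = Nat.log 2 (N.e v) := by
  induction l generalizing v with
  | nil => simp
  | cons u l ih =>
    intro x hx
    rcases List.mem_cons.1 hx with rfl | hx
    · exact ⟨rfl, rfl⟩
    · have := ih (List.isChain_cons_cons.1 h).2 x hx
      have hs : N.sc v u := h.rel
      rw [hs.2.1, hs.2.2.1]; exact this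

theorem steps_sum {v z : V} {l : List V} (h : List.IsChain N.sc (v :: l))
    (hz : (v :: l).getLast? = some z) :
    ((steps (v :: l)).map fun p => N.ein p.1).sum + N.e v ≤ N.e z + N.ein v ∧
    ((steps (v :: l)).map fun p => N.w p.1 - N.w p.2).sum + N.w z ≤ N.w v := by
  induction l generalizing v with
  | nil => simp at hz; subst hz; simp [steps]
  | cons u l ih =>
    obtain ⟨h1, h2⟩ := ih (List.isChain_cons_cons.1 h).2 (by simpa using hz)
    have hs : N.sc v u := h.rel
    have h3 := N.ein_sc hs
    have h4 := N.hlt v u hs.1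
    simp only [steps, List.map_cons, List.sum_cons]
    omega

theorem steps_mem {v : V} {l : List V} : ∀ p ∈ steps (v :: l), p.1 ∈ v :: l := by
  induction l generalizing v with
  | nil => simp [steps]
  | cons u l ih =>
    intro p hp
    simp only [steps, List.mem_cons] at hp
    rcases hp with rfl | hp
    · simp
    · exact List.mem_cons_of_mem _ (ih p hp)

/-- The target set of base values. -/
noncomputable def S0 : Pg A :=
  (Finset.univ.filter fun v => 0 < N.ein v).image fun v => (N.val v, N.β v)

theorem av_S0 {S : Pg A} (hS : N.S0 ⊆ S) {v : V} (h : 0 < N.ein v) {n : ℕ} (hn : N.β v ≤ n) :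
    Av S (N.val v) n :=
  ⟨N.β v, hn, hS (Finset.mem_image.2 ⟨v, by simp [h], rfl⟩)⟩

theorem pow_cancel {d l k m s a : ℕ} (h : 2 ^ d * a ^ 2 ≤ 4 * s ^ 2) (hs : s ≤ 2 ^ (k + m + 2))
    (ha : 2 ^ l ≤ a) : d + 2 * l ≤ 2 * k + 2 * m + 6 := by
  have h1 : 2 ^ (d + 2 * l) ≤ 2 ^ (2 * k + 2 * m + 6) := by
    calc 2 ^ (d + 2 * l) = 2 ^ d * (2 ^ l) ^ 2 := by ring
      _ ≤ 2 ^ d * a ^ 2 := by gcongr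
      _ ≤ 4 * s ^ 2 := h
      _ ≤ 4 * (2 ^ (k + m + 2)) ^ 2 := by gcongr
      _ = _ := by ring
  exact (Nat.pow_le_pow_iff_right (by norm_num)).1 h1

theorem gadget (v : V) (l : List V) (h : List.IsChain N.sc (v :: l))
    (hpos : ∀ x ∈ v :: l, 0 < N.e x)
    (hlast : ∀ x ∈ (v :: l).getLast?, ∀ u, 0 < N.e u → ¬ N.sc x u) (S : Pg A) (hS : N.S0 ⊆ S) :
    ∃ S', Ext S S' (24 * (v :: l).length) ∧
      ∀ x ∈ v :: l, 0 < N.ein x → Dv S' (N.val x) (N.β x) := by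
  obtain ⟨z, hz, hlnk, hcov⟩ := steps_lnk v l
  have hzm : z ∈ v :: l := List.mem_of_getLast? hz
  set k := Nat.log 2 (N.w v) with hk
  set m := Nat.log 2 (N.e v) with hm
  set L := Nat.log 2 (N.w N.r) with hL
  have hconst := N.steps_const h
  have hmL : m ≤ L := N.le_L v
  obtain ⟨M, hM⟩ : ∃ M, M = 12 * k + 12 * (L - m) + 81 * (k + L - m) + 37 := ⟨_, rfl⟩
  have hβ : ∀ x ∈ v :: l, N.β x = 12 * k + 12 * (L - Nat.log 2 (N.ein x)) + 81 * (k + L - m + 1) := by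
    intro x hx; unfold β; rw [(hconst x hx).1, (hconst x hx).2]
  have hlein : ∀ x ∈ v :: l, Nat.log 2 (N.ein x) ≤ m := by
    intro x hx
    rw [hm, ← (hconst x hx).2]; exact Nat.log_mono_right (N.ein_le x)
  -- side children
  have hside : ∀ u ∈ v :: l, ∀ x ∈ N.ch u, ¬ N.sc u x → 0 < N.ein x ∧
      N.β x ≤ 12 * Nat.log 2 (N.w x) + 12 * (L - m) + 81 * (k + L - m) := by
    intro u hu x hx hs
    have h1 := N.β_side (hpos u hu) hx hs
    rw [(hconst u hu).1, (hconst u hu).2] at h1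
    exact ⟨h1.2, h1.1⟩
  -- last node
  have hz1 : ∃ S1, Ext S S1 1 ∧ Dv S1 (N.val z) (M + 2) := by
    refine N.H1 S M z fun c hc => ?_
    have hns : ¬ N.sc z c :=
      hlast z hz c (lt_of_lt_of_le (hpos z hzm) (N.le_e hc))
    obtain ⟨h1, h2⟩ := hside z hzm c hc hns
    refine N.av_S0 hS h1 (h2.trans ?_)
    have : Nat.log 2 (N.w c) ≤ k := by
      rw [hk, ← (hconst z hzm).1]; exact Nat.log_mono_right (N.hlt z c hc).le
    omega
  obtain ⟨S1, e1, d1⟩ := hz1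
  obtain ⟨S2, e2, a2⟩ := d1.ext
  have hzβ : ∀ S', S1 ⊆ S' → Dv S' (N.val z) (N.β z) := by
    intro S' hS'
    refine d1.mono hS' ?_
    rw [hβ z hzm]
    have := hlein z hzm
    omega
  rcases eq_or_ne l [] with rfl | hl
  · refine ⟨S2, (e1.trans e2).weaken (by simp), fun x hx _ => ?_⟩
    simp only [List.mem_singleton] at hx hzm
    subst hx; subst hzm
    exact hzβ S2 e2.1
  have hsne : steps (v :: l) ≠ [] := by
    intro hc
    have := steps_length v l
    rw [hc] at this
    exact hl (List.length_eq_zero_iff.1 this.symm)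
  let a : V × V → ℕ := fun p => N.ein p.1 * 2 ^ k + (N.w p.1 - N.w p.2) * 2 ^ m
  obtain ⟨T, hT, hA⟩ := BT.exists_tree a _ (steps (v :: l)) le_rfl hsne
  have hsum : ((steps (v :: l)).map a).sum ≤ 2 ^ (k + m + 2) := by
    obtain ⟨h1, h2⟩ := N.steps_sum h hz
    have h3 := N.ein_le v
    have h4 := lt_pow_log (N.e z)
    rw [(hconst z hzm).2, ← hm] at h4
    have h5 := lt_pow_log (N.w v)
    rw [← hk] at h5
    have : ((steps (v :: l)).map a).sum =
        ((steps (v :: l)).map fun p => N.ein p.1).sum * 2 ^ k +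
        ((steps (v :: l)).map fun p => N.w p.1 - N.w p.2).sum * 2 ^ m := by
      rw [← List.sum_map_mul_right, ← List.sum_map_mul_right, ← List.sum_map_add]
    rw [this]
    calc _ ≤ 2 ^ (m + 1) * 2 ^ k + 2 ^ (k + 1) * 2 ^ m := by
          gcongr
          · omega
          · omega
      _ = _ := by ring
  have hch := N.steps_chain h
  -- depth bounds
  have hD : BT.AllD (fun d p => d ≤ 2 * k + 6 ∧
      (∀ x, N.w x + N.w p.2 ≤ N.w p.1 → d + 2 * Nat.log 2 (N.w x) ≤ 2 * k + 6) ∧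
      (0 < N.ein p.1 → d + 2 * Nat.log 2 (N.ein p.1) ≤ 2 * m + 6)) T := by
    refine hA.mono fun d p hp h1 => ?_
    rw [hT] at hp
    have hlt := N.hlt p.1 p.2 (hch p hp).1
    refine ⟨?_, ?_, ?_⟩
    · have : 2 ^ m ≤ a p := by
        have : 1 ≤ N.w p.1 - N.w p.2 := by omega
        calc 2 ^ m = 1 * 2 ^ m := by ring
          _ ≤ (N.w p.1 - N.w p.2) * 2 ^ m := by gcongr
          _ ≤ a p := Nat.le_add_left _ _
      have := pow_cancel h1 hsum this
      omega
    · intro x hx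
      have : 2 ^ (Nat.log 2 (N.w x) + m) ≤ a p := by
        have h2 : N.w x ≤ N.w p.1 - N.w p.2 := by omega
        calc 2 ^ (Nat.log 2 (N.w x) + m) = 2 ^ (Nat.log 2 (N.w x)) * 2 ^ m := by ring
          _ ≤ (N.w p.1 - N.w p.2) * 2 ^ m := by
            gcongr; exact (pow_log_le (N.hwpos x)).trans h2
          _ ≤ a p := Nat.le_add_left _ _
      have := pow_cancel h1 hsum this
      omega
    · intro hx
      have : 2 ^ (Nat.log 2 (N.ein p.1) + k) ≤ a p := by
        calc 2 ^ (Nat.log 2 (N.ein p.1) + k) = 2 ^ (Nat.log 2 (N.ein p.1)) * 2 ^ k := by ring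
          _ ≤ N.ein p.1 * 2 ^ k := by
            gcongr; exact pow_log_le hx
          _ ≤ a p := Nat.le_add_right _ _
      have := pow_cancel h1 hsum this
      omega
  -- steps
  choose! l1 l2 hl12 hl12' using fun p (hp : p ∈ steps (v :: l)) => N.out_unique (hch p hp)
  let σ : V × V → ℕ := fun p => ((l1 p ++ l2 p).toFinset.sup N.β) + 1
  have hstep : ∀ p ∈ T.toList, ∀ S, N.S0 ⊆ S →
      ∃ S', Ext S S' 1 ∧ Rep S' (σ p) (N.val p.2) (N.val p.1) := by
    intro p hp S hS
    rw [hT] at hp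
    refine N.H2 S _ p.1 p.2 (l1 p) (l2 p) (hl12 p hp) fun c hc => ?_
    have hcm : c ∈ N.ch p.1 := by
      rw [hl12 p hp]; simp only [List.mem_append, List.mem_cons] at hc ⊢; tauto
    obtain ⟨h1, h2⟩ := hside p.1 (steps_mem p hp) c hcm (hl12' p hp c hc).1
    exact N.av_S0 hS h1 (Finset.le_sup (f := N.β) (by simpa using hc))
  have hσ : BT.AllD (fun d p => σ p + 6 * d ≤ M) T := by
    refine hD.mono fun d p hp h1 => ?_
    rw [hT] at hp
    have : (l1 p ++ l2 p).toFinset.sup N.β ≤ M - 1 - 6 * d := by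
      refine Finset.sup_le fun c hc => ?_
      have hc : c ∈ l1 p ++ l2 p := by simpa using hc
      have hcm : c ∈ N.ch p.1 := by
        rw [hl12 p hp]; simp only [List.mem_append, List.mem_cons] at hc ⊢; tauto
      obtain ⟨h3, h4⟩ := hl12' p hp c hc
      have h5 := (hside p.1 (steps_mem p hp) c hcm h3).2
      have h6 := h1.2.1 c h4
      omega
    have h7 := h1.1
    show (l1 p ++ l2 p).toFinset.sup N.β + 1 + 6 * d ≤ M
    omega
  obtain ⟨S3, e3, g3⟩ := seg N.val σ N.S0 T M S2 ((hS.trans e1.1).trans e2.1) hstep hσ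
  obtain ⟨S4, e4, g4⟩ := build N.val M T (M + 2) S3 v z g3 (by rw [hT]; exact hlnk)
    (a2.mono e3.1 le_rfl) (by omega)
  have hnodes := T.nodes_eq
  rw [hT, steps_length] at hnodes
  refine ⟨S4, (((e1.trans e2).trans e3).trans e4).weaken (by
    simp only [List.length_cons]; omega), fun x hx hein => ?_⟩
  rcases hcov x hx with rfl | ⟨p, hp, rfl⟩
  · exact hzβ S4 ((e2.1.trans e3.1).trans e4.1)
  · obtain ⟨d, hd1, hd2⟩ := (hD.and g4).forall p (by rw [hT]; exact hp)
    refine hd2.mono subset_rfl ?_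
    rw [hβ p.1 hx]
    have h1 := hd1.2.2 hein
    have h2 := hlein p.1 hx
    omega

theorem gadgets (Ls : List (List V)) (h : ∀ l ∈ Ls, List.IsChain N.sc l ∧
      (∀ x ∈ l, 0 < N.e x) ∧ (∀ x ∈ l.getLast?, ∀ u, 0 < N.e u → ¬ N.sc x u)) :
    ∃ S', Ext N.S0 S' (24 * Ls.flatten.length) ∧
      ∀ x ∈ Ls.flatten, 0 < N.ein x → Dv S' (N.val x) (N.β x) := by
  induction Ls with
  | nil => exact ⟨N.S0, (Ext.refl _).weaken (by simp), by simp⟩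
  | cons l Ls ih =>
    obtain ⟨S1, e1, d1⟩ := ih fun l hl => h l (List.mem_cons_of_mem _ hl)
    obtain ⟨h1, h2, h3⟩ := h l (by simp)
    cases l with
    | nil => exact ⟨S1, by simpa using e1, by simpa using d1⟩
    | cons v l =>
      obtain ⟨S2, e2, d2⟩ := N.gadget v l h1 h2 h3 S1 e1.1
      refine ⟨S2, (e1.trans e2).weaken (by simp; omega), ?_⟩
      intro x hx hp
      rw [List.flatten_cons, List.mem_append] at hx
      rcases hx with hx | hx
      · exact d2 x hx hp
      · exact (d1 x hx hp).mono e2.1 le_rfl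

theorem main : ∃ (S : Pg A) (R : ℕ), (∀ e ∈ S, Dv S e.1 e.2) ∧ S.card ≤ 25 * Fintype.card V ∧
    (N.val N.r, R) ∈ S ∧ R ≤ 186 * Nat.log 2 (N.w N.r) + 81 := by
  obtain ⟨Ls, h1, h2, h3⟩ := chains N.rank N.sc (fun u v h => N.hrank u v h.1) N.in_unique
    (Finset.univ.filter fun v => 0 < N.e v)
  obtain ⟨S, e1, d1⟩ := N.gadgets Ls (fun l hl => ⟨(h3 l hl).1, fun x hx => by
    have := (h2 x).1 (List.mem_flatten.2 ⟨l, hl, hx⟩)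
    simpa using this, fun x hx u hu => (h3 l hl).2 x hx u (by simpa using hu)⟩)
  have hlen : Ls.flatten.length ≤ Fintype.card V := h1.length_le_card
  have hein : 0 < N.ein N.r := by unfold ein; simp
  refine ⟨S, N.β N.r, fun e he => ?_, ?_, ?_, ?_⟩
  · by_cases h : e ∈ N.S0
    · obtain ⟨v, hv, rfl⟩ := Finset.mem_image.1 h
      have hv : 0 < N.ein v := by simpa using hv
      refine d1 v ((h2 v).2 ?_) hv
      simpa using lt_of_lt_of_le hv (N.ein_le v)
    · exact e1.2.2 e he h
  · have h4 : N.S0.card ≤ Fintype.card V :=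
      Finset.card_image_le.trans (Finset.card_le_univ _)
    have := e1.2.1
    omega
  · exact e1.1 (Finset.mem_image.2 ⟨N.r, by simp [hein], rfl⟩)
  · unfold β; omega

end Net
end Bal

namespace Bal

open Classical

/-! ## Geometry of contexts -/

variable {A : Type}

def Fits (C : Ctx2 A) : Prop := C.px + C.ph ≤ C.oh ∧ C.py + C.pw ≤ C.ow

noncomputable def fnOf (C : Ctx2 A) : Fn A := fun z =>
  if z.h = C.ph ∧ z.w = C.pw then some (C.fill z) else none

theorem fnOf_some_iff {C : Ctx2 A} {z y : Str2 A} :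
    fnOf C z = some y ↔ z.h = C.ph ∧ z.w = C.pw ∧ C.fill z = y := by
  unfold fnOf; split_ifs with h
  · simp [h.1, h.2]
  · simp; tauto

theorem Fn.ext_some {F G : Fn A} (h : ∀ z y, F z = some y ↔ G z = some y) : F = G := by
  funext z
  exact Option.ext fun y => h z y

theorem mk'_congr {h w h' w' : ℕ} {g g' : ℕ → ℕ → Option A} (hh : h = h') (hw : w = w')
    (hg : ∀ i j, i < h → j < w → g i j = g' i j) : Str2.mk' h w g = Str2.mk' h' w' g' := by
  subst hh; subst hw
  unfold Str2.mk'
  congr 1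
  funext i j
  split_ifs with hij
  · exact hg i j hij.1 hij.2
  · rfl

theorem fill_eq (C : Ctx2 A) (z : Str2 A) : C.fill z = Str2.mk' C.oh C.ow fun i j =>
    if C.px ≤ i ∧ i < C.px + C.ph ∧ C.py ≤ j ∧ j < C.py + C.pw then z.f (i - C.px) (j - C.py)
    else C.f i j := by
  refine mk'_congr rfl rfl fun i j _ _ => ?_
  by_cases h : C.inHole i j
  · rw [if_pos h]; exact (if_pos h).symm
  · rw [if_neg h]; exact (if_neg h).symm

theorem comp_f (C D : Ctx2 A) (i j : ℕ) : (C.comp D).f i j =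
    if i < C.oh ∧ j < C.ow ∧ ¬(C.px + D.px ≤ i ∧ i < C.px + D.px + D.ph ∧ C.py + D.py ≤ j ∧
      j < C.py + D.py + D.pw) then
    (if C.px ≤ i ∧ i < C.px + C.ph ∧ C.py ≤ j ∧ j < C.py + C.pw then D.f (i - C.px) (j - C.py)
    else C.f i j) else none := by
  by_cases h : C.inHole i j
  · have h' := h
    unfold Ctx2.inHole at h'
    simp only [Ctx2.comp, Ctx2.mk', if_pos h, if_pos h']
  · have h' := h
    unfold Ctx2.inHole at h'
    simp only [Ctx2.comp, Ctx2.mk', if_neg h, if_neg h']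

theorem fill_comp {C D : Ctx2 A} (hC : Fits C) (hD : Fits D) (h1 : C.ph = D.oh) (h2 : C.pw = D.ow)
    (z : Str2 A) : (C.comp D).fill z = C.fill (D.fill z) := by
  obtain ⟨a1, a2⟩ := hC
  obtain ⟨b1, b2⟩ := hD
  rw [fill_eq, fill_eq, fill_eq]
  refine mk'_congr rfl rfl fun i j hi hj => ?_
  rw [comp_f]
  simp only [Ctx2.comp, Ctx2.mk', Str2.mk'] at hi hj ⊢
  split_ifs <;> first | rfl | omega | (simp only [Nat.sub_sub])

theorem fnOf_comp {C D : Ctx2 A} (hC : Fits C) (hD : Fits D) (h1 : C.ph = D.oh) (h2 : C.pw = D.ow) :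
    fnOf (C.comp D) = fmul (fnOf C) (fnOf D) ∧ Fits (C.comp D) := by
  constructor
  · apply Fn.ext_some
    intro z y
    rw [fmul_some_iff, fnOf_some_iff]
    constructor
    · rintro ⟨e1, e2, e3⟩
      rw [fill_comp hC hD h1 h2] at e3
      exact ⟨_, fnOf_some_iff.2 ⟨e1, e2, rfl⟩, fnOf_some_iff.2 ⟨h1.symm, h2.symm, e3⟩⟩
    · rintro ⟨u, e1, e2⟩
      obtain ⟨f1, f2, rfl⟩ := fnOf_some_iff.1 e1
      obtain ⟨g1, g2, rfl⟩ := fnOf_some_iff.1 e2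
      exact ⟨f1, f2, fill_comp hC hD h1 h2 z⟩
  · obtain ⟨a1, a2⟩ := hC
    obtain ⟨b1, b2⟩ := hD
    simp only [Fits, Ctx2.comp, Ctx2.mk']
    omega

/-- The bare-hole contexts. -/
def holeC (k : Kd) (y : Str2 A) (p q : ℕ) : Ctx2 A :=
  match k with
  | .hl => Ctx2.hcatSH y p q
  | .hr => Ctx2.hcatHS p q y
  | .vl => Ctx2.vcatSH y p q
  | .vr => Ctx2.vcatHS p q y

def holeOk (k : Kd) (y : Str2 A) (p q : ℕ) : Prop :=
  match k with
  | .hl => p = y.h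
  | .hr => p = y.h
  | .vl => q = y.w
  | .vr => q = y.w

theorem fill_holeC {k : Kd} {y z : Str2 A} (h : holeOk k y z.h z.w) :
    (holeC k y z.h z.w).fill z = k.op y z := by
  rw [fill_eq]
  cases k <;> simp only [holeOk, holeC, Kd.op] at h ⊢ <;>
    refine mk'_congr ?_ ?_ fun i j => ?_ <;>
    simp only [Ctx2.hcatSH, Ctx2.hcatHS, Ctx2.vcatSH, Ctx2.vcatHS, Ctx2.mk',
      zero_add, Nat.zero_le, true_and, Nat.sub_zero] <;> (try intro hi hj) <;>
    first | omega | (split_ifs <;> first | rfl | omega)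

theorem fnOf_holeC {k : Kd} {y : Str2 A} {p q : ℕ} (h : holeOk k y p q) :
    fnOf (holeC k y p q) = wr k y p q ∧ Fits (holeC k y p q) := by
  constructor
  · apply Fn.ext_some
    intro z s
    rw [fnOf_some_iff, wr_some_iff]
    have e1 : (holeC k y p q).ph = p := by cases k <;> rfl
    have e2 : (holeC k y p q).pw = q := by cases k <;> rfl
    rw [e1, e2]
    constructor
    · rintro ⟨rfl, rfl, h3⟩
      rw [fill_holeC h] at h3
      refine ⟨?_, rfl, rfl, h3⟩
      cases k <;> exact Eq.symm h
    · rintro ⟨h1, rfl, rfl, h3⟩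
      refine ⟨rfl, rfl, ?_⟩
      rw [fill_holeC h, h3]
  · cases k <;> simp only [holeOk] at h <;>
      simp only [Fits, holeC, Ctx2.hcatSH, Ctx2.hcatHS, Ctx2.vcatSH, Ctx2.vcatHS, Ctx2.mk'] <;> omega

theorem holeOk_of_nz {k : Kd} {y : Str2 A} {p q : ℕ} (h : NZ (wr k y p q)) : holeOk k y p q := by
  obtain ⟨z, s, h⟩ := h
  obtain ⟨h1, rfl, rfl, -⟩ := wr_some_iff.1 h
  cases k <;> exact Eq.symm h1

/-- Concatenation of a string and a context. -/
def catC (k : Kd) (y : Str2 A) (C : Ctx2 A) : Ctx2 A :=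
  match k with
  | .hl => Ctx2.hcatSC y C
  | .hr => Ctx2.hcatCS C y
  | .vl => Ctx2.vcatSC y C
  | .vr => Ctx2.vcatCS C y

theorem fill_catC {k : Kd} {y z : Str2 A} {C : Ctx2 A} (hC : Fits C) (h : holeOk k y C.oh C.ow) :
    (catC k y C).fill z = k.op y (C.fill z) := by
  obtain ⟨a1, a2⟩ := hC
  rw [fill_eq, fill_eq]
  cases k <;> simp only [holeOk, catC, Kd.op] at h ⊢ <;>
    refine mk'_congr ?_ ?_ fun i j => ?_ <;>
    simp only [Ctx2.hcatSC, Ctx2.hcatCS, Ctx2.vcatSC, Ctx2.vcatCS, Ctx2.mk',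
      Str2.mk'] <;> (try intro hi hj) <;>
    first | omega | (split_ifs <;> first | rfl | omega | (simp only [Nat.sub_sub]))

theorem fnOf_catC {k : Kd} {y : Str2 A} {C : Ctx2 A} (hC : Fits C) (h : holeOk k y C.oh C.ow) :
    fnOf (catC k y C) = fmul (wr k y C.oh C.ow) (fnOf C) ∧ Fits (catC k y C) := by
  have e1 : (catC k y C).ph = C.ph := by cases k <;> rfl
  have e2 : (catC k y C).pw = C.pw := by cases k <;> rfl
  constructor
  · apply Fn.ext_some
    intro z s
    rw [fmul_some_iff, fnOf_some_iff, e1, e2, fill_catC hC h]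
    constructor
    · rintro ⟨h1, h2, h3⟩
      refine ⟨_, fnOf_some_iff.2 ⟨h1, h2, rfl⟩, wr_some_iff.2 ⟨?_, rfl, rfl, h3⟩⟩
      cases k <;> exact Eq.symm h
    · rintro ⟨u, h1, h2⟩
      obtain ⟨f1, f2, rfl⟩ := fnOf_some_iff.1 h1
      exact ⟨f1, f2, (wr_some_iff.1 h2).2.2.2⟩
  · obtain ⟨a1, a2⟩ := hC
    cases k <;> simp only [holeOk] at h <;>
      simp only [Fits, catC, Ctx2.hcatSC, Ctx2.hcatCS, Ctx2.vcatSC, Ctx2.vcatCS, Ctx2.mk'] <;> omega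

/-! ## Realizing a program as a grammar -/

def Ok {S : Pg A} (x : Val A) : RhsT A S → Prop
  | .chr a => x = Sum.inl (Str2.single a)
  | .subGC Y Z => ∃ C z y, Y.1.1 = Sum.inr C ∧ Z.1.1 = Sum.inl z ∧ C z = some y ∧ x = Sum.inl y
  | .subCC Y Z => ∃ C D, Y.1.1 = Sum.inr C ∧ Z.1.1 = Sum.inr D ∧ NZ (fmul C D) ∧
      x = Sum.inr (fmul C D)
  | .hcatGH Y p q => ∃ y, Y.1.1 = Sum.inl y ∧ NZ (wr .hl y p q) ∧ x = Sum.inr (wr .hl y p q)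
  | .hcatHG p q Y => ∃ y, Y.1.1 = Sum.inl y ∧ NZ (wr .hr y p q) ∧ x = Sum.inr (wr .hr y p q)
  | .vcatGH Y p q => ∃ y, Y.1.1 = Sum.inl y ∧ NZ (wr .vl y p q) ∧ x = Sum.inr (wr .vl y p q)
  | .vcatHG p q Y => ∃ y, Y.1.1 = Sum.inl y ∧ NZ (wr .vr y p q) ∧ x = Sum.inr (wr .vr y p q)
  | _ => False

theorem exists_rhs {S : Pg A} (hS : ∀ e ∈ S, Dv S e.1 e.2) : ∀ (n : ℕ) (x : Val A) (r : ℕ), r < n →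
    (x, r) ∈ S → ∃ ρ : RhsT A S, Ok x ρ ∧ ∀ Y ∈ ρ.occurs, Y.1.2 < r := by
  intro n
  induction n with
  | zero => intro x r h; omega
  | succ n ih =>
    intro x r hr hx
    have hd := hS _ hx
    simp only [Dv] at hd
    cases hd with
    | copy h =>
      obtain ⟨r', h1, h2⟩ := h
      obtain ⟨ρ, h3, h4⟩ := ih x r' (by omega) h2
      exact ⟨ρ, h3, fun Y hY => (h4 Y hY).trans h1⟩
    | chr a => exact ⟨.chr a, rfl, by simp [RhsT.occurs]⟩
    | fill h1 h2 h3 =>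
      obtain ⟨r1, h1, h1'⟩ := h1
      obtain ⟨r2, h2, h2'⟩ := h2
      exact ⟨.subGC ⟨_, h1'⟩ ⟨_, h2'⟩, ⟨_, _, _, rfl, rfl, h3, rfl⟩, by
        simp [RhsT.occurs, h1, h2]⟩
    | comp h1 h2 h3 =>
      obtain ⟨r1, h1, h1'⟩ := h1
      obtain ⟨r2, h2, h2'⟩ := h2
      exact ⟨.subCC ⟨_, h1'⟩ ⟨_, h2'⟩, ⟨_, _, rfl, rfl, h3, rfl⟩, by
        simp [RhsT.occurs, h1, h2]⟩
    | @wrap k y p q h1 h2 =>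
      obtain ⟨r1, h1, h1'⟩ := h1
      cases k with
      | hl => exact ⟨.hcatGH ⟨_, h1'⟩ p q, ⟨_, rfl, h2, rfl⟩, by simp [RhsT.occurs, h1]⟩
      | hr => exact ⟨.hcatHG p q ⟨_, h1'⟩, ⟨_, rfl, h2, rfl⟩, by simp [RhsT.occurs, h1]⟩
      | vl => exact ⟨.vcatGH ⟨_, h1'⟩ p q, ⟨_, rfl, h2, rfl⟩, by simp [RhsT.occurs, h1]⟩
      | vr => exact ⟨.vcatHG p q ⟨_, h1'⟩, ⟨_, rfl, h2, rfl⟩, by simp [RhsT.occurs, h1]⟩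

def Inv : Str2 A ⊕ Ctx2 A → Val A → Prop
  | .inl s, .inl x => s = x
  | .inr C, .inr F => Fits C ∧ fnOf C = F
  | _, _ => False

theorem Inv.getG {v : Str2 A ⊕ Ctx2 A} {x : Val A} {y : Str2 A} (h : Inv v x) (hx : x = Sum.inl y) :
    TSLP2.getG v = y := by
  subst hx
  cases v with
  | inl s => exact h
  | inr C => exact h.elim

theorem Inv.getC {v : Str2 A ⊕ Ctx2 A} {x : Val A} {F : Fn A} (h : Inv v x) (hx : x = Sum.inr F) :
    Fits (TSLP2.getC v) ∧ fnOf (TSLP2.getC v) = F := by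
  subst hx
  cases v with
  | inl s => exact h.elim
  | inr C => exact h

theorem dims_of_nz {C D : Ctx2 A} (h : NZ (fmul (fnOf C) (fnOf D))) : C.ph = D.oh ∧ C.pw = D.ow := by
  obtain ⟨z, s, h⟩ := h
  obtain ⟨u, h1, h2⟩ := fmul_some_iff.1 h
  obtain ⟨-, -, rfl⟩ := fnOf_some_iff.1 h1
  obtain ⟨h3, h4, -⟩ := fnOf_some_iff.1 h2
  exact ⟨h3.symm, h4.symm⟩

theorem foldr_max_le {ι : Type} (f : ι → ℕ) (b : ℕ) (l : List ι) (h : ∀ x ∈ l, f x ≤ b) :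
    (l.map f).foldr max 0 ≤ b := by
  induction l with
  | nil => simp
  | cons x l ih =>
    simp only [List.map_cons, List.foldr_cons]
    exact max_le (h x (by simp)) (ih fun y hy => h y (List.mem_cons_of_mem _ hy))

theorem realize {S : Pg A} (hS : ∀ e ∈ S, Dv S e.1 e.2) {T : Str2 A} {R : ℕ}
    (hT : (Sum.inl T, R) ∈ S) :
    ∃ G : TSLP2 A, G.WF ∧ G.exp = T ∧ G.size ≤ 2 * S.card ∧ G.depth ≤ R + 1 := by
  choose ρ hρ1 hρ2 using fun e : S => exists_rhs hS (e.1.2 + 1) e.1.1 e.1.2 (Nat.lt_succ_self _) e.2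
  let G : TSLP2 A :=
    { V := S
      fintypeV := inferInstance
      isCtx := fun e => e.1.1.isRight
      start := ⟨_, hT⟩
      rhs := ρ
      rank := fun e => e.1.2
      rank_lt := fun X Y hY => hρ2 X Y hY }
  have hinv : ∀ (n : ℕ) (e : S), e.1.2 < n → Inv (G.expAux n e) e.1.1 := by
    intro n
    induction n with
    | zero => intro e h; omega
    | succ n ih =>
      intro e he
      have h1 := hρ1 e
      have h2 := hρ2 e
      have h3 : G.rhs e = ρ e := rfl
      rw [TSLP2.expAux, h3]
      generalize ρ e = q at h1 h2
      have h4 : ∀ Y ∈ q.occurs, Inv (G.expAux n Y) Y.1.1 := fun Y hY => ih Y (by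
        have := h2 Y hY; omega)
      cases q with
      | chr a => simp only [Ok] at h1; rw [h1]; exact rfl
      | subGC Y Z =>
        obtain ⟨C, z, y, c1, c2, c3, c4⟩ := h1
        obtain ⟨d1, rfl⟩ := (h4 Y (by simp [RhsT.occurs])).getC c1
        have d3 := (h4 Z (by simp [RhsT.occurs])).getG c2
        rw [c4]
        show Ctx2.fill (TSLP2.getC _) (TSLP2.getG _) = y
        rw [d3]
        exact (fnOf_some_iff.1 c3).2.2
      | subCC Y Z =>
        obtain ⟨C, D, c1, c2, c3, c4⟩ := h1
        obtain ⟨d1, rfl⟩ := (h4 Y (by simp [RhsT.occurs])).getC c1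
        obtain ⟨e1, rfl⟩ := (h4 Z (by simp [RhsT.occurs])).getC c2
        rw [c4]
        obtain ⟨f1, f2⟩ := dims_of_nz c3
        exact (fnOf_comp d1 e1 f1 f2).symm
      | hcatGH Y p q =>
        obtain ⟨y, c1, c2, c3⟩ := h1
        have d3 := (h4 Y (by simp [RhsT.occurs])).getG c1
        rw [c3]
        show Inv (Sum.inr (Ctx2.hcatSH (TSLP2.getG _) p q)) _
        rw [d3]
        exact (fnOf_holeC (holeOk_of_nz c2)).symm
      | hcatHG p q Y =>
        obtain ⟨y, c1, c2, c3⟩ := h1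
        have d3 := (h4 Y (by simp [RhsT.occurs])).getG c1
        rw [c3]
        show Inv (Sum.inr (Ctx2.hcatHS p q (TSLP2.getG _))) _
        rw [d3]
        exact (fnOf_holeC (holeOk_of_nz c2)).symm
      | vcatGH Y p q =>
        obtain ⟨y, c1, c2, c3⟩ := h1
        have d3 := (h4 Y (by simp [RhsT.occurs])).getG c1
        rw [c3]
        show Inv (Sum.inr (Ctx2.vcatSH (TSLP2.getG _) p q)) _
        rw [d3]
        exact (fnOf_holeC (holeOk_of_nz c2)).symm
      | vcatHG p q Y =>
        obtain ⟨y, c1, c2, c3⟩ := h1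
        have d3 := (h4 Y (by simp [RhsT.occurs])).getG c1
        rw [c3]
        show Inv (Sum.inr (Ctx2.vcatHS p q (TSLP2.getG _))) _
        rw [d3]
        exact (fnOf_holeC (holeOk_of_nz c2)).symm
      | _ => exact h1.elim
  have hG : ∀ (e : S) (y : Str2 A), e.1.1 = Sum.inl y → G.expG e = y := fun e y h =>
    (hinv _ e (Nat.lt_succ_self _)).getG h
  have hC : ∀ (e : S) (F : Fn A), e.1.1 = Sum.inr F → Fits (G.expC e) ∧ fnOf (G.expC e) = F :=
    fun e y h => (hinv _ e (Nat.lt_succ_self _)).getC h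
  have hcl : ∀ (e : S) (y : Str2 A), e.1.1 = Sum.inl y → G.isCtx e = false := fun e y h => by
    show e.1.1.isRight = false; rw [h]; rfl
  have hcr : ∀ (e : S) (y : Fn A), e.1.1 = Sum.inr y → G.isCtx e = true := fun e y h => by
    show e.1.1.isRight = true; rw [h]; rfl
  refine ⟨G, ⟨rfl, fun e => ?_⟩, hG _ _ rfl, ?_, ?_⟩
  · have h1 := hρ1 e
    have h3 : G.rhs e = ρ e := rfl
    rw [h3]
    generalize ρ e = q at h1
    cases q with
    | chr a => exact hcl e _ h1
    | subGC Y Z =>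
      obtain ⟨C, z, y, c1, c2, c3, c4⟩ := h1
      obtain ⟨d1, rfl⟩ := hC Y _ c1
      obtain ⟨f1, f2, -⟩ := fnOf_some_iff.1 c3
      refine ⟨hcl e _ c4, hcr Y _ c1, hcl Z _ c2, ?_⟩
      rw [hG Z _ c2]
      exact ⟨f1.symm, f2.symm⟩
    | subCC Y Z =>
      obtain ⟨C, D, c1, c2, c3, c4⟩ := h1
      obtain ⟨d1, rfl⟩ := hC Y _ c1
      obtain ⟨d2, rfl⟩ := hC Z _ c2
      exact ⟨hcr e _ c4, hcr Y _ c1, hcr Z _ c2, dims_of_nz c3⟩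
    | hcatGH Y p q =>
      obtain ⟨y, c1, c2, c3⟩ := h1
      refine ⟨hcr e _ c3, hcl Y _ c1, ?_⟩
      rw [hG Y _ c1]; exact holeOk_of_nz c2
    | hcatHG p q Y =>
      obtain ⟨y, c1, c2, c3⟩ := h1
      refine ⟨hcr e _ c3, hcl Y _ c1, ?_⟩
      rw [hG Y _ c1]; exact holeOk_of_nz c2
    | vcatGH Y p q =>
      obtain ⟨y, c1, c2, c3⟩ := h1
      refine ⟨hcr e _ c3, hcl Y _ c1, ?_⟩
      rw [hG Y _ c1]; exact holeOk_of_nz c2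
    | vcatHG p q Y =>
      obtain ⟨y, c1, c2, c3⟩ := h1
      refine ⟨hcr e _ c3, hcl Y _ c1, ?_⟩
      rw [hG Y _ c1]; exact holeOk_of_nz c2
    | _ => exact h1.elim
  · unfold TSLP2.size
    have : ∀ X : S, (match G.rhs X with
      | .chr _ => 1
      | _ => 2) ≤ 2 := by
      intro X; split <;> omega
    refine (Finset.sum_le_card_nsmul _ _ 2 fun X _ => this X).trans ?_
    have hc : (@Finset.univ G.V G.fintypeV).card = S.card := by
      show Fintype.card S = S.card
      exact Fintype.card_coe S
    rw [hc, smul_eq_mul, mul_comm]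
  · have hd : ∀ (n : ℕ) (e : S), G.depthAux n e ≤ e.1.2 + 1 := by
      intro n
      induction n with
      | zero => intro e; simp [TSLP2.depthAux]
      | succ n ih =>
        intro e
        rw [TSLP2.depthAux]
        have h2 := hρ2 e
        split
        · omega
        · have h5 : (List.map (fun Y => G.depthAux n Y) (G.rhs e).occurs).foldr max 0 ≤ e.1.2 := by
            refine foldr_max_le _ _ _ fun Y hY => ?_
            have := ih Y
            have := h2 Y hY
            omega
          omega
    exact hd _ _

end Bal

namespace Bal

open Classical

/-! ## The source grammar -/

variable {A : Type} (G : TSLP2 A)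

theorem expAux_stab : ∀ (n m : ℕ) (X : G.V), G.rank X < n → G.rank X < m →
    G.expAux n X = G.expAux m X := by
  intro n
  induction n with
  | zero => intro m X h; omega
  | succ n ih =>
    intro m X h1 h2
    obtain ⟨m, rfl⟩ : ∃ k, m = k + 1 := ⟨m - 1, by omega⟩
    have h3 : ∀ Y ∈ (G.rhs X).occurs, G.expAux n Y = G.expAux m Y := fun Y hY => by
      have := G.rank_lt X Y hY
      exact ih m Y (by omega) (by omega)
    rw [TSLP2.expAux, TSLP2.expAux]
    cases h : G.rhs X <;> rw [h] at h3 <;> simp [RhsT.occurs] at h3 ⊢ <;> simp [h3]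

theorem getG_stab {X Y : G.V} (h : G.rank Y < G.rank X) :
    TSLP2.getG (G.expAux (G.rank X) Y) = G.expG Y := by
  rw [TSLP2.expG, expAux_stab G _ (G.rank Y + 1) Y h (Nat.lt_succ_self _)]

theorem getC_stab {X Y : G.V} (h : G.rank Y < G.rank X) :
    TSLP2.getC (G.expAux (G.rank X) Y) = G.expC Y := by
  rw [TSLP2.expC, expAux_stab G _ (G.rank Y + 1) Y h (Nat.lt_succ_self _)]

inductive Cls (X : G.V) : List G.V → Prop
  | chr (a : A) : G.isCtx X = false → G.expG X = Str2.single a → Cls X []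
  | cat (k : Kd) (Y Z : G.V) : G.isCtx X = false → G.isCtx Y = false → G.isCtx Z = false →
      G.expG X = k.op (G.expG Y) (G.expG Z) → k.compat (G.expG Y) (G.expG Z) → Cls X [Y, Z]
  | sub (Y Z : G.V) : G.isCtx X = false → G.isCtx Y = true → G.isCtx Z = false →
      G.expG X = (G.expC Y).fill (G.expG Z) → (G.expC Y).ph = (G.expG Z).h →
      (G.expC Y).pw = (G.expG Z).w → Cls X [Y, Z]
  | catc (k : Kd) (Y Z : G.V) (l : List G.V) : l = [Y, Z] ∨ l = [Z, Y] →
      G.isCtx X = true → G.isCtx Y = false → G.isCtx Z = true →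
      G.expC X = catC k (G.expG Y) (G.expC Z) →
      holeOk k (G.expG Y) (G.expC Z).oh (G.expC Z).ow → Cls X l
  | wrap (k : Kd) (Y : G.V) (p q : ℕ) : G.isCtx X = true → G.isCtx Y = false →
      G.expC X = holeC k (G.expG Y) p q → holeOk k (G.expG Y) p q → Cls X [Y]
  | comp (Y Z : G.V) : G.isCtx X = true → G.isCtx Y = true → G.isCtx Z = true →
      G.expC X = (G.expC Y).comp (G.expC Z) → (G.expC Y).ph = (G.expC Z).oh →
      (G.expC Y).pw = (G.expC Z).ow → Cls X [Y, Z]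

theorem cls (hG : G.WF) (X : G.V) : Cls G X (G.rhs X).occurs := by
  have h1 := hG.2 X
  have h2 : ∀ Y ∈ (G.rhs X).occurs, G.rank Y < G.rank X := G.rank_lt X
  have h3 : ∀ Y ∈ (G.rhs X).occurs, TSLP2.getG (G.expAux (G.rank X) Y) = G.expG Y :=
    fun Y hY => getG_stab G (h2 Y hY)
  have h4 : ∀ Y ∈ (G.rhs X).occurs, TSLP2.getC (G.expAux (G.rank X) Y) = G.expC Y :=
    fun Y hY => getC_stab G (h2 Y hY)
  have h5 : G.expG X = TSLP2.getG (G.expAux (G.rank X + 1) X) := rfl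
  have h6 : G.expC X = TSLP2.getC (G.expAux (G.rank X + 1) X) := rfl
  rw [TSLP2.expAux] at h5 h6
  clear h2
  generalize G.rhs X = ρ at *
  cases ρ with
  | chr a => exact .chr a h1 h5
  | hcatGG Y Z =>
    obtain ⟨a, b, c, d⟩ := h1
    refine .cat .hl Y Z a b c ?_ d
    rw [← h3 Y (by simp [RhsT.occurs]), ← h3 Z (by simp [RhsT.occurs])]
    exact h5
  | vcatGG Y Z =>
    obtain ⟨a, b, c, d⟩ := h1
    refine .cat .vl Y Z a b c ?_ d
    rw [← h3 Y (by simp [RhsT.occurs]), ← h3 Z (by simp [RhsT.occurs])]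
    exact h5
  | subGC Y Z =>
    obtain ⟨a, b, c, d, e⟩ := h1
    refine .sub Y Z a b c ?_ d e
    rw [← h4 Y (by simp [RhsT.occurs]), ← h3 Z (by simp [RhsT.occurs])]
    exact h5
  | hcatGC Y Z =>
    obtain ⟨a, b, c, d⟩ := h1
    refine .catc .hl Y Z _ (.inl rfl) a b c ?_ d.symm
    rw [← h3 Y (by simp [RhsT.occurs]), ← h4 Z (by simp [RhsT.occurs])]
    exact h6
  | hcatCG Y Z =>
    obtain ⟨a, b, c, d⟩ := h1
    refine .catc .hr Z Y _ (.inr rfl) a c b ?_ d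
    rw [← h4 Y (by simp [RhsT.occurs]), ← h3 Z (by simp [RhsT.occurs])]
    exact h6
  | vcatGC Y Z =>
    obtain ⟨a, b, c, d⟩ := h1
    refine .catc .vl Y Z _ (.inl rfl) a b c ?_ d.symm
    rw [← h3 Y (by simp [RhsT.occurs]), ← h4 Z (by simp [RhsT.occurs])]
    exact h6
  | vcatCG Y Z =>
    obtain ⟨a, b, c, d⟩ := h1
    refine .catc .vr Z Y _ (.inr rfl) a c b ?_ d
    rw [← h4 Y (by simp [RhsT.occurs]), ← h3 Z (by simp [RhsT.occurs])]
    exact h6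
  | hcatGH Y p q =>
    obtain ⟨a, b, c⟩ := h1
    refine .wrap .hl Y p q a b ?_ c
    rw [← h3 Y (by simp [RhsT.occurs])]
    exact h6
  | hcatHG p q Y =>
    obtain ⟨a, b, c⟩ := h1
    refine .wrap .hr Y p q a b ?_ c
    rw [← h3 Y (by simp [RhsT.occurs])]
    exact h6
  | vcatGH Y p q =>
    obtain ⟨a, b, c⟩ := h1
    refine .wrap .vl Y p q a b ?_ c
    rw [← h3 Y (by simp [RhsT.occurs])]
    exact h6
  | vcatHG p q Y =>
    obtain ⟨a, b, c⟩ := h1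
    refine .wrap .vr Y p q a b ?_ c
    rw [← h3 Y (by simp [RhsT.occurs])]
    exact h6
  | subCC Y Z =>
    obtain ⟨a, b, c, d, e⟩ := h1
    refine .comp Y Z a b c ?_ d e
    rw [← h4 Y (by simp [RhsT.occurs]), ← h4 Z (by simp [RhsT.occurs])]
    exact h6

def arS (s : Str2 A) : ℕ := s.h * s.w
def arO (C : Ctx2 A) : ℕ := C.oh * C.ow
def arH (C : Ctx2 A) : ℕ := C.ph * C.pw

theorem ar_op {k : Kd} {y z : Str2 A} (h : k.compat y z) : arS (k.op y z) = arS y + arS z := by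
  cases k <;> simp only [Kd.compat] at h <;>
    simp only [arS, Kd.op, Str2.hcat, Str2.vcat, Str2.mk', h] <;> ring

theorem ar_catC {k : Kd} {y : Str2 A} {C : Ctx2 A} (h : holeOk k y C.oh C.ow) :
    arO (catC k y C) = arS y + arO C ∧ arH (catC k y C) = arH C := by
  cases k <;> simp only [holeOk] at h <;>
    simp only [arS, arO, arH, catC, Ctx2.hcatSC, Ctx2.hcatCS, Ctx2.vcatSC, Ctx2.vcatCS, Ctx2.mk', h] <;>
    refine ⟨?_, trivial⟩ <;> ring

theorem ar_holeC {k : Kd} {y : Str2 A} {p q : ℕ} (h : holeOk k y p q) :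
    arO (holeC k y p q) = arS y + p * q ∧ arH (holeC k y p q) = p * q := by
  cases k <;> simp only [holeOk] at h <;>
    simp only [arS, arO, arH, holeC, Ctx2.hcatSH, Ctx2.hcatHS, Ctx2.vcatSH, Ctx2.vcatHS, Ctx2.mk', h] <;>
    refine ⟨?_, trivial⟩ <;> ring

/-- Positivity and geometry of a nonterminal. -/
def Pos (X : G.V) : Prop :=
  (G.isCtx X = false → 1 ≤ arS (G.expG X)) ∧
  (G.isCtx X = true → Fits (G.expC X) ∧ arH (G.expC X) + 1 ≤ arO (G.expC X))

noncomputable def wt (X : G.V) : ℕ :=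
  if G.isCtx X = true then 2 * (arO (G.expC X) - arH (G.expC X)) else 2 * arS (G.expG X) - 1

noncomputable def vl (X : G.V) : Val A :=
  if G.isCtx X = true then Sum.inr (fnOf (G.expC X)) else Sum.inl (G.expG X)

variable {G}

theorem wt_t {X : G.V} (h : G.isCtx X = true) : wt G X = 2 * (arO (G.expC X) - arH (G.expC X)) := by
  simp [wt, h]
theorem wt_f {X : G.V} (h : G.isCtx X = false) : wt G X = 2 * arS (G.expG X) - 1 := by
  simp [wt, h]
theorem vl_t {X : G.V} (h : G.isCtx X = true) : vl G X = Sum.inr (fnOf (G.expC X)) := by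
  simp [vl, h]
theorem vl_f {X : G.V} (h : G.isCtx X = false) : vl G X = Sum.inl (G.expG X) := by
  simp [vl, h]

theorem pos_step {X : G.V} {l : List G.V} (hc : Cls G X l) (h : ∀ Y ∈ l, Pos G Y) :
    Pos G X ∧ (l.map (wt G)).sum ≤ wt G X ∧ ∀ Y ∈ l, wt G Y < wt G X := by
  cases hc with
  | chr a h1 h2 =>
    refine ⟨⟨fun _ => ?_, fun h3 => ?_⟩, by simp, by simp⟩
    · rw [h2]; simp [arS, Str2.single, Str2.mk']
    · rw [h1] at h3; cases h3
  | cat k Y Z h1 h2 h3 h4 h5 =>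
    have p1 := (h Y (by simp)).1 h2
    have p2 := (h Z (by simp)).1 h3
    have p3 := ar_op h5
    rw [← h4] at p3
    refine ⟨⟨fun _ => by omega, fun h3 => ?_⟩, ?_, ?_⟩
    · rw [h1] at h3; cases h3
    · simp [wt_f, h1, h2, h3]; omega
    · simp [wt_f, h1, h2, h3]; omega
  | sub Y Z h1 h2 h3 h4 h5 h6 =>
    have p1 := (h Y (by simp)).2 h2
    have p2 := (h Z (by simp)).1 h3
    have p3 : arS (G.expG X) = arO (G.expC Y) := by rw [h4]; rfl
    have p4 : arH (G.expC Y) = arS (G.expG Z) := by rw [arH, arS, h5, h6]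
    refine ⟨⟨fun _ => by omega, fun h3 => ?_⟩, ?_, ?_⟩
    · rw [h1] at h3; cases h3
    · simp [wt_f, wt_t, h1, h2, h3]; omega
    · simp [wt_f, wt_t, h1, h2, h3]; omega
  | catc k Y Z _ hl h1 h2 h3 h4 h5 =>
    have p1 := (h Y (by rcases hl with rfl | rfl <;> simp)).1 h2
    have p2 := (h Z (by rcases hl with rfl | rfl <;> simp)).2 h3
    have p3 := ar_catC h5
    have p4 := fnOf_catC p2.1 h5
    rw [← h4] at p3 p4
    refine ⟨⟨fun h3 => ?_, fun _ => ⟨p4.2, by omega⟩⟩, ?_, ?_⟩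
    · rw [h1] at h3; cases h3
    · rcases hl with rfl | rfl <;> simp [wt_f, wt_t, h1, h2, h3] <;> omega
    · rcases hl with rfl | rfl <;> simp [wt_f, wt_t, h1, h2, h3] <;> omega
  | wrap k Y p q h1 h2 h4 h5 =>
    have p1 := (h Y (by simp)).1 h2
    have p3 := ar_holeC h5
    have p4 := fnOf_holeC h5
    rw [← h4] at p3 p4
    refine ⟨⟨fun h3 => ?_, fun _ => ⟨p4.2, by omega⟩⟩, ?_, ?_⟩
    · rw [h1] at h3; cases h3
    · simp [wt_f, wt_t, h1, h2]; omega
    · simp [wt_f, wt_t, h1, h2]; omega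
  | comp Y Z h1 h2 h3 h4 h5 h6 =>
    have p1 := (h Y (by simp)).2 h2
    have p2 := (h Z (by simp)).2 h3
    have p3 : arO (G.expC X) = arO (G.expC Y) := by rw [h4]; rfl
    have p4 : arH (G.expC X) = arH (G.expC Z) := by rw [h4]; rfl
    have p5 : arH (G.expC Y) = arO (G.expC Z) := by rw [arH, arO, h5, h6]
    have p6 := fnOf_comp p1.1 p2.1 h5 h6
    rw [← h4] at p6
    refine ⟨⟨fun h3 => ?_, fun _ => ⟨p6.2, by omega⟩⟩, ?_, ?_⟩
    · rw [h1] at h3; cases h3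
    · simp [wt_t, h1, h2, h3]; omega
    · simp [wt_t, h1, h2, h3]; omega

theorem pos_all (hG : G.WF) : ∀ (n : ℕ) (X : G.V), G.rank X < n → Pos G X := by
  intro n
  induction n with
  | zero => intro X h; omega
  | succ n ih =>
    intro X h
    refine (pos_step (cls G hG X) fun Y hY => ih Y ?_).1
    have := G.rank_lt X Y hY
    omega

theorem pos (hG : G.WF) (X : G.V) : Pos G X := pos_all hG _ X (Nat.lt_succ_self _)

/-- Abstract shape of a production. -/
inductive Shape {V : Type} (val : V → Val A) (v : V) : List V → Prop
  | chr (a : A) : val v = Sum.inl (Str2.single a) → Shape val v []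
  | cat (k : Kd) (Y Z : V) (y z s : Str2 A) : val Y = Sum.inl y → val Z = Sum.inl z →
      wr k y z.h z.w z = some s → val v = Sum.inl s → Shape val v [Y, Z]
  | sub (Y Z : V) (C : Fn A) (z s : Str2 A) : val Y = Sum.inr C → val Z = Sum.inl z →
      C z = some s → val v = Sum.inl s → Shape val v [Y, Z]
  | catc (k : Kd) (Y Z : V) (l : List V) (y : Str2 A) (p q : ℕ) (D : Fn A) :
      l = [Y, Z] ∨ l = [Z, Y] → val Y = Sum.inl y → val Z = Sum.inr D →
      NZ (fmul (wr k y p q) D) → val v = Sum.inr (fmul (wr k y p q) D) → Shape val v l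
  | wrap (k : Kd) (Y : V) (y : Str2 A) (p q : ℕ) : val Y = Sum.inl y → NZ (wr k y p q) →
      val v = Sum.inr (wr k y p q) → Shape val v [Y]
  | comp (Y Z : V) (C D : Fn A) : val Y = Sum.inr C → val Z = Sum.inr D → NZ (fmul C D) →
      val v = Sum.inr (fmul C D) → Shape val v [Y, Z]

theorem nz_fnOf (C : Ctx2 A) : NZ (fnOf C) :=
  ⟨⟨C.ph, C.pw, fun _ _ => none⟩, _, fnOf_some_iff.2 ⟨rfl, rfl, rfl⟩⟩

theorem shape (hG : G.WF) (X : G.V) : Shape (vl G) X (G.rhs X).occurs := by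
  have hp := pos hG
  have hc := cls G hG X
  generalize (G.rhs X).occurs = l at hc
  cases hc with
  | chr a h1 h2 => exact .chr a (by rw [vl_f h1, h2])
  | cat k Y Z h1 h2 h3 h4 h5 =>
    exact .cat k Y Z _ _ _ (vl_f h2) (vl_f h3) (wr_some_iff.2 ⟨h5, rfl, rfl, rfl⟩) (by
      rw [vl_f h1, h4])
  | sub Y Z h1 h2 h3 h4 h5 h6 =>
    exact .sub Y Z _ _ _ (vl_t h2) (vl_f h3) (fnOf_some_iff.2 ⟨h5.symm, h6.symm, rfl⟩) (by
      rw [vl_f h1, h4])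
  | catc k Y Z _ hl h1 h2 h3 h4 h5 =>
    have p4 := (fnOf_catC ((hp Z).2 h3).1 h5).1
    refine .catc k Y Z _ _ _ _ _ hl (vl_f h2) (vl_t h3) ?_ (by rw [vl_t h1, h4, p4])
    rw [← p4]; exact nz_fnOf _
  | wrap k Y p q h1 h2 h4 h5 =>
    have p4 := (fnOf_holeC h5).1
    refine .wrap k Y _ p q (vl_f h2) ?_ (by rw [vl_t h1, h4, p4])
    rw [← p4]; exact nz_fnOf _
  | comp Y Z h1 h2 h3 h4 h5 h6 =>
    have p4 := (fnOf_comp ((hp Y).2 h2).1 ((hp Z).2 h3).1 h5 h6).1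
    refine .comp Y Z _ _ (vl_t h2) (vl_t h3) ?_ (by rw [vl_t h1, h4, p4])
    rw [← p4]; exact nz_fnOf _

theorem shape_H1 {V : Type} {val : V → Val A} {v : V} {l : List V} (h : Shape val v l)
    (S : Pg A) (n : ℕ) (hl : ∀ c ∈ l, Av S (val c) n) :
    ∃ S', Ext S S' 1 ∧ Dv S' (val v) (n + 2) := by
  have fin : Dv S (val v) (n + 1) → ∃ S', Ext S S' 1 ∧ Dv S' (val v) (n + 2) := fun h =>
    ⟨S, (Ext.refl S).weaken (by omega), h.mono subset_rfl (by omega)⟩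
  cases h with
  | chr a h1 => apply fin; rw [h1]; exact .chr a
  | cat k Y Z y z s h1 h2 h3 h4 =>
    have a1 := hl Y (by simp)
    have a2 := hl Z (by simp)
    rw [h1] at a1; rw [h2] at a2; rw [h4]
    obtain ⟨S', e, a3⟩ := a1.wrap ⟨_, _, h3⟩
    exact ⟨S', e, .fill a3.lt (a2.mono e.1 (Nat.le_succ n)).lt h3⟩
  | sub Y Z C z s h1 h2 h3 h4 =>
    have a1 := hl Y (by simp)
    have a2 := hl Z (by simp)
    apply fin
    rw [h1] at a1; rw [h2] at a2; rw [h4]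
    exact .fill a1.lt a2.lt h3
  | catc k Y Z _ y p q D hh h1 h2 h3 h4 =>
    have a1 := hl Y (by rcases hh with rfl | rfl <;> simp)
    have a2 := hl Z (by rcases hh with rfl | rfl <;> simp)
    rw [h1] at a1; rw [h2] at a2; rw [h4]
    obtain ⟨S', e, a3⟩ := a1.wrap h3.left
    exact ⟨S', e, .comp a3.lt (a2.mono e.1 (Nat.le_succ n)).lt h3⟩
  | wrap k Y y p q h1 h2 h3 =>
    have a1 := hl Y (by simp)
    apply fin
    rw [h1] at a1; rw [h3]
    exact .wrap a1.lt h2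
  | comp Y Z C D h1 h2 h3 h4 =>
    have a1 := hl Y (by simp)
    have a2 := hl Z (by simp)
    apply fin
    rw [h1] at a1; rw [h2] at a2; rw [h4]
    exact .comp a1.lt a2.lt h3

theorem pair_split {V : Type} {Y Z c : V} {l1 l2 : List V} (h : [Y, Z] = l1 ++ c :: l2) :
    (c = Y ∧ Z ∈ l1 ++ l2) ∨ (c = Z ∧ Y ∈ l1 ++ l2) := by
  rcases l1 with _ | ⟨x, _ | ⟨x', l1⟩⟩
  · simp only [List.nil_append, List.cons.injEq] at h
    obtain ⟨rfl, rfl⟩ := h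
    exact .inl ⟨rfl, by simp⟩
  · simp only [List.cons_append, List.nil_append, List.cons.injEq] at h
    obtain ⟨rfl, rfl, rfl⟩ := h
    exact .inr ⟨rfl, by simp⟩
  · simp at h

theorem shape_H2 {V : Type} {val : V → Val A} {v : V} {l : List V} (h : Shape val v l)
    (S : Pg A) (n : ℕ) (c : V) (l1 l2 : List V) (hs : l = l1 ++ c :: l2)
    (hl : ∀ c ∈ l1 ++ l2, Av S (val c) n) :
    ∃ S', Ext S S' 1 ∧ Rep S' (n + 1) (val c) (val v) := by
  have fin : Rep S n (val c) (val v) → ∃ S', Ext S S' 1 ∧ Rep S' (n + 1) (val c) (val v) := fun h =>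
    ⟨S, (Ext.refl S).weaken (by omega), h.mono subset_rfl (by omega)⟩
  cases h with
  | chr a h1 => simp at hs
  | cat k Y Z y z s h1 h2 h3 h4 =>
    rcases pair_split hs with ⟨rfl, hm⟩ | ⟨rfl, hm⟩
    · have a := hl _ hm
      rw [h2] at a; rw [h1, h4]
      have h5 := wr_flip h3
      obtain ⟨S', e, a3⟩ := a.wrap ⟨_, _, h5⟩
      exact ⟨S', e, .gg (.inr a3) h5⟩
    · have a := hl _ hm
      rw [h1] at a; rw [h2, h4]
      obtain ⟨S', e, a3⟩ := a.wrap ⟨_, _, h3⟩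
      exact ⟨S', e, .gg (.inr a3) h3⟩
  | sub Y Z C z s h1 h2 h3 h4 =>
    apply fin
    rcases pair_split hs with ⟨rfl, hm⟩ | ⟨rfl, hm⟩
    · have a := hl _ hm
      rw [h2] at a; rw [h1, h4]
      exact .cg QO.one a h3 rfl
    · have a := hl _ hm
      rw [h1] at a; rw [h2, h4]
      exact .gg (.inr a) h3
  | catc k Y Z _ y p q D hh h1 h2 h3 h4 =>
    have hh' : (c = Y ∧ Z ∈ l1 ++ l2) ∨ (c = Z ∧ Y ∈ l1 ++ l2) := by
      rcases hh with rfl | rfl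
      · exact pair_split hs
      · exact (pair_split hs).symm
    rcases hh' with ⟨rfl, hm⟩ | ⟨rfl, hm⟩
    · have a := hl _ hm
      apply fin
      rw [h2] at a; rw [h1, h4]
      have := Rep.gc (S := S) (r := n) (C := fone) (D := fone) (E := D) (k := k) (p := p) (q := q)
        (z := y) (y := y) QO.one QO.one (.inr a) rfl (by rw [fone_mul]; exact h3)
      rwa [fone_mul] at this
    · have a := hl _ hm
      rw [h1] at a; rw [h2, h4]
      obtain ⟨S', e, a3⟩ := a.wrap h3.left
      have := Rep.cc (S := S') (r := n + 1) (C := wr k y p q) (f := D) (D := fone) (.inr a3)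
        QO.one (by rw [fmul_one]; exact h3)
      rw [fmul_one] at this
      exact ⟨S', e, this⟩
  | wrap k Y y p q h1 h2 h3 =>
    apply fin
    have : c = Y := by
      rcases l1 with _ | ⟨x, l1⟩
      · simp only [List.nil_append, List.cons.injEq] at hs; exact hs.1.symm
      · simp at hs
    subst this
    rw [h1, h3]
    have := Rep.gc (S := S) (r := n) (C := fone) (D := fone) (E := fone) (k := k) (p := p) (q := q)
        (z := y) (y := y) QO.one QO.one QO.one rfl (by rw [fone_mul, fmul_one]; exact h2)
    rwa [fone_mul, fmul_one] at this
  | comp Y Z C D h1 h2 h3 h4 =>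
    apply fin
    rcases pair_split hs with ⟨rfl, hm⟩ | ⟨rfl, hm⟩
    · have a := hl _ hm
      rw [h2] at a; rw [h1, h4]
      have := Rep.cc (S := S) (r := n) (C := fone) (f := C) (D := D) QO.one (.inr a)
        (by rw [fone_mul]; exact h3)
      rwa [fone_mul] at this
    · have a := hl _ hm
      rw [h1] at a; rw [h2, h4]
      have := Rep.cc (S := S) (r := n) (C := C) (f := D) (D := fone) (.inr a) QO.one
        (by rw [fmul_one]; exact h3)
      rwa [fmul_one] at this

theorem sum_count {V : Type} [Fintype V] (l : List V) (f : V → ℕ) :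
    ∑ c, l.count c * f c = (l.map f).sum := by
  induction l with
  | nil => simp
  | cons x l ih =>
    simp only [List.map_cons, List.sum_cons, List.count_cons, add_mul, Finset.sum_add_distrib, ih]
    simp [add_comm]

theorem balance (hG : G.WF) (h2 : 2 ≤ (G.exp).h * (G.exp).w) :
    ∃ G' : TSLP2 A, G'.WF ∧ G'.exp = G.exp ∧ G'.size ≤ 454 * G.size ∧
      G'.depth ≤ 454 * Nat.log 2 ((G.exp).h * (G.exp).w) := by
  letI := G.fintypeV
  have hst : ∀ X, _ := fun X => pos_step (cls G hG X) fun Y _ => pos hG Y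
  obtain ⟨e, he, hew⟩ := paths (fun u v => (G.rhs u).occurs.count v) G.rank
    (fun u v h => G.rank_lt u v (List.count_pos_iff.1 (Nat.pos_of_ne_zero h))) (wt G)
    (fun u => by rw [sum_count]; exact (hst u).2.1) G.start
  let N : Net A G.V :=
    { ch := fun X => (G.rhs X).occurs
      val := vl G
      w := wt G
      e := e
      rank := G.rank
      r := G.start
      hwpos := fun X => by
        have h := pos hG X
        cases hX : G.isCtx X with
        | true => have := h.2 hX; rw [wt_t hX]; omega
        | false => have := h.1 hX; rw [wt_f hX]; omega
      hw := fun X => (hst X).2.1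
      hlt := fun X => (hst X).2.2
      hrank := G.rank_lt
      he := he
      hew := hew
      H1 := fun S n X h => shape_H1 (shape hG X) S n h
      H2 := fun S n X c l1 l2 h h' => shape_H2 (shape hG X) S n c l1 l2 h h' }
  obtain ⟨S, R, h3, h4, h5, h6⟩ := N.main
  have hval : N.val N.r = Sum.inl G.exp := vl_f hG.1
  rw [hval] at h5
  obtain ⟨G', g1, g2, g3, g4⟩ := realize h3 h5
  have hsize : Fintype.card G.V ≤ G.size := by
    unfold TSLP2.size
    rw [Fintype.card_eq_sum_ones]
    refine Finset.sum_le_sum fun X _ => ?_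
    split <;> omega
  refine ⟨G', g1, g2, by omega, ?_⟩
  set K := (G.exp).h * (G.exp).w with hK
  have hw : N.w N.r = 2 * K - 1 := wt_f hG.1
  have hl1 : 1 ≤ Nat.log 2 K := Nat.log_pos (by norm_num) h2
  have hl2 : Nat.log 2 (N.w N.r) ≤ Nat.log 2 K + 1 := by
    rw [hw, ← Nat.log_mul_base (by norm_num) (by omega)]
    exact Nat.log_mono_right (by omega)
  omega

end Bal


/-- balancing 2D SLPs with holes. There is an absolute
constant `c > 0` such that: given a 2D SLP with holes `G` deriving a 2D string
`T` of size `N × M` with `N * M ≥ 2`, there is a 2D SLP with holes `G'`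
deriving the same string `T`, of size at most `c * |G|` and depth at most
`c * log₂ (N * M)`. -/
theorem balancing_2d_slps_with_holes :
    ∃ c : ℕ, 0 < c ∧
      ∀ (A : Type) (_ : Fintype A) (G : TSLP2 A), G.WF →
        2 ≤ (G.exp).h * (G.exp).w →
        ∃ G' : TSLP2 A, G'.WF ∧ G'.exp = G.exp ∧
          G'.size ≤ c * G.size ∧
          (G'.depth : ℝ) ≤ (c : ℝ) * Real.logb 2 (((G.exp).h * (G.exp).w : ℕ) : ℝ) := by
  refine ⟨454, by norm_num, fun A _ G hG h2 => ?_⟩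
  obtain ⟨G', h3, h4, h5, h6⟩ := Bal.balance hG h2
  refine ⟨G', h3, h4, h5, ?_⟩
  have h7 : ((Nat.log 2 ((G.exp).h * (G.exp).w) : ℕ) : ℝ) ≤
      Real.logb 2 (((G.exp).h * (G.exp).w : ℕ) : ℝ) := by
    exact_mod_cast Real.natLog_le_logb ((G.exp).h * (G.exp).w) 2
  calc (G'.depth : ℝ) ≤ ((454 * Nat.log 2 ((G.exp).h * (G.exp).w) : ℕ) : ℝ) := by exact_mod_cast h6
    _ = (454 : ℝ) * ((Nat.log 2 ((G.exp).h * (G.exp).w) : ℕ) : ℝ) := by push_cast; ring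
    _ ≤ _ := by
      push_cast at h7 ⊢
      gcongr
end
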